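/- arXiv:1802.00085 — 2 statements merged into one kernel-verified Lean document; each statement's English description precedes it below -/
import Mathlib

section
/- Let q ≥ 3 be an integer and let a be an integer coprime to q. Let c > 0 and X ≥ 14735 be real numbers such that c·φ(q) < 1 and such that |π(x;q,a) − Li(x)/φ(q)| < c·x/(log x)² holds for all real x ≥ X. Then for all real x > X, x/(φ(q)·log x) < π(x;q,a) < (x/(φ(q)·log x))·(1 + 5/(2·log x)). -/
/-- `π(x;q,a) = #{p ≤ x : p prime, p ≡ a (mod q)}`. -/
noncomputable def primesPi (x : ℝ) (q : ℕ) (a : ℤ) : ℕ :=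
  ((Finset.Icc 1 ⌊x⌋₊).filter (fun p : ℕ => p.Prime ∧ (p : ZMod q) = (a : ZMod q))).card

/-- `Li(x) = ∫₂ˣ dt / log t`, the logarithmic integral. -/
noncomputable def Li (x : ℝ) : ℝ := ∫ t in (2 : ℝ)..x, 1 / Real.log t

/-!
The error term `c x / log² x` is smaller than `x / (φ(q) log² x)`, so it is enough to know that
`x / log x + x / log² x ≤ Li x ≤ x / log x + (3 / 2) x / log² x`.
The partial sums `x / log x + x / log² x + ⋯` of the asymptotic expansion of `Li` can be compared
with `Li` by differentiating. Below, the truncation after `x / log² x` serves directly. Above, one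
adds `22 x / log⁴ x` to the truncation after `2 x / log³ x`: the constant `22` is large enough for
the derivative to exceed `1 / log x` from `x = 2 ^ 8` on, and small enough for
`2 / log x + 22 / log² x ≤ 1 / 2` to hold from `x = 2 ^ 13` on. Both comparisons start at `2 ^ 8`,
where `Li` is estimated on the dyadic intervals `[2 ^ k, 2 ^ (k + 1)]`: from above by the
trapezoidal rule, since `1 / log` is convex, and from below by the value at the right endpoint.
-/

open Real Set

theorem le_of_hasDerivAt_le {f g f' g' : ℝ → ℝ} {a b : ℝ} (hab : a ≤ b)
    (hf : ∀ t, a ≤ t → HasDerivAt f (f' t) t) (hg : ∀ t, a ≤ t → HasDerivAt g (g' t) t)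
    (hle : ∀ t, a ≤ t → f' t ≤ g' t) (ha : f a ≤ g a) : f b ≤ g b :=
  image_le_of_deriv_right_le_deriv_boundary
    (fun t ht => (hf t ht.1).continuousAt.continuousWithinAt)
    (fun t ht => (hf t ht.1).hasDerivWithinAt) ha
    (fun t ht => (hg t ht.1).continuousAt.continuousWithinAt)
    (fun t ht => (hg t ht.1).hasDerivWithinAt) (fun t ht => hle t ht.1) (right_mem_Icc.2 hab)

section Convex

theorem convexOn_inv_of_concaveOn {E : Type*} [AddCommGroup E] [Module ℝ E] {s : Set E}
    {f : E → ℝ} (hf : ConcaveOn ℝ s f) (hpos : ∀ x ∈ s, 0 < f x) :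
    ConvexOn ℝ s fun x => (f x)⁻¹ := by
  have hinv : ConvexOn ℝ (Ioi (0 : ℝ)) fun y => y⁻¹ := by
    simpa only [zpow_neg_one] using convexOn_zpow (𝕜 := ℝ) (-1)
  refine ⟨hf.1, fun x hx y hy a b ha hb hab => ?_⟩
  have hmem : a • f x + b • f y ∈ Ioi (0 : ℝ) := hinv.1 (hpos x hx) (hpos y hy) ha hb hab
  calc (f (a • x + b • y))⁻¹
      ≤ (a • f x + b • f y)⁻¹ := inv_anti₀ hmem (hf.2 hx hy ha hb hab)
    _ ≤ a • (f x)⁻¹ + b • (f y)⁻¹ := hinv.2 (hpos x hx) (hpos y hy) ha hb hab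

theorem convexOn_one_div_log : ConvexOn ℝ (Ioi 1) fun t : ℝ => 1 / log t := by
  simp only [one_div]
  exact convexOn_inv_of_concaveOn
    (strictConcaveOn_log_Ioi.concaveOn.subset (Ioi_subset_Ioi zero_le_one) (convex_Ioi 1))
    fun t ht => log_pos ht

variable {f : ℝ → ℝ} {a b : ℝ}

theorem add_reflect_le_of_convexOn (hf : ConvexOn ℝ (Icc a b) f) {t : ℝ} (ht : t ∈ Icc a b) :
    f t + f (a + b - t) ≤ f a + f b := by
  have hab : a ≤ b := ht.1.trans ht.2
  have ha := left_mem_Icc.2 hab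
  have hb := right_mem_Icc.2 hab
  rw [← segment_eq_Icc hab] at ht
  obtain ⟨u, v, hu, hv, huv, rfl⟩ := ht
  have hreflect : a + b - (u • a + v • b) = v • a + u • b := by
    simp only [smul_eq_mul]
    linear_combination -(a + b) * huv
  calc f (u • a + v • b) + f (a + b - (u • a + v • b))
      ≤ (u • f a + v • f b) + (v • f a + u • f b) := by
        rw [hreflect]
        exact add_le_add (hf.2 ha hb hu hv huv) (hf.2 ha hb hv hu (by rwa [add_comm]))
    _ = f a + f b := by
        simp only [smul_eq_mul]
        linear_combination (f a + f b) * huv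

theorem integral_le_trapezoid_of_convexOn (hab : a ≤ b) (hf : ConvexOn ℝ (Icc a b) f)
    (hint : IntervalIntegrable f MeasureTheory.volume a b) :
    ∫ t in a..b, f t ≤ (b - a) * ((f a + f b) / 2) := by
  have hreflect : ∫ t in a..b, f (a + b - t) = ∫ t in a..b, f t := by simp
  have hint' : IntervalIntegrable (fun t => f (a + b - t)) MeasureTheory.volume a b := by
    simpa using (hint.comp_sub_left (a + b)).symm
  have hle : ∫ t in a..b, (f t + f (a + b - t)) ≤ ∫ _ in a..b, (f a + f b) :=
    intervalIntegral.integral_mono_on hab (hint.add hint') intervalIntegrable_const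
      fun t ht => add_reflect_le_of_convexOn hf ht
  rw [intervalIntegral.integral_add hint hint', hreflect, intervalIntegral.integral_const,
    smul_eq_mul] at hle
  linarith

end Convex

section LogIntegral

variable {a b x : ℝ}

theorem continuousAt_one_div_log (hx : 1 < x) : ContinuousAt (fun t => 1 / log t) x :=
  continuousAt_const.div (continuousAt_log (by linarith)) (log_pos hx).ne'

theorem intervalIntegrable_one_div_log (ha : 1 < a) (hb : 1 < b) :
    IntervalIntegrable (fun t => 1 / log t) MeasureTheory.volume a b :=
  ContinuousOn.intervalIntegrable fun _ ht =>
    (continuousAt_one_div_log ((lt_min ha hb).trans_le ht.1)).continuousWithinAt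

theorem Li_sub_Li (ha : 1 < a) (hb : 1 < b) : Li b - Li a = ∫ t in a..b, 1 / log t :=
  intervalIntegral.integral_interval_sub_left
    (intervalIntegrable_one_div_log one_lt_two hb) (intervalIntegrable_one_div_log one_lt_two ha)

theorem hasDerivAt_Li (hx : 1 < x) : HasDerivAt Li (1 / log x) x :=
  intervalIntegral.integral_hasDerivAt_right (intervalIntegrable_one_div_log one_lt_two hx)
    (measurable_const.div measurable_log).stronglyMeasurable.stronglyMeasurableAtFilter
    (continuousAt_one_div_log hx)

theorem hasDerivAt_div_log_pow (n : ℕ) (hlog : log x ≠ 0) :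
    HasDerivAt (fun t => t / log t ^ n) (1 / log x ^ n - n / log x ^ (n + 1)) x := by
  have hx0 : x ≠ 0 := (log_ne_zero.1 hlog).1
  refine ((hasDerivAt_id x).div ((hasDerivAt_log hx0).pow n) (pow_ne_zero n hlog)).congr_deriv ?_
  rcases n with _ | n
  · simp
  · simp only [id, Pi.pow_apply, Nat.add_sub_cancel]
    field_simp
    ring

theorem Li_sub_Li_le_trapezoid (ha : 1 < a) (hab : a ≤ b) :
    Li b - Li a ≤ (b - a) * ((1 / log a + 1 / log b) / 2) := by
  rw [Li_sub_Li ha (ha.trans_le hab)]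
  exact integral_le_trapezoid_of_convexOn hab
    (convexOn_one_div_log.subset (fun t ht => ha.trans_le ht.1) (convex_Icc a b))
    (intervalIntegrable_one_div_log ha (ha.trans_le hab))

theorem sub_div_log_le_Li_sub_Li (ha : 1 < a) (hab : a ≤ b) :
    (b - a) / log b ≤ Li b - Li a := by
  have hle : ∫ _ in a..b, 1 / log b ≤ ∫ t in a..b, 1 / log t :=
    intervalIntegral.integral_mono_on hab intervalIntegrable_const
      (intervalIntegrable_one_div_log ha (ha.trans_le hab)) fun t ht =>
        one_div_le_one_div_of_le (log_pos (ha.trans_le ht.1))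
          (log_le_log (by linarith [ht.1]) ht.2)
  rwa [intervalIntegral.integral_const, smul_eq_mul, mul_one_div,
    ← Li_sub_Li ha (ha.trans_le hab)] at hle

theorem Li_two : Li 2 = 0 :=
  intervalIntegral.integral_same

theorem Li_two_pow_le (n : ℕ) :
    Li (2 ^ (n + 1)) ≤
      ∑ k ∈ Finset.range n, 2 ^ k * (1 / (k + 1 : ℝ) + 1 / (k + 2)) * (log 2)⁻¹ := by
  induction n with
  | zero => simp [Li_two]
  | succ n ih =>
    have hstep := Li_sub_Li_le_trapezoid (a := 2 ^ (n + 1)) (b := 2 ^ (n + 1 + 1))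
      (one_lt_pow₀ one_lt_two n.succ_ne_zero) (by gcongr <;> norm_num)
    have hvalue : ((2 : ℝ) ^ (n + 1 + 1) - 2 ^ (n + 1)) *
        ((1 / log (2 ^ (n + 1)) + 1 / log (2 ^ (n + 1 + 1))) / 2) =
          2 ^ n * (1 / (n + 1 : ℝ) + 1 / (n + 2)) * (log 2)⁻¹ := by
      rw [log_pow, log_pow]
      push_cast
      field_simp
      ring
    rw [Finset.sum_range_succ]
    linarith

theorem le_Li_two_pow (n : ℕ) :
    ∑ k ∈ Finset.range n, 2 ^ (k + 1) / (k + 2 : ℝ) * (log 2)⁻¹ ≤ Li (2 ^ (n + 1)) := by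
  induction n with
  | zero => simp [Li_two]
  | succ n ih =>
    have hstep := sub_div_log_le_Li_sub_Li (a := 2 ^ (n + 1)) (b := 2 ^ (n + 1 + 1))
      (one_lt_pow₀ one_lt_two n.succ_ne_zero) (by gcongr <;> norm_num)
    have hvalue : ((2 : ℝ) ^ (n + 1 + 1) - 2 ^ (n + 1)) / log (2 ^ (n + 1 + 1)) =
        2 ^ (n + 1) / (n + 2 : ℝ) * (log 2)⁻¹ := by
      rw [log_pow]
      push_cast
      field_simp
      ring
    rw [Finset.sum_range_succ]
    linarith

theorem Li_two_pow_eight_mem_Icc : Li (2 ^ 8) ∈ Icc (38 * (log 2)⁻¹) (43 * (log 2)⁻¹) := by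
  have hlower := le_Li_two_pow 7
  have hupper := Li_two_pow_le 7
  have hpos : 0 < (log 2)⁻¹ := inv_pos.2 (log_pos one_lt_two)
  rw [← Finset.sum_mul] at hlower hupper
  refine ⟨le_trans ?_ hlower, hupper.trans ?_⟩ <;>
    · gcongr
      norm_num [Finset.sum_range_succ]

theorem mul_log_two_le_log {n : ℕ} (hx : 2 ^ n ≤ x) : n * log 2 ≤ log x := by
  rw [← log_pow]
  exact log_le_log (by positivity) hx

theorem inv_log_two_mem_Icc : (log 2)⁻¹ ∈ Icc (7 / 5 : ℝ) (3 / 2) := by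
  have hlower := log_two_gt_d9
  have hupper := log_two_lt_d9
  constructor
  · rw [le_inv_comm₀ (by norm_num) (by linarith)]
    linarith
  · rw [inv_le_comm₀ (by linarith) (by norm_num)]
    linarith

theorem div_log_add_le_Li (hx : 2 ^ 8 ≤ x) : x / log x + x / log x ^ 2 ≤ Li x := by
  refine le_of_hasDerivAt_le (f := fun t => t / log t + t / log t ^ 2)
    (f' := fun t => 1 / log t - 2 / log t ^ 3) hx (fun t ht => ?_)
    (fun t ht => hasDerivAt_Li (by linarith)) (fun t ht => ?_) ?_
  · have hlog : log t ≠ 0 := (log_pos (by linarith)).ne'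
    have h := (hasDerivAt_div_log_pow 1 hlog).add (hasDerivAt_div_log_pow 2 hlog)
    simp only [pow_one] at h
    exact h.congr_deriv (by push_cast; ring)
  · have : 0 < log t := log_pos (by linarith)
    have : 0 ≤ 2 / log t ^ 3 := by positivity
    linarith
  · obtain ⟨hpos, hle⟩ := inv_log_two_mem_Icc
    calc (2 : ℝ) ^ 8 / log (2 ^ 8) + 2 ^ 8 / log (2 ^ 8) ^ 2
        = 32 * (log 2)⁻¹ + 4 * (log 2)⁻¹ ^ 2 := by rw [log_pow]; field
      _ ≤ 38 * (log 2)⁻¹ := by nlinarith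
      _ ≤ Li (2 ^ 8) := Li_two_pow_eight_mem_Icc.1

theorem Li_le_expansion_add (hx : 2 ^ 8 ≤ x) :
    Li x ≤ x / log x + x / log x ^ 2 + 2 * (x / log x ^ 3) + 22 * (x / log x ^ 4) := by
  refine le_of_hasDerivAt_le
    (g := fun t => t / log t + t / log t ^ 2 + 2 * (t / log t ^ 3) + 22 * (t / log t ^ 4))
    (g' := fun t => 1 / log t + 8 * (2 * log t - 11) / log t ^ 5) hx
    (fun t ht => hasDerivAt_Li (by linarith)) (fun t ht => ?_) (fun t ht => ?_) ?_
  · have hlog : log t ≠ 0 := (log_pos (by linarith)).ne'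
    have h := (((hasDerivAt_div_log_pow 1 hlog).add (hasDerivAt_div_log_pow 2 hlog)).add
      ((hasDerivAt_div_log_pow 3 hlog).const_mul 2)).add
        ((hasDerivAt_div_log_pow 4 hlog).const_mul 22)
    simp only [pow_one] at h
    refine h.congr_deriv ?_
    push_cast
    field_simp
    ring
  · have hlog : 11 / 2 ≤ log t := by
      have h := mul_log_two_le_log ht
      push_cast at h
      linarith [log_two_gt_d9]
    have : 0 ≤ 8 * (2 * log t - 11) / log t ^ 5 :=
      div_nonneg (by linarith) (pow_nonneg (by linarith) 5)
    linarith
  · have hlower := inv_log_two_mem_Icc.1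
    have hpoly : 11 ≤ 4 * (log 2)⁻¹ + (log 2)⁻¹ ^ 2 + 11 / 8 * (log 2)⁻¹ ^ 3 := by
      calc (11 : ℝ) ≤ 4 * (7 / 5) + (7 / 5) ^ 2 + 11 / 8 * (7 / 5) ^ 3 := by norm_num
        _ ≤ _ := by gcongr
    calc Li (2 ^ 8)
        ≤ 43 * (log 2)⁻¹ := Li_two_pow_eight_mem_Icc.2
      _ ≤ (log 2)⁻¹ * (32 + (4 * (log 2)⁻¹ + (log 2)⁻¹ ^ 2 + 11 / 8 * (log 2)⁻¹ ^ 3)) := by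
          nlinarith
      _ = 2 ^ 8 / log (2 ^ 8) + 2 ^ 8 / log (2 ^ 8) ^ 2 + 2 * (2 ^ 8 / log (2 ^ 8) ^ 3) +
          22 * (2 ^ 8 / log (2 ^ 8) ^ 4) := by rw [log_pow]; field

theorem Li_le_div_log_add (hx : 2 ^ 13 ≤ x) :
    Li x ≤ x / log x + 3 / 2 * (x / log x ^ 2) := by
  have hlog : 9 ≤ log x := by
    have h := mul_log_two_le_log hx
    push_cast at h
    linarith [log_two_gt_d9]
  have hquad : 2 * log x + 22 ≤ 1 / 2 * log x ^ 2 := by nlinarith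
  have : 0 < log x := by linarith
  calc Li x
      ≤ x / log x + x / log x ^ 2 + 2 * (x / log x ^ 3) + 22 * (x / log x ^ 4) :=
        Li_le_expansion_add (by linarith)
    _ = x / log x + x / log x ^ 2 + (2 * log x + 22) * (x / log x ^ 4) := by field
    _ ≤ x / log x + x / log x ^ 2 + 1 / 2 * log x ^ 2 * (x / log x ^ 4) := by
        gcongr
    _ = x / log x + 3 / 2 * (x / log x ^ 2) := by field

end LogIntegral

theorem pi_sandwich_general {x N m c : ℝ} (hx : 2 ^ 13 ≤ x) (hm : 0 < m) (hcm : c * m < 1)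
    (hN : |N - Li x / m| < c * x / log x ^ 2) :
    x / (m * log x) < N ∧ N < x / (m * log x) * (1 + 5 / (2 * log x)) := by
  have hlog : 0 < log x := log_pos (by linarith)
  have herr : c * x / log x ^ 2 < x / log x ^ 2 / m := by
    rw [lt_div_iff₀ hm, mul_div_assoc, mul_right_comm]
    exact mul_lt_of_lt_one_left (by positivity) hcm
  obtain ⟨hlower, hupper⟩ := abs_lt.1 hN
  constructor
  · calc x / (m * log x)
        = (x / log x + x / log x ^ 2) / m - x / log x ^ 2 / m := by field
      _ ≤ Li x / m - x / log x ^ 2 / m := by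
          gcongr
          exact div_log_add_le_Li (by linarith)
      _ < N := by linarith
  · calc N < Li x / m + x / log x ^ 2 / m := by linarith
      _ ≤ (x / log x + 3 / 2 * (x / log x ^ 2)) / m + x / log x ^ 2 / m := by
          gcongr
          exact Li_le_div_log_add hx
      _ = x / (m * log x) * (1 + 5 / (2 * log x)) := by field

theorem pi_sandwich (q : ℕ) (hq : 3 ≤ q) (a : ℤ) (ha : Int.gcd a q = 1)
    (c X : ℝ) (hc : 0 < c) (hX : 14735 ≤ X)
    (hcphi : c * (Nat.totient q : ℝ) < 1)
    (hbound : ∀ x : ℝ, X ≤ x →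
      |(primesPi x q a : ℝ) - Li x / (Nat.totient q : ℝ)| < c * x / Real.log x ^ 2)
    (x : ℝ) (hx : X < x) :
    x / ((Nat.totient q : ℝ) * Real.log x) < (primesPi x q a : ℝ) ∧
      (primesPi x q a : ℝ) <
        x / ((Nat.totient q : ℝ) * Real.log x) * (1 + 5 / (2 * Real.log x)) :=
  pi_sandwich_general (by linarith) (by exact_mod_cast Nat.totient_pos.2 (by lia)) hcphi
    (hbound x hx.le)
end

section
/- Let q ≥ 3 be an integer and let χ be a nontrivial quadratic Dirichlet character modulo q. If β > 0 is a real number for which L(β,χ) = 0, then β ≤ 1 − 40/(√q·(log q)²). -/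
/-!
Let `χ` be a primitive quadratic character modulo `q`. The theta series of `χ` and Riemann's theta
series `ψ` are convolved multiplicatively into a kernel `K (w)`, `w ∈ ℝ`, whose Mellin transform
is the completed `ζ(s) L(s, χ)`. As a double series `K (w) = ∑ χ(n) E(2π e^w m n / √q)`, where
`E(x)` is an average of `exp (-x cosh u)`. Since `1 * χ = 1_□ * (μ² * χ)` and `μ² * χ ≥ 0`, the
kernel is a nonnegative combination of theta sums over squares, hence positive, and inequalities
for theta series carry over to it. On the other hand, `K (-w) = W e^w K (w) + R e^w - W R` with
`W = ±1`, and at a zero `β` of `L(s, χ)` the Mellin transform gives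
`∫_0^∞ K (w) (e^(β w) + W e^((1 - β) w)) dw = R / (1 - β) + W R / β`.

If `W = 1`, these two facts give `K (-log 2) - 2 K (log 2) ≤ 2 β (1 - β) ∫_0^∞ K (w) e^w dw`, and
the comparison `ψ (x / 2) ≥ 2 ψ (2 x) + (2 B / (π x)) ∑ exp (-π x j²) / j²` bounds the left side
below by `2 B ∫_0^∞ K (w) e^w dw`, so that `B ≤ β (1 - β)`. If `W = -1` they give
`K (0) ≤ β (1 - β) ∫_0^∞ K (w) e^w dw`, which suffices for `q ≥ 38`. For `q < 38`, the sign `W` is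
found to be `1` from the sign of `L(-1, χ)` for even `χ` and of `L(-2, χ)` for odd `χ`: by the
functional equation it is the sign of `-W`, while the value is a Bernoulli sum, which is computed
for every quadratic character modulo `q`.
-/

/-! ### The theta series and its comparison inequality -/

section ThetaComparison

open Real

theorem exp_div_le {y : ℝ} (hy : 0 ≤ y) {m n : ℕ} (hn : n ≠ 0) (h : (2.7183 : ℝ) ^ m ≤ y ^ n) :
    exp (m / n) ≤ y := by
  refine le_of_pow_le_pow_left₀ hn hy (le_trans ?_ h)
  rw [← exp_nat_mul, mul_div_cancel₀ _ (Nat.cast_ne_zero.2 hn), ← mul_one (m : ℝ), exp_nat_mul]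
  gcongr
  linarith [exp_one_lt_d9]

theorem exp_neg_div_le {y : ℝ} (hy : 0 ≤ y) {m n : ℕ} (hn : n ≠ 0)
    (h : 1 ≤ y ^ n * (2.718 : ℝ) ^ m) : exp (-(m / n)) ≤ y := by
  refine le_of_pow_le_pow_left₀ hn hy ?_
  rw [← exp_nat_mul, mul_neg, mul_div_cancel₀ _ (Nat.cast_ne_zero.2 hn), exp_neg,
    inv_le_iff_one_le_mul₀ (exp_pos _), ← mul_one (m : ℝ), exp_nat_mul]
  refine h.trans ?_
  gcongr
  linarith [exp_one_gt_d9]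

theorem one_le_pnat_cast (m : ℕ+) : (1 : ℝ) ≤ m := by exact_mod_cast m.pos

theorem pnat_cast_le_sq (m : ℕ+) : (m : ℝ) ≤ (m : ℝ) ^ 2 :=
  le_self_pow₀ (one_le_pnat_cast m) two_ne_zero

theorem summable_exp_neg_mul_pnat {a : ℝ} (ha : 0 < a) :
    Summable fun m : ℕ+ => exp (-a * m) := by
  have h := (summable_exp_nat_mul_iff.2 (neg_lt_zero.2 ha)).comp_injective PNat.coe_injective
  exact h.congr fun m => by rw [Function.comp_apply, mul_comm]

theorem hasSum_pnat_inv_sq : HasSum (fun j : ℕ+ => 1 / (j : ℝ) ^ 2) (π ^ 2 / 6) :=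
  PNat.coe_injective.hasSum_iff (fun n hn => by
    have : n = 0 := by
      by_contra h
      exact hn ⟨⟨n, Nat.pos_of_ne_zero h⟩, rfl⟩
    simp [this]) |>.2 hasSum_zeta_two

/-- Riemann's theta series `ψ(P) = ∑_{m ≥ 1} exp (-π m² P)`, which is half of the Jacobi theta
series without its constant term. -/
noncomputable def halfTheta (P : ℝ) : ℝ := ∑' m : ℕ+, exp (-π * P * (m : ℝ) ^ 2)

/-- The series `∑_{j ≥ 1} exp (-π x j²) / j²`, which equals `π ∫_x^∞ halfTheta` for `x > 0`. -/
noncomputable def invSqTheta (x : ℝ) : ℝ := ∑' j : ℕ+, exp (-π * x * (j : ℝ) ^ 2) / (j : ℝ) ^ 2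

variable {P x B : ℝ}

theorem summable_halfTheta (hP : 0 < P) : Summable fun m : ℕ+ => exp (-π * P * (m : ℝ) ^ 2) := by
  refine (summable_exp_neg_mul_pnat (mul_pos pi_pos hP)).of_nonneg_of_le
    (fun _ => (exp_pos _).le) fun m => exp_le_exp.2 ?_
  nlinarith [pnat_cast_le_sq m, mul_pos pi_pos hP]

theorem halfTheta_nonneg (P : ℝ) : 0 ≤ halfTheta P := tsum_nonneg fun _ => (exp_pos _).le

theorem tsum_int_eq_one_add_two_mul_halfTheta (hP : 0 < P) :
    ∑' n : ℤ, exp (-π * P * (n : ℝ) ^ 2) = 1 + 2 * halfTheta P := by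
  have hs : Summable fun n : ℤ => exp (-π * P * (n : ℝ) ^ 2) :=
    (summable_pow_mul_jacobiTheta₂_term_bound 0 hP 0).congr fun n => by
      rw [pow_zero, one_mul]
      ring_nf
  rw [tsum_int_eq_zero_add_two_mul_tsum_pnat (fun n => by simp) hs]
  simp [halfTheta]

theorem halfTheta_functional_equation (hP : 0 < P) :
    1 + 2 * halfTheta P = (√P)⁻¹ * (1 + 2 * halfTheta (1 / P)) := by
  rw [← tsum_int_eq_one_add_two_mul_halfTheta hP,
    ← tsum_int_eq_one_add_two_mul_halfTheta (one_div_pos.2 hP),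
    tsum_exp_neg_mul_int_sq hP, sqrt_eq_rpow, one_div (P ^ _)]
  ring_nf

theorem halfTheta_le_geometric (hP : 0 < P) :
    halfTheta P ≤ exp (-π * P) * (1 - exp (-π * P) ^ 3)⁻¹ := by
  set r := exp (-π * P) with hr
  have hr1 : r < 1 := exp_lt_one_iff.2 (by nlinarith [pi_pos])
  have hgeom : HasSum (fun m : ℕ => r * (r ^ 3) ^ m) (r * (1 - r ^ 3)⁻¹) :=
    (hasSum_geometric_of_lt_one (by positivity)
      (pow_lt_one₀ (exp_pos _).le hr1 three_ne_zero)).mul_left _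
  -- `(m + 1)² ≥ 1 + 3 m` compares the theta series with a geometric series of ratio `r³`.
  have hterm (m : ℕ) : exp (-π * P * (m.succPNat : ℝ) ^ 2) ≤ r * (r ^ 3) ^ m := by
    rw [hr, ← exp_nat_mul, ← exp_nat_mul, ← exp_add]
    refine exp_le_exp.2 ?_
    have hm : (m : ℝ) ≤ m ^ 2 := by exact_mod_cast Nat.le_self_pow two_ne_zero m
    push_cast [Nat.succPNat_coe]
    nlinarith [mul_pos pi_pos hP]
  rw [halfTheta, ← Equiv.pnatEquivNat.symm.tsum_eq, ← hgeom.tsum_eq]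
  exact (Equiv.pnatEquivNat.symm.summable_iff.2 (summable_halfTheta hP)).tsum_le_tsum hterm
    hgeom.summable

theorem halfTheta_le (hP : 1 ≤ P) : halfTheta P ≤ 1.001 * exp (-π * P) := by
  have hr : exp (-π * P) ≤ 0.05 :=
    (exp_le_exp.2 (by nlinarith [pi_gt_three])).trans
      (exp_neg_div_le (m := 3) (n := 1) (by norm_num) one_ne_zero (by norm_num))
  have hr3 : exp (-π * P) ^ 3 ≤ 0.05 ^ 3 := by gcongr
  have hinv : (1 - exp (-π * P) ^ 3)⁻¹ ≤ 1.001 :=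
    inv_le_of_inv_le₀ (by norm_num) (by norm_num at hr3 ⊢; linarith)
  calc halfTheta P ≤ exp (-π * P) * (1 - exp (-π * P) ^ 3)⁻¹ := halfTheta_le_geometric (by linarith)
    _ ≤ exp (-π * P) * 1.001 := by gcongr
    _ = _ := mul_comm _ _

theorem two_mul_sqrt_mul_halfTheta_le {P₀ : ℝ} (hP₀ : 1 ≤ P₀) (hP : P₀ ≤ P) :
    2 * √P * halfTheta P ≤ 2.002 * exp (-(1 + 2.14 * P₀)) := by
  have hsqrt : √P ≤ exp (P - 1) := by
    have : √P ≤ P := sqrt_le_left (by linarith) |>.2 (le_self_pow₀ (by linarith) two_ne_zero)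
    linarith [add_one_le_exp (P - 1)]
  calc 2 * √P * halfTheta P ≤ 2 * exp (P - 1) * (1.001 * exp (-π * P)) := by
        gcongr
        · exact halfTheta_nonneg P
        · exact halfTheta_le (hP₀.trans hP)
    _ = 2.002 * exp (P - 1 + -π * P) := by rw [exp_add]; ring
    _ ≤ _ := by gcongr; nlinarith [pi_gt_d2]

theorem half_sub_le_halfTheta_sub (hx : 0 < x) :
    1 / 2 - 2 * √(1 / (2 * x)) * halfTheta (1 / (2 * x)) ≤
      halfTheta (x / 2) - 2 * halfTheta (2 * x) := by
  have h1 := halfTheta_functional_equation (half_pos hx)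
  have h2 := halfTheta_functional_equation (mul_pos two_pos hx)
  have h3 : (√(x / 2))⁻¹ = 2 * √(1 / (2 * x)) := by
    rw [← sqrt_inv, show (x / 2)⁻¹ = 2 ^ 2 * (1 / (2 * x)) by field_simp,
      sqrt_mul (by norm_num), sqrt_sq (by norm_num)]
  have h4 : (√(2 * x))⁻¹ = √(1 / (2 * x)) := by rw [← sqrt_inv, one_div]
  rw [h3] at h1
  rw [h4] at h2
  nlinarith [mul_nonneg (sqrt_nonneg (1 / (2 * x))) (halfTheta_nonneg (1 / (x / 2)))]

theorem exp_neg_pi_mul_sq_le_one (hx : 0 ≤ x) (j : ℝ) : exp (-π * x * j ^ 2) ≤ 1 := by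
  rw [neg_mul, neg_mul]
  exact exp_le_one_iff.2 (neg_nonpos.2 (by positivity))

theorem summable_invSqTheta (hx : 0 ≤ x) :
    Summable fun j : ℕ+ => exp (-π * x * (j : ℝ) ^ 2) / (j : ℝ) ^ 2 :=
  hasSum_pnat_inv_sq.summable.of_nonneg_of_le (fun _ => by positivity) fun j => by
    gcongr
    exact exp_neg_pi_mul_sq_le_one hx j

theorem invSqTheta_nonneg (x : ℝ) : 0 ≤ invSqTheta x := tsum_nonneg fun _ => by positivity

theorem invSqTheta_le_zeta_two (hx : 0 ≤ x) : invSqTheta x ≤ π ^ 2 / 6 := by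
  rw [← hasSum_pnat_inv_sq.tsum_eq]
  refine (summable_invSqTheta hx).tsum_le_tsum (fun j => ?_) hasSum_pnat_inv_sq.summable
  gcongr
  exact exp_neg_pi_mul_sq_le_one hx j

theorem invSqTheta_le_of_exp_le {u : ℝ} (hx : 0 ≤ x) (hu : exp (-π * x) ≤ u) :
    invSqTheta x ≤ u + u ^ 4 / 4 + (π ^ 2 / 6 - 5 / 4) * u ^ 9 := by
  have hpow (k : ℕ) : exp (-π * x * k) ≤ u ^ k := by
    rw [mul_comm, exp_nat_mul]
    gcongr
  have hbound : HasSum (fun j : ℕ+ => u ^ 9 * (1 / (j : ℝ) ^ 2) + (if j = 1 then u - u ^ 9 else 0)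
      + if j = 2 then (u ^ 4 - u ^ 9) / 4 else 0)
      (u ^ 9 * (π ^ 2 / 6) + (u - u ^ 9) + (u ^ 4 - u ^ 9) / 4) :=
    ((hasSum_pnat_inv_sq.mul_left _).add (hasSum_ite_eq _ _)).add (hasSum_ite_eq _ _)
  have hterm (j : ℕ+) : exp (-π * x * (j : ℝ) ^ 2) / (j : ℝ) ^ 2 ≤ u ^ 9 * (1 / (j : ℝ) ^ 2) +
      (if j = 1 then u - u ^ 9 else 0) + if j = 2 then (u ^ 4 - u ^ 9) / 4 else 0 := by
    rcases eq_or_ne j 1 with rfl | h1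
    · simpa using hpow 1
    rcases eq_or_ne j 2 with rfl | h2
    · have := hpow 4
      norm_num at this ⊢
      linarith
    have hj : (9 : ℝ) ≤ (j : ℝ) ^ 2 := by
      have h1' : (j : ℕ) ≠ 1 := fun h => h1 (PNat.eq h)
      have h2' : (j : ℕ) ≠ 2 := fun h => h2 (PNat.eq h)
      have h3 : 3 ≤ (j : ℕ) := by have := j.pos; omega
      exact_mod_cast Nat.pow_le_pow_left h3 2
    rw [if_neg h1, if_neg h2, add_zero, add_zero, mul_one_div]
    gcongr
    refine (exp_le_exp.2 ?_).trans (hpow 9)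
    push_cast
    nlinarith [mul_le_mul_of_nonneg_left hj (mul_nonneg pi_pos.le hx)]
  calc invSqTheta x ≤ _ := (summable_invSqTheta hx).tsum_le_tsum hterm hbound.summable
    _ = _ := by rw [hbound.tsum_eq]; ring

theorem pi_sq_div_six_le : π ^ 2 / 6 ≤ 1.645 := by nlinarith [pi_lt_d4, pi_pos]

theorem exp_neg_pi_mul_le {u : ℝ} (hu : 0 ≤ u) {m n : ℕ} (hn : n ≠ 0) (hx : m / n ≤ 3.14 * x)
    (h : 1 ≤ u ^ n * (2.718 : ℝ) ^ m) : exp (-π * x) ≤ u := by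
  refine (exp_le_exp.2 ?_).trans (exp_neg_div_le hu hn h)
  have : (0 : ℝ) ≤ m / n := by positivity
  nlinarith [pi_gt_d2]

theorem exists_exp_le_and_invSqTheta_le (hx : 0 < x) (hx' : x ≤ 0.22) :
    ∃ l s : ℝ, 0 < l ∧ exp l ≤ 2 / x ∧ invSqTheta x ≤ s ∧ 10 * s ≤ 0.486 * (3.14 * l ^ 2) := by
  have hdiv {y z : ℝ} (hxy : x ≤ y) (hzy : z * y ≤ 2) (hz : 0 ≤ z) : z ≤ 2 / x := by
    rw [le_div_iff₀ hx]
    nlinarith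
  have hseries {u s : ℝ} (hu : 0 ≤ u) (hxu : exp (-π * x) ≤ u)
      (hs : u + u ^ 4 / 4 + 0.395 * u ^ 9 ≤ s) : invSqTheta x ≤ s := by
    have := mul_le_mul_of_nonneg_right pi_sq_div_six_le (pow_nonneg hu 9)
    linarith [invSqTheta_le_of_exp_le hx.le hxu]
  rcases le_or_gt x 0.06 with h6 | h6
  · refine ⟨(7 : ℕ) / (2 : ℕ), 1.645, by norm_num, ?_,
      (invSqTheta_le_zeta_two hx.le).trans pi_sq_div_six_le, by norm_num⟩
    exact (exp_div_le (y := 33.3) (by norm_num) two_ne_zero (by norm_num)).trans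
      (hdiv h6 (by norm_num) (by norm_num))
  rcases le_or_gt x 0.14 with h14 | h14
  · refine ⟨(53 : ℕ) / (20 : ℕ), 1.03, by norm_num, ?_, ?_, by norm_num⟩
    · exact (exp_div_le (y := 14.2) (by norm_num) (by norm_num) (by norm_num)).trans
        (hdiv h14 (by norm_num) (by norm_num))
    · exact hseries (by norm_num) (exp_neg_pi_mul_le (u := 0.8294) (m := 3) (n := 16)
        (by norm_num) (by norm_num) (by push_cast; linarith) (by norm_num)) (by norm_num)
  · refine ⟨(11 : ℕ) / (5 : ℕ), 0.6975, by norm_num, ?_, ?_, by norm_num⟩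
    · exact (exp_div_le (y := 9.09) (by norm_num) (by norm_num) (by norm_num)).trans
        (hdiv hx' (by norm_num) (by norm_num))
    · exact hseries (by norm_num) (exp_neg_pi_mul_le (u := 0.6458) (m := 7) (n := 16)
        (by norm_num) (by norm_num) (by push_cast; linarith) (by norm_num)) (by norm_num)

theorem mul_invSqTheta_le_of_le_div_log_sq (hx : 0 < x) (hx' : x ≤ 0.22)
    (hB : B ≤ 5 * x / log (2 / x) ^ 2) : 2 * B / (π * x) * invSqTheta x ≤ 0.486 := by
  obtain ⟨l, s, hl, hexp, hs, hnum⟩ := exists_exp_le_and_invSqTheta_le hx hx'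
  have hlog : l ≤ log (2 / x) := by rwa [le_log_iff_exp_le (by positivity)]
  have hBl : B ≤ 5 * x / l ^ 2 := hB.trans (by gcongr)
  have hS := invSqTheta_nonneg x
  have hpi := pi_gt_d2
  calc 2 * B / (π * x) * invSqTheta x ≤ 2 * (5 * x / l ^ 2) / (3.14 * x) * invSqTheta x := by
        gcongr
    _ = 10 * invSqTheta x / (3.14 * l ^ 2) := by field_simp; ring
    _ ≤ 0.486 := by rw [div_le_iff₀ (by positivity)]; linarith

theorem mul_invSqTheta_le_of_le (hx : 0.22 ≤ x) (hB : B ≤ 0.26) :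
    2 * B / (π * x) * invSqTheta x ≤ 0.4 := by
  have hexp : exp (-π * x) ≤ 0.505 := exp_neg_pi_mul_le (m := 11) (n := 16) (by norm_num)
    (by norm_num) (by push_cast; linarith) (by norm_num)
  have hS : invSqTheta x ≤ 0.523 := by
    have := invSqTheta_le_of_exp_le (by linarith) hexp
    norm_num at this ⊢
    linarith [pi_sq_div_six_le]
  have hS0 := invSqTheta_nonneg x
  have hpi := pi_gt_d2
  calc 2 * B / (π * x) * invSqTheta x ≤ 2 * 0.26 / (3.14 * 0.22) * 0.523 := by gcongr
    _ ≤ 0.4 := by norm_num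

theorem two_mul_halfTheta_add_le_of_le_half (hx : 0 < x) (hx2 : x ≤ 1 / 2) (hB : B ≤ 0.26)
    (hBlog : x ≤ 0.22 → B ≤ 5 * x / log (2 / x) ^ 2) :
    2 * halfTheta (2 * x) + 2 * B / (π * x) * invSqTheta x ≤ halfTheta (x / 2) := by
  have hmain := half_sub_le_halfTheta_sub hx
  rcases le_or_gt x 0.22 with h | h
  · have hP := two_mul_sqrt_mul_halfTheta_le (P := 1 / (2 * x)) (P₀ := 2) (by norm_num)
      (by rw [le_div_iff₀ (by positivity)]; linarith)
    have hexp : exp (-(1 + 2.14 * 2)) ≤ 0.0068 :=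
      (exp_le_exp.2 (by norm_num)).trans
        (exp_neg_div_le (m := 5) (n := 1) (by norm_num) one_ne_zero (by norm_num))
    linarith [mul_invSqTheta_le_of_le_div_log_sq hx h (hBlog h)]
  · have hP := two_mul_sqrt_mul_halfTheta_le (P := 1 / (2 * x)) (P₀ := 1) le_rfl
      (by rw [le_div_iff₀ (by positivity)]; linarith)
    have hexp : exp (-(1 + 2.14 * 1)) ≤ 0.0443 :=
      (exp_le_exp.2 (by norm_num)).trans
        (exp_neg_div_le (m := 25) (n := 8) (by norm_num) (by norm_num) (by norm_num))
    linarith [mul_invSqTheta_le_of_le h.le hB]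

theorem two_mul_exp_add_le_exp (hx : 1 / 2 ≤ x) (hB : B ≤ 0.26) :
    2 * exp (-π * (2 * x)) + 2 * B / (π * x) * exp (-π * x) ≤ exp (-π * (x / 2)) := by
  set y := exp (-π * (x / 2)) with hy
  have hy2 : exp (-π * x) = y ^ 2 := by rw [hy, ← exp_nat_mul]; push_cast; ring_nf
  have hy4 : exp (-π * (2 * x)) = y ^ 4 := by rw [hy, ← exp_nat_mul]; push_cast; ring_nf
  have hy0 : 0 < y := exp_pos _
  have hy1 : y ≤ 0.5 := exp_neg_pi_mul_le (m := 3) (n := 4) (by norm_num) (by norm_num)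
    (by push_cast; linarith) (by norm_num)
  have hcoeff : 2 * B / (π * x) ≤ 0.4 := by
    rw [div_le_iff₀ (by positivity)]
    nlinarith [pi_gt_d2]
  have hy3 : y ^ 3 ≤ 0.5 ^ 3 := by gcongr
  have hmul : 2 * B / (π * x) * y ^ 2 ≤ 0.4 * y ^ 2 := by gcongr
  rw [hy2, hy4]
  nlinarith

theorem summable_two_mul_exp_add (hx : 0 < x) (B : ℝ) :
    Summable fun j : ℕ+ => 2 * exp (-π * (2 * x) * (j : ℝ) ^ 2) +
      2 * B / (π * x) * (exp (-π * x * (j : ℝ) ^ 2) / (j : ℝ) ^ 2) :=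
  ((summable_halfTheta (by positivity)).mul_left 2).add ((summable_invSqTheta hx.le).mul_left _)

-- For `x ≤ 1 / 2` the functional equation is used on the whole sums; beyond, each term suffices.
theorem tsum_two_mul_exp_add_le_halfTheta (hx : 0 < x) (hB : B ≤ 0.26)
    (hBlog : x ≤ 0.22 → B ≤ 5 * x / log (2 / x) ^ 2) :
    ∑' j : ℕ+, (2 * exp (-π * (2 * x) * (j : ℝ) ^ 2) +
      2 * B / (π * x) * (exp (-π * x * (j : ℝ) ^ 2) / (j : ℝ) ^ 2)) ≤ halfTheta (x / 2) := by
  rcases le_or_gt x (1 / 2) with h | h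
  · rw [((summable_halfTheta (by positivity)).mul_left 2).tsum_add
      ((summable_invSqTheta hx.le).mul_left _), tsum_mul_left, tsum_mul_left]
    exact two_mul_halfTheta_add_le_of_le_half hx h hB hBlog
  · refine (summable_two_mul_exp_add hx B).tsum_le_tsum (fun j => ?_)
      (summable_halfTheta (half_pos hx))
    have hj := pow_le_pow_left₀ zero_le_one (one_le_pnat_cast j) 2
    have := two_mul_exp_add_le_exp (x := x * (j : ℝ) ^ 2) (by nlinarith) hB
    rwa [show 2 * B / (π * (x * (j : ℝ) ^ 2)) = 2 * B / (π * x) / (j : ℝ) ^ 2 by field_simp,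
      show -π * (2 * (x * (j : ℝ) ^ 2)) = -π * (2 * x) * (j : ℝ) ^ 2 by ring,
      show -π * (x * (j : ℝ) ^ 2) = -π * x * (j : ℝ) ^ 2 by ring,
      show -π * (x * (j : ℝ) ^ 2 / 2) = -π * (x / 2) * (j : ℝ) ^ 2 by ring,
      div_mul_eq_mul_div, ← mul_div_assoc'] at this

end ThetaComparison

/-! ### Grouping along squares -/

section SignCharacter

open Real
open scoped ArithmeticFunction.zeta

/-- The indicator of the squarefree numbers, usually written `μ²`. -/
noncomputable def squarefreeIndicator : ArithmeticFunction ℝ :=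
  ⟨fun n => if Squarefree n then 1 else 0, by simp⟩

/-- The indicator of the positive squares. -/
noncomputable def squareIndicator : ArithmeticFunction ℝ :=
  ⟨fun n => if n ≠ 0 ∧ IsSquare n then 1 else 0, by simp⟩

/-- A completely multiplicative function with values in `{0, 1, -1}`, such as the arithmetic
function underlying a quadratic Dirichlet character. -/
structure IsSignCharacter (f : ArithmeticFunction ℝ) : Prop where
  map_one : f 1 = 1
  map_mul : ∀ m n, f (m * n) = f m * f n
  eq_zero_or : ∀ n, f n = 0 ∨ f n = 1 ∨ f n = -1

theorem squarefreeIndicator_apply (n : ℕ) :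
    squarefreeIndicator n = if Squarefree n then 1 else 0 := rfl

theorem squareIndicator_apply (n : ℕ) :
    squareIndicator n = if n ≠ 0 ∧ IsSquare n then 1 else 0 := rfl

theorem squareIndicator_nonneg (n : ℕ) : 0 ≤ squareIndicator n := by
  rw [squareIndicator_apply]
  split_ifs <;> norm_num

theorem squarefreeIndicator_isMultiplicative : squarefreeIndicator.IsMultiplicative := by
  refine ⟨by simp [squarefreeIndicator_apply], fun {m n} h => ?_⟩
  simp only [squarefreeIndicator_apply, Nat.squarefree_mul h, ite_and, ite_mul, one_mul, zero_mul]

theorem eq_of_sq_mul_squarefree_eq {a b j k : ℕ} (ha : Squarefree a) (hb : Squarefree b)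
    (hj : j ≠ 0) (hk : k ≠ 0) (h : j ^ 2 * a = k ^ 2 * b) : a = b := by
  refine Nat.eq_of_factorization_eq ha.ne_zero hb.ne_zero fun p => ?_
  have hp := congrArg (fun n => n.factorization p) h
  simp only [Nat.factorization_mul (pow_ne_zero 2 hj) ha.ne_zero,
    Nat.factorization_mul (pow_ne_zero 2 hk) hb.ne_zero, Nat.factorization_pow,
    Finsupp.add_apply, Finsupp.smul_apply, smul_eq_mul] at hp
  have := ha.natFactorization_le_one p
  have := hb.natFactorization_le_one p
  omega

theorem squareIndicator_mul_squarefreeIndicator :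
    squareIndicator * squarefreeIndicator = (ζ : ArithmeticFunction ℝ) := by
  ext n
  rcases eq_or_ne n 0 with rfl | hn
  · rw [ArithmeticFunction.map_zero, ArithmeticFunction.map_zero]
  obtain ⟨a, j, hja, ha⟩ := Nat.sq_mul_squarefree n
  have hj : j ≠ 0 := fun h => hn (by rw [← hja, h, zero_pow two_ne_zero, zero_mul])
  rw [ArithmeticFunction.mul_apply, Finset.sum_eq_single (j ^ 2, a)]
  · simp [squareIndicator_apply, squarefreeIndicator_apply, ha, hj, hn, IsSquare.sq]
  · rintro ⟨x, b⟩ hx hne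
    have hxb := (Nat.mem_divisorsAntidiagonal.1 hx).1
    by_contra hprod
    simp only [squareIndicator_apply, squarefreeIndicator_apply, mul_ite, mul_one, mul_zero,
      ite_eq_right_iff, one_ne_zero, imp_false, not_forall, not_not] at hprod
    obtain ⟨hb, hx0, k, rfl⟩ := hprod
    have hab : a = b := eq_of_sq_mul_squarefree_eq ha hb hj (left_ne_zero_of_mul hx0)
      (by rw [hja, sq, hxb])
    subst hab
    exact hne (Prod.ext (Nat.eq_of_mul_eq_mul_right ha.ne_zero.bot_lt (hxb.trans hja.symm)) rfl)
  · exact fun h => absurd (Nat.mem_divisorsAntidiagonal.2 ⟨hja, hn⟩) h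

theorem squarefreeIndicator_mul_apply_prime_pow_succ (f : ArithmeticFunction ℝ) {p : ℕ}
    (hp : p.Prime) (k : ℕ) :
    (squarefreeIndicator * f) (p ^ (k + 1)) = f (p ^ (k + 1)) + f (p ^ k) := by
  have hvanish (i : ℕ) : squarefreeIndicator (p ^ (i + 1 + 1)) = 0 := by
    rw [squarefreeIndicator_apply, if_neg]
    rw [Nat.squarefree_pow_iff hp.ne_one (by omega)]
    omega
  have hdiv : p ^ (k + 1) / p = p ^ k := by rw [pow_succ, Nat.mul_div_cancel _ hp.pos]
  rw [ArithmeticFunction.mul_apply,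
    Nat.sum_divisorsAntidiagonal (fun a b => squarefreeIndicator a * f b),
    Nat.sum_divisors_prime_pow hp, Finset.sum_range_succ', Finset.sum_range_succ',
    Finset.sum_eq_zero fun i _ => by rw [hvanish, zero_mul]]
  simp only [zero_add, pow_one, pow_zero, Nat.div_one, hdiv]
  rw [squarefreeIndicator_apply, squarefreeIndicator_apply, if_pos hp.prime.squarefree,
    if_pos squarefree_one, one_mul, one_mul, add_comm]

namespace IsSignCharacter

variable {f : ArithmeticFunction ℝ}

theorem abs_le_one (hf : IsSignCharacter f) (n : ℕ) : |f n| ≤ 1 := by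
  rcases hf.eq_zero_or n with h | h | h <;> simp [h]

theorem map_pow (hf : IsSignCharacter f) (m k : ℕ) : f (m ^ k) = f m ^ k := by
  induction k with
  | zero => rw [pow_zero, pow_zero, hf.map_one]
  | succ k ih => rw [pow_succ, hf.map_mul, ih, pow_succ]

theorem squarefreeIndicator_mul_nonneg (hf : IsSignCharacter f) (n : ℕ) :
    0 ≤ (squarefreeIndicator * f) n := by
  have hmult : (squarefreeIndicator * f).IsMultiplicative :=
    squarefreeIndicator_isMultiplicative.mul ⟨hf.map_one, fun {m n} _ => hf.map_mul m n⟩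
  rcases eq_or_ne n 0 with rfl | hn
  · rw [ArithmeticFunction.map_zero]
  rw [hmult.multiplicative_factorization _ hn]
  refine Finset.prod_nonneg fun p hp => ?_
  obtain ⟨k, hk⟩ := Nat.exists_eq_succ_of_ne_zero (Finsupp.mem_support_iff.1 hp)
  dsimp only
  rw [hk, squarefreeIndicator_mul_apply_prime_pow_succ f (Nat.prime_of_mem_primeFactors hp),
    hf.map_pow, hf.map_pow, pow_succ]
  rcases hf.eq_zero_or p with h | h | h <;> rw [h]
  · simp
  · norm_num
  · simp

end IsSignCharacter

theorem hasSum_mul_apply_pnat {f g : ArithmeticFunction ℝ} {φ : ℕ → ℝ}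
    (h : Summable fun p : ℕ+ × ℕ+ => f p.1 * g p.2 * φ (p.1 * p.2)) :
    HasSum (fun N : ℕ+ => (f * g) N * φ N)
      (∑' p : ℕ+ × ℕ+, f p.1 * g p.2 * φ (p.1 * p.2)) := by
  rw [← sigmaAntidiagonalEquivProd.tsum_eq]
  refine (sigmaAntidiagonalEquivProd.summable_iff.2 h).hasSum.sigma fun N => ?_
  rw [ArithmeticFunction.mul_apply, Finset.sum_mul, ← Finset.sum_coe_sort]
  refine (hasSum_fintype _).congr_fun fun x => ?_
  have := (Nat.mem_divisorsAntidiagonal.1 x.2).1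
  simp [sigmaAntidiagonalEquivProd, divisorsAntidiagonalFactors, this]

theorem tsum_ofReal_mul_apply_pnat {f g : ArithmeticFunction ℝ} (hf : ∀ n, 0 ≤ f n)
    (hg : ∀ n, 0 ≤ g n) (φ : ℕ → ENNReal) :
    ∑' N : ℕ+, ENNReal.ofReal ((f * g) N) * φ N =
      ∑' (b : ℕ+) (a : ℕ+), ENNReal.ofReal (f a) * ENNReal.ofReal (g b) * φ (a * b) := by
  rw [ENNReal.tsum_comm, ← ENNReal.tsum_prod
      (f := fun a b : ℕ+ => ENNReal.ofReal (f a) * ENNReal.ofReal (g b) * φ (a * b)),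
    ← sigmaAntidiagonalEquivProd.tsum_eq, ENNReal.tsum_sigma']
  refine tsum_congr fun N => ?_
  rw [ArithmeticFunction.mul_apply, ENNReal.ofReal_sum_of_nonneg
    (fun _ _ => mul_nonneg (hf _) (hg _)), Finset.sum_mul, ← Finset.sum_coe_sort, tsum_fintype]
  refine Finset.sum_congr rfl fun x _ => ?_
  have := (Nat.mem_divisorsAntidiagonal.1 x.2).1
  simp [sigmaAntidiagonalEquivProd, divisorsAntidiagonalFactors, this, ENNReal.ofReal_mul, hf]

theorem tsum_squareIndicator_mul (φ : ℕ → ENNReal) :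
    ∑' a : ℕ+, ENNReal.ofReal (squareIndicator a) * φ a = ∑' j : ℕ+, φ (j ^ 2) := by
  have hinj : Function.Injective fun j : ℕ+ => j ^ 2 := fun a b h =>
    PNat.eq (Nat.pow_left_injective two_ne_zero
      (show (a : ℕ) ^ 2 = (b : ℕ) ^ 2 from mod_cast congrArg PNat.val h))
  rw [← hinj.tsum_eq (f := fun a : ℕ+ => ENNReal.ofReal (squareIndicator a) * φ a)]
  · refine tsum_congr fun j => ?_
    simp [squareIndicator_apply, IsSquare.sq]
  · intro a ha
    obtain ⟨k, hk⟩ : IsSquare (a : ℕ) := by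
      by_contra h
      simp [squareIndicator_apply, h] at ha
    have hk0 : 0 < k := Nat.pos_of_ne_zero fun h => a.ne_zero (by rw [hk, h, zero_mul])
    exact ⟨Nat.toPNat k hk0, PNat.eq (by rw [hk, ← sq]; exact PNat.pow_coe _ 2)⟩

section Regrouping

variable {f : ArithmeticFunction ℝ} {φ : ℕ → ℝ}

theorem IsSignCharacter.hasSum_squareIndicator_mul (hf : IsSignCharacter f) (hφ : ∀ n, 0 ≤ φ n)
    (hs : Summable fun p : ℕ+ × ℕ+ => φ (p.1 * p.2)) :
    HasSum (fun N : ℕ+ => (squareIndicator * (squarefreeIndicator * f)) N * φ N)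
      (∑' p : ℕ+ × ℕ+, f p.2 * φ (p.1 * p.2)) := by
  have hzeta (p : ℕ+ × ℕ+) : (ζ : ArithmeticFunction ℝ) p.1 * f p.2 * φ (p.1 * p.2) =
      f p.2 * φ (p.1 * p.2) := by simp
  have hsum : Summable fun p : ℕ+ × ℕ+ => f p.2 * φ (p.1 * p.2) :=
    hs.of_norm_bounded fun p => by
      rw [norm_mul, norm_eq_abs, norm_eq_abs, abs_of_nonneg (hφ _)]
      exact mul_le_of_le_one_left (hφ _) (hf.abs_le_one _)
  rw [← mul_assoc, squareIndicator_mul_squarefreeIndicator, ← tsum_congr hzeta]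
  exact hasSum_mul_apply_pnat (hsum.congr fun p => (hzeta p).symm)

theorem IsSignCharacter.squareIndicator_mul_mul_nonneg (hf : IsSignCharacter f) (n : ℕ) :
    0 ≤ (squareIndicator * (squarefreeIndicator * f)) n := by
  rw [ArithmeticFunction.mul_apply]
  exact Finset.sum_nonneg fun _ _ =>
    mul_nonneg (squareIndicator_nonneg _) (hf.squarefreeIndicator_mul_nonneg _)

theorem IsSignCharacter.tsum_mul_nonneg (hf : IsSignCharacter f) (hφ : ∀ n, 0 ≤ φ n)
    (hs : Summable fun p : ℕ+ × ℕ+ => φ (p.1 * p.2)) :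
    0 ≤ ∑' p : ℕ+ × ℕ+, f p.2 * φ (p.1 * p.2) := by
  rw [← (hf.hasSum_squareIndicator_mul hφ hs).tsum_eq]
  exact tsum_nonneg fun N => mul_nonneg (hf.squareIndicator_mul_mul_nonneg N) (hφ N)

-- `1 * f = 1_□ * (μ² * f)` groups the double sum along squares with nonnegative coefficients.
theorem IsSignCharacter.ofReal_tsum_mul (hf : IsSignCharacter f) (hφ : ∀ n, 0 ≤ φ n)
    (hs : Summable fun p : ℕ+ × ℕ+ => φ (p.1 * p.2)) :
    ENNReal.ofReal (∑' p : ℕ+ × ℕ+, f p.2 * φ (p.1 * p.2)) =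
      ∑' (a : ℕ+) (j : ℕ+), ENNReal.ofReal ((squarefreeIndicator * f) a) *
        ENNReal.ofReal (φ (j ^ 2 * a)) := by
  have hsum := hf.hasSum_squareIndicator_mul hφ hs
  rw [← hsum.tsum_eq, ENNReal.ofReal_tsum_of_nonneg
    (fun N : ℕ+ => mul_nonneg (hf.squareIndicator_mul_mul_nonneg N) (hφ N)) hsum.summable]
  simp_rw [ENNReal.ofReal_mul (hf.squareIndicator_mul_mul_nonneg _)]
  rw [tsum_ofReal_mul_apply_pnat squareIndicator_nonneg hf.squarefreeIndicator_mul_nonneg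
    (fun n => ENNReal.ofReal (φ n))]
  refine tsum_congr fun b => ?_
  rw [ENNReal.tsum_mul_left, ← tsum_squareIndicator_mul (fun n => ENNReal.ofReal (φ (n * b))),
    ← ENNReal.tsum_mul_left]
  refine tsum_congr fun a => ?_
  ring

end Regrouping

end SignCharacter

/-! ### Sums over squares -/

section SquareSums

open Real MeasureTheory Set Filter Topology

theorem tendsto_exp_neg_mul_exp_atTop {s : ℝ} (hs : 0 < s) :
    Tendsto (fun w => exp (-s * exp w)) atTop (𝓝 0) :=
  tendsto_exp_atBot.comp (tendsto_exp_atTop.const_mul_atTop_of_neg (neg_lt_zero.2 hs))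

theorem lintegral_Ioi_exp_neg_mul_exp {s : ℝ} (hs : 0 < s) :
    ∫⁻ w in Ioi (0 : ℝ), ENNReal.ofReal (exp (-s * exp w)) * ENNReal.ofReal (exp w) =
      ENNReal.ofReal (exp (-s) / s) := by
  have hderiv (w : ℝ) (_ : w ∈ Ici (0 : ℝ)) :
      HasDerivAt (fun w => -exp (-s * exp w) / s) (exp (-s * exp w) * exp w) w := by
    refine ((((hasDerivAt_exp w).const_mul (-s)).exp.neg).div_const s).congr_deriv ?_
    field_simp
  have hlim : Tendsto (fun w => -exp (-s * exp w) / s) atTop (𝓝 0) := by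
    simpa only [neg_zero, zero_div] using (tendsto_exp_neg_mul_exp_atTop hs).neg.div_const s
  have hint := integrableOn_Ioi_deriv_of_nonneg' hderiv (fun w _ => by positivity) hlim
  simp_rw [← ENNReal.ofReal_mul (exp_pos _).le]
  rw [← ofReal_integral_eq_lintegral_ofReal hint (.of_forall fun w => by positivity),
    integral_Ioi_of_hasDerivAt_of_nonneg' hderiv (fun w _ => by positivity) hlim,
    exp_zero, mul_one, zero_sub, neg_div, neg_neg]

/-- The sum `∑_{a, j ≥ 1} ρ a * exp (-c a j² t)`, the shape taken by a double sum over `m, n` of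
`exp (-c m n t)` once the products `m n` are grouped along squares. It takes values in `[0, ∞]`,
where no summability has to be checked. -/
noncomputable def squareSum (ρ : ℕ → ℝ) (c t : ℝ) : ENNReal :=
  ∑' (a : ℕ+) (j : ℕ+), ENNReal.ofReal (ρ a) *
    ENNReal.ofReal (exp (-(c * ((j ^ 2 * a : ℕ) : ℝ)) * t))

variable (ρ : ℕ → ℝ) {c t Q B : ℝ}

theorem measurable_squareSum (c : ℝ) : Measurable (squareSum ρ c) :=
  Measurable.tsum fun _ => Measurable.tsum fun _ => by fun_prop

theorem lintegral_squareSum_mul_exp (hc : 0 < c) (ht : 0 < t) :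
    ∫⁻ w in Ioi (0 : ℝ), squareSum ρ c (exp w * t) * ENNReal.ofReal (exp w) =
      ∑' (a : ℕ+) (j : ℕ+), ENNReal.ofReal (ρ a) *
        ENNReal.ofReal (exp (-(c * ((j ^ 2 * a : ℕ) : ℝ)) * t) /
          (c * ((j ^ 2 * a : ℕ) : ℝ) * t)) := by
  unfold squareSum
  simp_rw [← ENNReal.tsum_mul_right]
  rw [lintegral_tsum fun a => (Measurable.tsum fun j => by fun_prop).aemeasurable]
  refine tsum_congr fun a => ?_
  rw [lintegral_tsum fun j => by fun_prop]
  refine tsum_congr fun j => ?_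
  have hs : 0 < c * ((j ^ 2 * a : ℕ) : ℝ) * t := by
    have : 0 < ((j ^ 2 * a : ℕ) : ℝ) := by positivity
    positivity
  simp_rw [mul_assoc (ENNReal.ofReal (ρ a))]
  rw [lintegral_const_mul _ (by fun_prop), neg_mul, ← lintegral_Ioi_exp_neg_mul_exp hs]
  congr 1
  refine lintegral_congr fun w => ?_
  ring_nf

theorem tsum_ofReal_two_mul_exp_add_le {x : ℝ} (hx : 0 < x) (hB0 : 0 ≤ B) (hB : B ≤ 0.26)
    (hBlog : x ≤ 0.22 → B ≤ 5 * x / log (2 / x) ^ 2) :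
    ∑' j : ℕ+, (2 * ENNReal.ofReal (exp (-π * (2 * x) * (j : ℝ) ^ 2)) + ENNReal.ofReal (2 * B) *
      ENNReal.ofReal (exp (-π * x * (j : ℝ) ^ 2) / (π * x * (j : ℝ) ^ 2))) ≤
      ∑' j : ℕ+, ENNReal.ofReal (exp (-π * (x / 2) * (j : ℝ) ^ 2)) := by
  have hreal := ENNReal.ofReal_le_ofReal (tsum_two_mul_exp_add_le_halfTheta hx hB hBlog)
  rw [halfTheta, ENNReal.ofReal_tsum_of_nonneg (fun j => by positivity)
      (summable_two_mul_exp_add hx B),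
    ENNReal.ofReal_tsum_of_nonneg (fun _ => (exp_pos _).le)
      (summable_halfTheta (half_pos hx))] at hreal
  refine le_of_eq_of_le (tsum_congr fun j => ?_) hreal
  rw [ENNReal.ofReal_add (by positivity) (by positivity),
    ENNReal.ofReal_mul (q := exp _) two_pos.le, ENNReal.ofReal_ofNat,
    ← ENNReal.ofReal_mul (p := 2 * B) (by positivity)]
  congr 2
  field_simp

theorem squareSum_comparison (hQ : 0 < Q) (ht : 1 ≤ t) (hB0 : 0 ≤ B) (hB : B ≤ 0.26)
    (hBlog : ∀ x, 2 / Q ≤ x → x ≤ 0.22 → B ≤ 5 * x / log (2 / x) ^ 2) :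
    2 * squareSum ρ (2 * π / Q) (2 * t) + ENNReal.ofReal (2 * B) *
      ∫⁻ w in Ioi (0 : ℝ), squareSum ρ (2 * π / Q) (exp w * t) * ENNReal.ofReal (exp w) ≤
      squareSum ρ (2 * π / Q) (t / 2) := by
  have ht0 : 0 < t := one_pos.trans_le ht
  rw [lintegral_squareSum_mul_exp ρ (by positivity) ht0]
  unfold squareSum
  rw [← ENNReal.tsum_mul_left, ← ENNReal.tsum_mul_left, ← ENNReal.tsum_add]
  refine ENNReal.tsum_le_tsum fun a => ?_
  simp_rw [ENNReal.tsum_mul_left, mul_left_comm _ (ENNReal.ofReal (ρ a)), ← mul_add]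
  gcongr
  rw [← ENNReal.tsum_mul_left, ← ENNReal.tsum_mul_left, ← ENNReal.tsum_add]
  set x := 2 * a * t / Q with hx
  have hx2 : 2 / Q ≤ x := by
    rw [hx]
    gcongr
    nlinarith [one_le_pnat_cast a]
  have hscale (j : ℕ+) (r : ℝ) :
      2 * π / Q * ((j ^ 2 * a : ℕ) : ℝ) * (r * t) = π * (r * x) * (j : ℝ) ^ 2 := by
    rw [hx]
    push_cast
    ring
  have hone (j : ℕ+) : 2 * π / Q * ((j ^ 2 * a : ℕ) : ℝ) * t = π * x * (j : ℝ) ^ 2 := by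
    simpa only [one_mul] using hscale j 1
  simp_rw [neg_mul (2 * π / Q * _), div_eq_inv_mul t, hscale, hone, ← neg_mul, ← div_eq_inv_mul]
  exact tsum_ofReal_two_mul_exp_add_le (by positivity) hB0 hB (hBlog x hx2)

theorem squareSum_comparison_self (hc : 0 < c) (ht : 1 ≤ t) (hB0 : 0 ≤ B) (hB : B ≤ c) :
    ENNReal.ofReal B *
      ∫⁻ w in Ioi (0 : ℝ), squareSum ρ c (exp w * t) * ENNReal.ofReal (exp w) ≤
      squareSum ρ c t := by
  have ht0 : 0 < t := one_pos.trans_le ht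
  rw [lintegral_squareSum_mul_exp ρ hc ht0, ← ENNReal.tsum_mul_left]
  refine ENNReal.tsum_le_tsum fun a => ?_
  rw [← ENNReal.tsum_mul_left]
  refine ENNReal.tsum_le_tsum fun j => ?_
  rw [mul_left_comm, ← ENNReal.ofReal_mul hB0]
  gcongr
  have hone : (1 : ℝ) ≤ ((j ^ 2 * a : ℕ) : ℝ) :=
    Nat.one_le_cast.2 (Nat.mul_pos (pow_pos j.pos 2) a.pos)
  have hB' : B ≤ c * ((j ^ 2 * a : ℕ) : ℝ) * t :=
    calc B ≤ c * 1 * 1 := by linarith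
      _ ≤ _ := by gcongr
  rw [mul_div_assoc', div_le_iff₀ (by positivity), mul_comm]
  gcongr

/-- The average of `squareSum ρ c (exp w * cosh v)` over `v` with respect to `ν`. -/
noncomputable def squareSumAverage (ν : Measure ℝ) (ρ : ℕ → ℝ) (c w : ℝ) : ENNReal :=
  ∫⁻ v, squareSum ρ c (exp w * cosh v) ∂ν

theorem measurable_squareSum_exp_mul_cosh (c : ℝ) :
    Measurable fun p : ℝ × ℝ => squareSum ρ c (exp p.1 * cosh p.2) :=
  (measurable_squareSum ρ c).comp (by fun_prop)

variable (ν : Measure ℝ) [SFinite ν]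

theorem measurable_squareSumAverage (c : ℝ) : Measurable (squareSumAverage ν ρ c) :=
  (measurable_squareSum_exp_mul_cosh ρ c).lintegral_prod_right'

theorem lintegral_squareSumAverage (c : ℝ) :
    ∫⁻ w in Ioi (0 : ℝ), squareSumAverage ν ρ c w * ENNReal.ofReal (exp w) =
      ∫⁻ v, (∫⁻ w in Ioi (0 : ℝ), squareSum ρ c (exp w * cosh v) * ENNReal.ofReal (exp w)) ∂ν := by
  have hmeas := measurable_squareSum_exp_mul_cosh ρ c
  rw [← lintegral_lintegral_swap (hmeas.mul (by fun_prop)).aemeasurable]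
  refine lintegral_congr fun w => ?_
  exact (lintegral_mul_const _ (hmeas.comp (by fun_prop : Measurable fun v => (w, v)))).symm

theorem squareSumAverage_comparison (hQ : 0 < Q) (hB0 : 0 ≤ B) (hB : B ≤ 0.26)
    (hBlog : ∀ x, 2 / Q ≤ x → x ≤ 0.22 → B ≤ 5 * x / log (2 / x) ^ 2) :
    2 * squareSumAverage ν ρ (2 * π / Q) (log 2) + ENNReal.ofReal (2 * B) *
      ∫⁻ w in Ioi (0 : ℝ), squareSumAverage ν ρ (2 * π / Q) w * ENNReal.ofReal (exp w) ≤
      squareSumAverage ν ρ (2 * π / Q) (-log 2) := by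
  have hmeas (w : ℝ) : Measurable fun v => squareSum ρ (2 * π / Q) (exp w * cosh v) :=
    (measurable_squareSum ρ _).comp (by fun_prop)
  rw [lintegral_squareSumAverage]
  unfold squareSumAverage
  rw [← lintegral_const_mul _ (hmeas _), ← lintegral_const_mul' _ _ ENNReal.ofReal_ne_top,
    ← lintegral_add_left ((hmeas _).const_mul _)]
  refine lintegral_mono fun v => ?_
  rw [exp_neg, exp_log two_pos, ← div_eq_inv_mul]
  exact squareSum_comparison ρ hQ (one_le_cosh v) hB0 hB hBlog

theorem squareSumAverage_comparison_self (hc : 0 < c) (hB0 : 0 ≤ B) (hB : B ≤ c) :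
    ENNReal.ofReal B *
      ∫⁻ w in Ioi (0 : ℝ), squareSumAverage ν ρ c w * ENNReal.ofReal (exp w) ≤
      squareSumAverage ν ρ c 0 := by
  rw [lintegral_squareSumAverage]
  unfold squareSumAverage
  rw [← lintegral_const_mul' _ _ ENNReal.ofReal_ne_top, exp_zero]
  simp_rw [one_mul]
  exact lintegral_mono fun v => squareSum_comparison_self ρ hc (one_le_cosh v) hB0 hB

end SquareSums

/-! ### The product kernel and its functional equation -/

section FunctionalEquation

open Real MeasureTheory Set Filter

theorem halfTheta_le_inv {P : ℝ} (hP : 0 < P) : halfTheta P ≤ P⁻¹ := by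
  have hterm (m : ℕ+) : exp (-π * P * (m : ℝ) ^ 2) ≤ (π * P)⁻¹ * (1 / (m : ℝ) ^ 2) := by
    rw [mul_one_div, ← one_div, div_div, one_div, neg_mul, neg_mul, exp_neg]
    gcongr
    linarith [add_one_le_exp (π * P * (m : ℝ) ^ 2)]
  calc halfTheta P ≤ ∑' m : ℕ+, (π * P)⁻¹ * (1 / (m : ℝ) ^ 2) :=
        (summable_halfTheta hP).tsum_le_tsum hterm (hasSum_pnat_inv_sq.summable.mul_left _)
    _ = P⁻¹ * (π / 6) := by
        rw [tsum_mul_left, hasSum_pnat_inv_sq.tsum_eq]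
        field_simp
    _ ≤ P⁻¹ := mul_le_of_le_one_right (by positivity) (by linarith [pi_lt_four])

theorem antitone_halfTheta_exp : Antitone fun p : ℝ => halfTheta (exp p) := by
  intro a b hab
  refine (summable_halfTheta (exp_pos _)).tsum_le_tsum (fun m => exp_le_exp.2 ?_)
    (summable_halfTheta (exp_pos _))
  simp only [neg_mul, neg_le_neg_iff]
  gcongr

theorem measurable_halfTheta_exp : Measurable fun p : ℝ => halfTheta (exp p) :=
  antitone_halfTheta_exp.measurable

theorem halfTheta_exp_neg (p : ℝ) :
    halfTheta (exp (-p)) = exp (p / 2) * halfTheta (exp p) + (exp (p / 2) - 1) / 2 := by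
  have h := halfTheta_functional_equation (exp_pos (-p))
  rw [← exp_half, ← exp_neg, neg_div, neg_neg, one_div, ← exp_neg, neg_neg] at h
  linarith

theorem halfTheta_exp_le (p : ℝ) : halfTheta (exp p) ≤ exp (-p) := by
  rw [exp_neg]
  exact halfTheta_le_inv (exp_pos p)

theorem abs_halfTheta_exp_sub_le_of_nonneg {p : ℝ} (hp : 0 ≤ p) :
    |halfTheta (exp p) - exp (-p / 2) / 2| ≤ 2 * exp (-p / 2) := by
  have hexp : exp (-p) ≤ exp (-p / 2) := exp_le_exp.2 (by linarith)
  have := halfTheta_exp_le p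
  have := halfTheta_nonneg (exp p)
  have := exp_pos (-p / 2)
  rw [abs_le]
  constructor <;> linarith

theorem abs_halfTheta_exp_sub_le_of_nonpos {p : ℝ} (hp : p ≤ 0) :
    |halfTheta (exp p) - exp (-p / 2) / 2| ≤ 2 := by
  have hfe := halfTheta_exp_neg (-p)
  rw [neg_neg] at hfe
  have hle : exp (-p / 2) * halfTheta (exp (-p)) ≤ 1 :=
    calc exp (-p / 2) * halfTheta (exp (-p)) ≤ exp (-p / 2) * exp (- -p) := by
          gcongr
          exact halfTheta_exp_le (-p)
      _ ≤ 1 := by rw [← exp_add]; exact exp_le_one_iff.2 (by linarith)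
  have := mul_nonneg (exp_pos (-p / 2)).le (halfTheta_nonneg (exp (-p)))
  rw [hfe, abs_le]
  constructor <;> linarith

/-- `halfTheta` in logarithmic coordinates, with its singularity at `p → -∞` removed and weighted
so as to decay exponentially in both directions when `0 < β < 1`. -/
noncomputable def thetaTail (β p : ℝ) : ℝ :=
  (halfTheta (exp p) - exp (-p / 2) / 2) * exp (β / 2 * p)

theorem integrable_exp_neg_mul_abs {δ : ℝ} (hδ : 0 < δ) :
    Integrable fun p : ℝ => exp (-δ * |p|) := by
  have hpos : IntegrableOn (fun p : ℝ => exp (-δ * |p|)) (Ioi 0) :=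
    (integrableOn_exp_mul_Ioi (neg_lt_zero.2 hδ) 0).congr_fun
      (fun p hp => by rw [abs_of_pos hp]) measurableSet_Ioi
  have hneg : IntegrableOn (fun p : ℝ => exp (-δ * |p|)) (Iic 0) :=
    (integrableOn_exp_mul_Iic hδ 0).congr_fun
      (fun p hp => by rw [abs_of_nonpos (mem_Iic.1 hp), neg_mul_neg]) measurableSet_Iic
  rw [← integrableOn_univ, ← Iic_union_Ioi (a := (0 : ℝ))]
  exact hneg.union hpos

theorem abs_thetaTail_le {β δ : ℝ} (h0 : 2 * δ ≤ β) (h1 : 2 * δ ≤ 1 - β) (p : ℝ) :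
    |thetaTail β p| ≤ 2 * exp (-δ * |p|) := by
  rw [thetaTail, abs_mul, abs_of_pos (exp_pos (β / 2 * p))]
  rcases le_total 0 p with hp | hp
  · calc _ ≤ 2 * exp (-p / 2) * exp (β / 2 * p) := by
          gcongr
          exact abs_halfTheta_exp_sub_le_of_nonneg hp
      _ = 2 * exp (-p / 2 + β / 2 * p) := by rw [exp_add, mul_assoc]
      _ ≤ _ := by rw [abs_of_nonneg hp]; gcongr; nlinarith
  · calc _ ≤ 2 * exp (β / 2 * p) := by
          gcongr
          exact abs_halfTheta_exp_sub_le_of_nonpos hp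
      _ ≤ _ := by rw [abs_of_nonpos hp]; gcongr 2 * exp ?_; nlinarith

theorem integrable_thetaTail {β : ℝ} (h0 : 0 < β) (h1 : β < 1) : Integrable (thetaTail β) := by
  obtain ⟨δ, hδ, hδ0, hδ1⟩ : ∃ δ : ℝ, 0 < δ ∧ 2 * δ ≤ β ∧ 2 * δ ≤ 1 - β :=
    ⟨min β (1 - β) / 2, half_pos (lt_min h0 (sub_pos.2 h1)),
      by linarith [min_le_left β (1 - β)], by linarith [min_le_right β (1 - β)]⟩
  refine ((integrable_exp_neg_mul_abs hδ).const_mul 2).mono' ?_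
    (.of_forall (abs_thetaTail_le hδ0 hδ1))
  exact ((measurable_halfTheta_exp.sub (by fun_prop)).mul (by fun_prop)).aestronglyMeasurable

/-- A function with the decay and the functional equation of the theta series of a primitive
quadratic character, in the logarithmic coordinate `p`; `W` is the sign of the functional
equation. -/
structure TwistedTheta (g : ℝ → ℝ) (W : ℝ) : Prop where
  sign : W = 1 ∨ W = -1
  integrable_mul_exp : ∀ σ : ℝ, Integrable fun p => g p * exp (σ * p)
  symm : ∀ p, g (-p) = W * exp (p / 2) * g p

/-- The multiplicative convolution of `halfTheta` and `g`, in logarithmic coordinates. For `g` the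
theta series of `χ` it is the kernel whose Mellin transform is the completed `ζ(s) L(s, χ)`. -/
noncomputable def productKernel (g : ℝ → ℝ) (w : ℝ) : ℝ :=
  ∫ v, halfTheta (exp (w + v)) * g (w - v)

/-- The coefficient of the polar terms in the functional equation of `productKernel g`. -/
noncomputable def residueConst (g : ℝ → ℝ) : ℝ := (∫ p, g p * exp (1 / 2 * p)) / 2

/-- The product kernel with its polar part removed, weighted by `exp (β w)`. -/
noncomputable def reducedKernel (g : ℝ → ℝ) (β w : ℝ) : ℝ :=
  (productKernel g w - residueConst g * exp (-w)) * exp (β * w)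

theorem integrableOn_mul_exp_mul {k : ℝ → ℝ} (hk : IntegrableOn (fun w => k w * exp w) (Ioi 0))
    {s : ℝ} (hs : s ≤ 1) : IntegrableOn (fun w => k w * exp (s * w)) (Ioi 0) := by
  refine (hk.mul_bdd (c := 1) (g := fun w => exp ((s - 1) * w)) (by fun_prop) ?_).congr
    (.of_forall fun w => ?_)
  · filter_upwards [ae_restrict_mem measurableSet_Ioi] with w hw
    rw [norm_of_nonneg (exp_pos _).le, exp_le_one_iff]
    exact mul_nonpos_of_nonpos_of_nonneg (sub_nonpos.2 hs) (mem_Ioi.1 hw).le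
  · dsimp only
    rw [mul_assoc, ← exp_add]
    ring_nf

theorem convexOn_sinh : ConvexOn ℝ (Ici 0) sinh := by
  refine MonotoneOn.convexOn_of_deriv (convex_Ici 0) continuous_sinh.continuousOn
    differentiable_sinh.differentiableOn ?_
  rw [Real.deriv_sinh, interior_Ici]
  intro x hx y hy hxy
  rwa [cosh_le_cosh, abs_of_pos hx, abs_of_pos hy]

theorem sinh_mul_le {t x : ℝ} (ht0 : 0 ≤ t) (ht1 : t ≤ 1) (hx : 0 ≤ x) :
    sinh (t * x) ≤ t * sinh x := by
  simpa only [smul_eq_mul, mul_zero, zero_add, sinh_zero] using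
    convexOn_sinh.2 (mem_Ici.2 le_rfl) (mem_Ici.2 hx) (sub_nonneg.2 ht1) ht0 (sub_add_cancel 1 t)

theorem exp_mul_sub_exp_one_sub_mul_le {β w : ℝ} (hβ : 1 / 2 ≤ β) (h1 : β ≤ 1) (hw : 0 ≤ w) :
    exp (β * w) - exp ((1 - β) * w) ≤ (2 * β - 1) * exp w := by
  have hsinh (t : ℝ) : exp (w / 2) * (2 * sinh (t * (w / 2))) =
      exp ((1 + t) * (w / 2)) - exp ((1 - t) * (w / 2)) := by
    rw [sinh_eq, mul_div_cancel₀ _ two_ne_zero, mul_sub, ← exp_add, ← exp_add]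
    ring_nf
  calc exp (β * w) - exp ((1 - β) * w)
      = exp (w / 2) * (2 * sinh ((2 * β - 1) * (w / 2))) := by rw [hsinh]; ring_nf
    _ ≤ exp (w / 2) * (2 * ((2 * β - 1) * sinh (w / 2))) := by
        gcongr
        exact sinh_mul_le (by linarith) (by linarith) (by linarith)
    _ = (2 * β - 1) * (exp w - 1) := by
        have := hsinh 1
        rw [one_mul, sub_self, zero_mul, exp_zero, one_add_one_eq_two,
          mul_div_cancel₀ _ two_ne_zero] at this
        linear_combination (2 * β - 1) * this
    _ ≤ (2 * β - 1) * exp w := by nlinarith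

namespace TwistedTheta

variable {g : ℝ → ℝ} {W β : ℝ}

theorem integrable (h : TwistedTheta g W) : Integrable g := by
  simpa only [zero_mul, exp_zero, mul_one] using h.integrable_mul_exp 0

theorem integrable_productKernel (h : TwistedTheta g W) (w : ℝ) :
    Integrable fun v => halfTheta (exp (w + v)) * g (w - v) := by
  have hmeas : Measurable fun v => halfTheta (exp (w + v)) :=
    measurable_halfTheta_exp.comp (by fun_prop : Measurable fun v => w + v)
  refine (((h.integrable_mul_exp 1).comp_sub_left w).norm.const_mul (exp (-2 * w))).mono'
    (hmeas.aestronglyMeasurable.mul (h.integrable.comp_sub_left w).aestronglyMeasurable)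
    (.of_forall fun v => ?_)
  rw [norm_mul, norm_mul, norm_of_nonneg (halfTheta_nonneg _), norm_of_nonneg (exp_pos _).le]
  calc halfTheta (exp (w + v)) * ‖g (w - v)‖ ≤ exp (-(w + v)) * ‖g (w - v)‖ := by
        gcongr
        exact halfTheta_exp_le _
    _ = exp (-2 * w + 1 * (w - v)) * ‖g (w - v)‖ := by ring_nf
    _ = exp (-2 * w) * (‖g (w - v)‖ * exp (1 * (w - v))) := by rw [exp_add]; ring

theorem integral_eq (h : TwistedTheta g W) : ∫ p, g p = 2 * W * residueConst g := by
  rw [← integral_neg_eq_self g volume, residueConst, mul_assoc, mul_left_comm,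
    mul_div_cancel₀ _ two_ne_zero, ← integral_const_mul]
  refine integral_congr_ae (.of_forall fun p => ?_)
  simp only [h.symm]
  ring_nf

theorem productKernel_neg (h : TwistedTheta g W) (w : ℝ) :
    productKernel g (-w) = W * exp w * productKernel g w + residueConst g * exp w
      - W * residueConst g := by
  have hWW : W * W = 1 := by rcases h.sign with rfl | rfl <;> norm_num
  have hreflect : productKernel g (-w) = ∫ v, halfTheta (exp (-(w + v))) * g (-(w - v)) := by
    rw [productKernel, ← integral_neg_eq_self]
    refine integral_congr_ae (.of_forall fun v => ?_)
    ring_nf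
  have hpointwise (v : ℝ) : halfTheta (exp (-(w + v))) * g (-(w - v)) =
      W * exp w * (halfTheta (exp (w + v)) * g (w - v)) + W * exp w / 2 * g (w - v)
        - W / 2 * (g (w - v) * exp (1 / 2 * (w - v))) := by
    have hexp : exp ((w + v) / 2) * exp ((w - v) / 2) = exp w := by rw [← exp_add]; ring_nf
    rw [halfTheta_exp_neg, h.symm, one_div_mul_eq_div, ← hexp]
    ring
  have hint₁ := (h.integrable_productKernel w).const_mul (W * exp w)
  have hint₂ := (h.integrable.comp_sub_left w).const_mul (W * exp w / 2)
  have hint₃ := ((h.integrable_mul_exp (1 / 2)).comp_sub_left w).const_mul (W / 2)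
  rw [hreflect]
  simp_rw [hpointwise]
  rw [integral_sub (by exact hint₁.add hint₂) hint₃, integral_add hint₁ hint₂,
    integral_const_mul, integral_const_mul, integral_const_mul,
    integral_sub_left_eq_self g volume w,
    integral_sub_left_eq_self (fun p => g p * exp (1 / 2 * p)) volume w, h.integral_eq,
    productKernel, residueConst]
  linear_combination exp w * ((∫ p, g p * exp (1 / 2 * p)) / 2) * hWW

-- Subtracting the polar part of `halfTheta` from the convolution amounts to subtracting
-- `residueConst g * exp (-w)`.
theorem reducedKernel_eq_convolution (h : TwistedTheta g W) (β w : ℝ) :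
    reducedKernel g β w = convolution (thetaTail β) (fun p => g p * exp (β / 2 * p))
      (ContinuousLinearMap.mul ℝ ℝ) volume (2 * w) := by
  have hint₁ := h.integrable_productKernel w
  have hint₂ := ((h.integrable_mul_exp (1 / 2)).comp_sub_left w).const_mul (exp (-w) / 2)
  rw [convolution_def, ← integral_add_left_eq_self _ w, reducedKernel, residueConst,
    ← integral_sub_left_eq_self (fun p => g p * exp (1 / 2 * p)) volume w, productKernel,
    div_mul_eq_mul_div, mul_div_assoc, mul_comm _ (exp (-w) / 2), ← integral_const_mul,
    ← integral_sub hint₁ hint₂, ← integral_mul_const]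
  refine integral_congr_ae (.of_forall fun v => ?_)
  have hhalf : exp (-(w + v) / 2) = exp (-w) * exp (1 / 2 * (w - v)) := by
    rw [← exp_add]
    ring_nf
  have hβ : exp (β * w) = exp (β / 2 * (w + v)) * exp (β / 2 * (w - v)) := by
    rw [← exp_add]
    ring_nf
  simp only [ContinuousLinearMap.mul_apply', thetaTail]
  rw [show 2 * w - (w + v) = w - v by ring, hhalf, hβ]
  ring

theorem integrable_reducedKernel (h : TwistedTheta g W) (h0 : 0 < β) (h1 : β < 1) :
    Integrable (reducedKernel g β) :=
  (((integrable_thetaTail h0 h1).integrable_convolution (ContinuousLinearMap.mul ℝ ℝ)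
    (h.integrable_mul_exp (β / 2))).comp_mul_left' two_ne_zero).congr
    (.of_forall fun w => (h.reducedKernel_eq_convolution β w).symm)

theorem integral_reducedKernel (h : TwistedTheta g W) (h0 : 0 < β) (h1 : β < 1)
    (hzero : ∫ p, g p * exp (β / 2 * p) = 0) : ∫ w, reducedKernel g β w = 0 := by
  have hconv := integral_convolution (μ := volume) (ContinuousLinearMap.mul ℝ ℝ)
    (integrable_thetaTail h0 h1) (h.integrable_mul_exp (β / 2))
  rw [hzero, map_zero] at hconv
  simp_rw [h.reducedKernel_eq_convolution β]
  rw [Measure.integral_comp_mul_left (convolution (thetaTail β) (fun p => g p * exp (β / 2 * p))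
      (ContinuousLinearMap.mul ℝ ℝ) volume) 2, hconv, smul_zero]

theorem reducedKernel_add_neg (h : TwistedTheta g W) (β w : ℝ) :
    reducedKernel g β w + reducedKernel g β (-w) =
      productKernel g w * (exp (β * w) + W * exp ((1 - β) * w)) -
      (residueConst g * exp (-(1 - β) * w) + W * residueConst g * exp (-β * w)) := by
  have h₁ : exp (-(1 - β) * w) = exp (-w) * exp (β * w) := by rw [← exp_add]; ring_nf
  have h₂ : exp ((1 - β) * w) = exp w * exp (-β * w) := by rw [← exp_add]; ring_nf
  rw [reducedKernel, reducedKernel, h.productKernel_neg, neg_neg, h₁, h₂, mul_neg, ← neg_mul]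
  ring

theorem setIntegral_reducedKernel_add_neg (h : TwistedTheta g W) (h0 : 0 < β) (h1 : β < 1)
    (hzero : ∫ p, g p * exp (β / 2 * p) = 0) :
    ∫ w in Ioi (0 : ℝ), (reducedKernel g β w + reducedKernel g β (-w)) = 0 := by
  have hint := h.integrable_reducedKernel h0 h1
  rw [integral_add hint.integrableOn hint.comp_neg.integrableOn, integral_comp_neg_Ioi, neg_zero,
    ← h.integral_reducedKernel h0 h1 hzero, add_comm,
    intervalIntegral.integral_Iic_add_Ioi hint.integrableOn hint.integrableOn]

theorem integral_productKernel (h : TwistedTheta g W) (h0 : 0 < β) (h1 : β < 1)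
    (hzero : ∫ p, g p * exp (β / 2 * p) = 0)
    (hK : IntegrableOn (fun w => productKernel g w * exp w) (Ioi 0)) :
    ∫ w in Ioi (0 : ℝ), productKernel g w * (exp (β * w) + W * exp ((1 - β) * w)) =
      residueConst g / (1 - β) + W * residueConst g / β := by
  have hexp {s : ℝ} (hs : 0 < s) : ∫ w in Ioi (0 : ℝ), exp (-s * w) = 1 / s := by
    rw [integral_exp_mul_Ioi (neg_lt_zero.2 hs) 0, mul_zero, exp_zero, neg_div_neg_eq]
  have hint : IntegrableOn
      (fun w => productKernel g w * (exp (β * w) + W * exp ((1 - β) * w))) (Ioi 0) := by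
    refine ((integrableOn_mul_exp_mul hK h1.le).add
      ((integrableOn_mul_exp_mul hK (s := 1 - β) (by linarith)).const_mul W)).congr
      (.of_forall fun w => ?_)
    simp only [Pi.add_apply]
    ring
  have hint₁ := (integrableOn_exp_mul_Ioi (neg_lt_zero.2 (sub_pos.2 h1)) 0).const_mul
    (residueConst g)
  have hint₂ := (integrableOn_exp_mul_Ioi (neg_lt_zero.2 h0) 0).const_mul (W * residueConst g)
  have hsplit := h.setIntegral_reducedKernel_add_neg h0 h1 hzero
  simp_rw [h.reducedKernel_add_neg] at hsplit
  rw [integral_sub hint (by exact hint₁.add hint₂), integral_add hint₁ hint₂, integral_const_mul,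
    integral_const_mul, hexp (sub_pos.2 h1), hexp h0, mul_one_div, mul_one_div, sub_eq_zero]
    at hsplit
  exact hsplit

theorem productKernel_sub_le (h : TwistedTheta g 1) (h0 : 0 < β) (h1 : β < 1)
    (hzero : ∫ p, g p * exp (β / 2 * p) = 0)
    (hK : IntegrableOn (fun w => productKernel g w * exp w) (Ioi 0))
    (hK0 : ∀ w, 0 ≤ productKernel g w) :
    productKernel g (-log 2) - 2 * productKernel g (log 2) ≤
      2 * (β * (1 - β)) * ∫ w in Ioi (0 : ℝ), productKernel g w * exp w := by
  have hle : ∫ w in Ioi (0 : ℝ), productKernel g w * (exp (β * w) + 1 * exp ((1 - β) * w)) ≤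
      ∫ w in Ioi (0 : ℝ), 2 * (productKernel g w * exp w) := by
    refine integral_mono_of_nonneg (.of_forall fun w => mul_nonneg (hK0 w) (by positivity))
      (hK.const_mul 2) ?_
    filter_upwards [ae_restrict_mem measurableSet_Ioi] with w hw
    have hw0 : 0 < w := hw
    have hexp₁ : exp (β * w) ≤ exp w := exp_le_exp.2 (by nlinarith)
    have hexp₂ : exp ((1 - β) * w) ≤ exp w := exp_le_exp.2 (by nlinarith)
    nlinarith [hK0 w]
  rw [h.integral_productKernel h0 h1 hzero hK, integral_const_mul] at hle
  have h1' : 0 < 1 - β := sub_pos.2 h1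
  have hres : residueConst g = β * (1 - β) *
      (residueConst g / (1 - β) + 1 * residueConst g / β) := by
    field_simp
    ring
  have hfe := h.productKernel_neg (log 2)
  rw [exp_log two_pos] at hfe
  linarith [mul_le_mul_of_nonneg_left hle (mul_pos h0 h1').le]

theorem productKernel_zero_le (h : TwistedTheta g (-1)) (h0 : 1 / 2 < β) (h1 : β < 1)
    (hzero : ∫ p, g p * exp (β / 2 * p) = 0)
    (hK : IntegrableOn (fun w => productKernel g w * exp w) (Ioi 0))
    (hK0 : ∀ w, 0 ≤ productKernel g w) :
    productKernel g 0 ≤ β * (1 - β) * ∫ w in Ioi (0 : ℝ), productKernel g w * exp w := by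
  have hle : ∫ w in Ioi (0 : ℝ), productKernel g w * (exp (β * w) + -1 * exp ((1 - β) * w)) ≤
      ∫ w in Ioi (0 : ℝ), (2 * β - 1) * (productKernel g w * exp w) := by
    refine integral_mono_of_nonneg ?_ (hK.const_mul _) ?_ <;>
      filter_upwards [ae_restrict_mem measurableSet_Ioi] with w hw
    · have hw0 : 0 < w := hw
      have hexp : exp ((1 - β) * w) ≤ exp (β * w) := exp_le_exp.2 (by nlinarith)
      exact mul_nonneg (hK0 w) (by linarith)
    · linarith [mul_le_mul_of_nonneg_left
        (exp_mul_sub_exp_one_sub_mul_le h0.le h1.le (mem_Ioi.1 hw).le) (hK0 w)]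
  have hβ : 0 < β := by linarith
  have h1' : 0 < 1 - β := sub_pos.2 h1
  rw [h.integral_productKernel hβ h1 hzero hK, integral_const_mul] at hle
  have hres : (2 * β - 1) * residueConst g = β * (1 - β) *
      (residueConst g / (1 - β) + -1 * residueConst g / β) := by
    field_simp
    ring
  have hfe := h.productKernel_neg 0
  rw [neg_zero, exp_zero] at hfe
  rw [show productKernel g 0 = residueConst g by linarith]
  refine le_of_mul_le_mul_left (a := 2 * β - 1) ?_ (by linarith)
  linarith [mul_le_mul_of_nonneg_left hle (mul_pos hβ h1').le]

end TwistedTheta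

end FunctionalEquation

/-! ### The product kernel of a sign character -/

section KernelOfCharacter

open Real MeasureTheory Set

theorem hasDerivAt_two_mul_sinh_half (u : ℝ) :
    HasDerivAt (fun u => 2 * sinh (u / 2)) (cosh (u / 2)) u := by
  convert! (((hasDerivAt_id' u).div_const 2).sinh).const_mul 2 using 1
  ring

theorem bijective_two_mul_sinh_half : Function.Bijective fun u : ℝ => 2 * sinh (u / 2) := by
  refine ⟨fun a b h => ?_, fun y => ?_⟩
  · linarith [sinh_injective (mul_left_cancel₀ two_ne_zero h)]
  · obtain ⟨x, hx⟩ := sinh_surjective (y / 2)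
    refine ⟨2 * x, ?_⟩
    dsimp only
    rw [mul_div_cancel_left₀ _ two_ne_zero, hx, mul_div_cancel₀ _ two_ne_zero]

theorem two_mul_cosh_eq (u : ℝ) : 2 * cosh u = 2 + (2 * sinh (u / 2)) ^ 2 := by
  have h := cosh_two_mul (u / 2)
  rw [cosh_sq, mul_div_cancel₀ _ two_ne_zero] at h
  rw [h]
  ring

theorem abs_cosh_smul_gaussian (b u : ℝ) :
    |cosh (u / 2)| • (exp (-(2 * b)) * exp (-b * (2 * sinh (u / 2)) ^ 2)) =
      exp (-(2 * b) * cosh u) * cosh (u / 2) := by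
  rw [abs_of_pos (cosh_pos _), smul_eq_mul, ← exp_add, mul_comm]
  congr 2
  linear_combination b * two_mul_cosh_eq u

theorem integrable_exp_cosh_mul_cosh_half {b : ℝ} (hb : 0 < b) :
    Integrable fun u => exp (-(2 * b) * cosh u) * cosh (u / 2) := by
  have h := integrableOn_image_iff_integrableOn_abs_deriv_smul MeasurableSet.univ
    (fun u _ => (hasDerivAt_two_mul_sinh_half u).hasDerivWithinAt)
    bijective_two_mul_sinh_half.1.injOn (fun s => exp (-(2 * b)) * exp (-b * s ^ 2))
  simp_rw [abs_cosh_smul_gaussian] at h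
  rw [image_univ_of_surjective bijective_two_mul_sinh_half.2, integrableOn_univ,
    integrableOn_univ] at h
  exact h.1 ((integrable_exp_neg_mul_sq hb).const_mul _)

theorem integral_exp_cosh_mul_cosh_half (b : ℝ) :
    ∫ u, exp (-(2 * b) * cosh u) * cosh (u / 2) = √(π / b) * exp (-(2 * b)) := by
  have h := integral_image_eq_integral_abs_deriv_smul MeasurableSet.univ
    (fun u _ => (hasDerivAt_two_mul_sinh_half u).hasDerivWithinAt)
    bijective_two_mul_sinh_half.1.injOn (fun s => exp (-(2 * b)) * exp (-b * s ^ 2))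
  simp_rw [abs_cosh_smul_gaussian] at h
  rw [image_univ_of_surjective bijective_two_mul_sinh_half.2, setIntegral_univ, setIntegral_univ,
    integral_const_mul, integral_gaussian] at h
  rw [← h, mul_comm]

theorem integrable_exp_neg_mul_cosh {x : ℝ} (hx : 0 < x) :
    Integrable fun u => exp (-x * cosh u) := by
  refine (integrable_exp_cosh_mul_cosh_half (half_pos hx)).mono' (by fun_prop)
    (.of_forall fun u => ?_)
  rw [norm_of_nonneg (exp_pos _).le, mul_div_cancel₀ _ two_ne_zero]
  exact le_mul_of_one_le_right (exp_pos _).le (one_le_cosh _)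

theorem integrable_exp_cosh_mul_exp_half {b : ℝ} (hb : 0 < b) :
    Integrable fun u => exp (-(2 * b) * cosh u) * exp (-u / 2) := by
  refine ((integrable_exp_cosh_mul_cosh_half hb).const_mul 2).mono' (by fun_prop)
    (.of_forall fun u => ?_)
  have hle : exp (-u / 2) ≤ 2 * cosh (u / 2) := by
    rw [cosh_eq, neg_div]
    linarith [exp_pos (u / 2)]
  rw [norm_of_nonneg (by positivity), mul_left_comm]
  gcongr

-- Only the even part `cosh (u / 2)` of `exp (-u / 2)` contributes.
theorem integral_exp_cosh_mul_exp_half {b : ℝ} (hb : 0 < b) :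
    ∫ u, exp (-(2 * b) * cosh u) * exp (-u / 2) = √(π / b) * exp (-(2 * b)) := by
  have hint := integrable_exp_cosh_mul_exp_half hb
  have hadd := integral_add hint hint.comp_neg
  rw [integral_neg_eq_self (fun u => exp (-(2 * b) * cosh u) * exp (-u / 2)) volume] at hadd
  have heven (u : ℝ) : exp (-(2 * b) * cosh u) * exp (-u / 2) +
      exp (-(2 * b) * cosh (-u)) * exp (-(-u) / 2) =
      2 * (exp (-(2 * b) * cosh u) * cosh (u / 2)) := by
    rw [cosh_neg, neg_neg, cosh_eq (u / 2), neg_div]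
    ring
  simp_rw [heven] at hadd
  rw [integral_const_mul, integral_exp_cosh_mul_cosh_half] at hadd
  linarith

/-- The measure over which `exp (-x * cosh u)` is averaged to give the terms of the product kernel
of a character of parity `κ`: Lebesgue measure for `κ = 0`, where the average is the Bessel function
`2 K₀(x)`, and a point mass otherwise. -/
noncomputable def averagingMeasure (κ : ℕ) (Q : ℝ) : Measure ℝ :=
  if κ = 0 then volume else ENNReal.ofReal Q • Measure.dirac 0

instance (κ : ℕ) (Q : ℝ) : SFinite (averagingMeasure κ Q) := by
  unfold averagingMeasure
  split_ifs <;> infer_instance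

/-- The average of `exp (-x * cosh u)` over `averagingMeasure κ Q`. -/
noncomputable def averagedExp (κ : ℕ) (Q x : ℝ) : ℝ :=
  ∫ u, exp (-x * cosh u) ∂averagingMeasure κ Q

/-- The theta series `∑ f(n) (n t^(1/2))^κ exp(-π t n² / Q²)` at `t = exp p`. For a real primitive
character `f` of parity `κ` and conductor `Q²` its Mellin transform is the completed
`L`-function. -/
noncomputable def twistedThetaSeries (f : ℕ → ℝ) (κ : ℕ) (Q p : ℝ) : ℝ :=
  ∑' n : ℕ+, f n * (n * exp (p / 2)) ^ κ * exp (-π * exp p / Q ^ 2 * (n : ℝ) ^ 2)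

variable (κ : ℕ) {Q : ℝ}

theorem averagingMeasure_ne_zero (hQ : 0 < Q) : averagingMeasure κ Q ≠ 0 := by
  unfold averagingMeasure
  split_ifs
  · exact NeZero.ne _
  · rw [Ne, ← Measure.measure_univ_eq_zero]
    simp [hQ]

theorem integrable_averagingMeasure (Q : ℝ) {x : ℝ} (hx : 0 < x) :
    Integrable (fun u => exp (-x * cosh u)) (averagingMeasure κ Q) := by
  unfold averagingMeasure
  split_ifs
  · exact integrable_exp_neg_mul_cosh hx
  · exact (integrable_dirac (by simp)).smul_measure ENNReal.ofReal_ne_top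

theorem averagedExp_nonneg (Q x : ℝ) : 0 ≤ averagedExp κ Q x :=
  integral_nonneg fun _ => (exp_pos _).le

theorem averagedExp_pos {x : ℝ} (hQ : 0 < Q) (hx : 0 < x) : 0 < averagedExp κ Q x :=
  have : NeZero (averagingMeasure κ Q) := ⟨averagingMeasure_ne_zero κ hQ⟩
  integral_exp_pos (integrable_averagingMeasure κ Q hx)

theorem averagedExp_le (Q : ℝ) {x₀ x : ℝ} (h0 : 0 < x₀) (hx : x₀ ≤ x) :
    averagedExp κ Q x ≤ exp (-x / 2) * averagedExp κ Q (x₀ / 2) := by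
  unfold averagedExp
  rw [← integral_const_mul]
  refine integral_mono (integrable_averagingMeasure κ Q (by linarith))
    ((integrable_averagingMeasure κ Q (by linarith)).const_mul _) fun u => ?_
  dsimp only
  rw [← exp_add, exp_le_exp]
  nlinarith [one_le_cosh u]

theorem summable_averagedExp (Q : ℝ) {y : ℝ} (hy : 0 < y) :
    Summable fun p : ℕ+ × ℕ+ => averagedExp κ Q (y * ((p.1 * p.2 : ℕ) : ℝ)) := by
  have hexp := summable_exp_neg_mul_pnat (a := y / 4) (by positivity)
  refine .of_nonneg_of_le (fun _ => averagedExp_nonneg _ _ _) (fun p => ?_)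
    ((hexp.mul_of_nonneg hexp (fun _ => (exp_pos _).le) (fun _ => (exp_pos _).le)).mul_right
      (averagedExp κ Q (y / 2)))
  have h₁ := one_le_pnat_cast p.1
  have h₂ := one_le_pnat_cast p.2
  have hmul : (p.1 + p.2 : ℝ) ≤ 2 * (p.1 * p.2) := by nlinarith
  calc averagedExp κ Q (y * ((p.1 * p.2 : ℕ) : ℝ))
      ≤ exp (-(y * ((p.1 * p.2 : ℕ) : ℝ)) / 2) * averagedExp κ Q (y / 2) := by
        refine averagedExp_le κ Q hy (le_mul_of_one_le_right hy.le ?_)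
        exact_mod_cast Nat.one_le_iff_ne_zero.2 (mul_ne_zero p.1.ne_zero p.2.ne_zero)
    _ ≤ _ := by
        rw [← exp_add]
        gcongr
        · exact averagedExp_nonneg _ _ _
        · push_cast
          nlinarith

variable {κ}

theorem integrable_exp_cosh_mul_exp_half_pow (hκ : κ = 0 ∨ κ = 1) {b : ℝ} (hb : 0 < b) :
    Integrable fun u => exp (-(2 * b) * cosh u) * exp (-u / 2) ^ κ := by
  rcases hκ with rfl | rfl
  · simpa only [pow_zero, mul_one] using integrable_exp_neg_mul_cosh (by positivity : 0 < 2 * b)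
  · simpa only [pow_one] using integrable_exp_cosh_mul_exp_half hb

theorem integral_exp_cosh_mul_exp_half_pow (hκ : κ = 0 ∨ κ = 1) (hQ : 0 < Q) {b : ℝ} (hb : 0 < b) :
    √(b * Q ^ 2 / π) ^ κ * ∫ u, exp (-(2 * b) * cosh u) * exp (-u / 2) ^ κ =
      averagedExp κ Q (2 * b) := by
  rcases hκ with rfl | rfl
  · simp [averagedExp, averagingMeasure]
  · simp_rw [pow_one]
    rw [integral_exp_cosh_mul_exp_half hb, ← mul_assoc, ← sqrt_mul (by positivity),
      show b * Q ^ 2 / π * (π / b) = Q ^ 2 by field_simp, sqrt_sq hQ.le]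
    simp [averagedExp, averagingMeasure, hQ.le]

-- The substitution `v = u + log (n / (m * Q))` makes the two exponentials of equal size.
theorem exp_mul_twistedThetaTerm (κ : ℕ) (hQ : 0 < Q) (m n : ℕ+) (w u : ℝ) :
    exp (-π * exp (w + (u + log (n / (m * Q)))) * (m : ℝ) ^ 2) *
      ((n * exp ((w - (u + log (n / (m * Q)))) / 2)) ^ κ *
        exp (-π * exp (w - (u + log (n / (m * Q)))) / Q ^ 2 * (n : ℝ) ^ 2)) =
      √(π * (m * n) * exp w / Q * Q ^ 2 / π) ^ κ *
        (exp (-(2 * (π * (m * n) * exp w / Q)) * cosh u) * exp (-u / 2) ^ κ) := by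
  have : (0 : ℝ) < m := Nat.cast_pos.2 m.pos
  have hn : (0 : ℝ) < n := Nat.cast_pos.2 n.pos
  have hlog : exp (log (n / (m * Q))) = n / (m * Q) := exp_log (by positivity)
  set l := log (n / (m * Q))
  have hsqrt : √(π * (m * n) * exp w / Q * Q ^ 2 / π) = n * exp ((w - l) / 2) := by
    rw [exp_half, ← sqrt_sq hn.le, ← sqrt_mul (by positivity)]
    congr 1
    rw [exp_sub, hlog, sqrt_sq hn.le]
    field_simp
  have hpow : (n : ℝ) * exp ((w - (u + l)) / 2) = n * exp ((w - l) / 2) * exp (-u / 2) := by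
    rw [mul_assoc, ← exp_add]
    ring_nf
  have hexp : -π * exp (w + (u + l)) * (m : ℝ) ^ 2 + -π * exp (w - (u + l)) / Q ^ 2 * (n : ℝ) ^ 2 =
      -(2 * (π * (m * n) * exp w / Q)) * cosh u := by
    rw [cosh_eq, exp_add, exp_add, exp_sub, exp_add, hlog, exp_neg]
    field_simp
    ring
  rw [hsqrt, hpow, ← hexp, exp_add (-π * exp (w + (u + l)) * (m : ℝ) ^ 2)]
  ring

theorem integrable_exp_mul_twistedThetaTerm (hκ : κ = 0 ∨ κ = 1) (hQ : 0 < Q) (m n : ℕ+) (w : ℝ) :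
    Integrable fun v => exp (-π * exp (w + v) * (m : ℝ) ^ 2) *
      ((n * exp ((w - v) / 2)) ^ κ * exp (-π * exp (w - v) / Q ^ 2 * (n : ℝ) ^ 2)) := by
  have h := (integrable_exp_cosh_mul_exp_half_pow hκ
    (b := π * (m * n) * exp w / Q) (by positivity)).const_mul
      (√(π * (m * n) * exp w / Q * Q ^ 2 / π) ^ κ)
  simp_rw [← exp_mul_twistedThetaTerm κ hQ m n w] at h
  simpa only [sub_add_cancel] using h.comp_sub_right (log (n / (m * Q)))

theorem integral_exp_mul_twistedThetaTerm (hκ : κ = 0 ∨ κ = 1) (hQ : 0 < Q) (m n : ℕ+) (w : ℝ) :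
    ∫ v, exp (-π * exp (w + v) * (m : ℝ) ^ 2) *
      ((n * exp ((w - v) / 2)) ^ κ * exp (-π * exp (w - v) / Q ^ 2 * (n : ℝ) ^ 2)) =
      averagedExp κ Q (2 * π / Q * exp w * ((m * n : ℕ) : ℝ)) := by
  rw [← integral_add_right_eq_self _ (log (n / (m * Q)))]
  simp_rw [exp_mul_twistedThetaTerm κ hQ m n w]
  rw [integral_const_mul, integral_exp_cosh_mul_exp_half_pow hκ hQ (by positivity)]
  push_cast
  ring_nf

section ProductKernel

variable {f : ℕ → ℝ}

theorem summable_norm_twistedThetaTerm (hf : ∀ n, |f n| ≤ 1) (κ : ℕ) (hQ : 0 < Q) (p : ℝ) :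
    Summable fun n : ℕ+ =>
      ‖f n * (n * exp (p / 2)) ^ κ * exp (-π * exp p / Q ^ 2 * (n : ℝ) ^ 2)‖ := by
  have hd : 0 < π * exp p / Q ^ 2 := by positivity
  have hexp : Summable fun n : ℕ+ => (n : ℝ) ^ κ * exp (-(π * exp p / Q ^ 2) * n) :=
    (Real.summable_pow_mul_exp_neg_nat_mul κ hd).comp_injective PNat.coe_injective
  refine .of_nonneg_of_le (fun _ => norm_nonneg _) (fun n => ?_)
    (hexp.mul_left (exp (p / 2) ^ κ))
  rw [norm_mul, norm_mul, norm_of_nonneg (exp_pos _).le, norm_eq_abs,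
    norm_of_nonneg (by positivity), mul_pow]
  calc |f n| * ((n : ℝ) ^ κ * exp (p / 2) ^ κ) * exp (-π * exp p / Q ^ 2 * (n : ℝ) ^ 2)
      ≤ 1 * ((n : ℝ) ^ κ * exp (p / 2) ^ κ) * exp (-(π * exp p / Q ^ 2) * n) := by
        gcongr ?_ * _ * exp ?_
        · exact hf n
        · rw [neg_mul, neg_div]
          nlinarith [pnat_cast_le_sq n]
    _ = _ := by ring

/-- The `(m, n)` term of the product of the two theta series convolved in `productKernel`. -/
noncomputable def kernelTerm (f : ℕ → ℝ) (κ : ℕ) (Q w : ℝ) (p : ℕ+ × ℕ+) (v : ℝ) : ℝ :=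
  f p.2 * (exp (-π * exp (w + v) * (p.1 : ℝ) ^ 2) *
    ((p.2 * exp ((w - v) / 2)) ^ κ * exp (-π * exp (w - v) / Q ^ 2 * (p.2 : ℝ) ^ 2)))

theorem halfTheta_mul_twistedThetaSeries (hf : ∀ n, |f n| ≤ 1) (κ : ℕ) (hQ : 0 < Q) (w v : ℝ) :
    halfTheta (exp (w + v)) * twistedThetaSeries f κ Q (w - v) =
      ∑' p, kernelTerm f κ Q w p v := by
  have hnorm : Summable fun m : ℕ+ => ‖exp (-π * exp (w + v) * (m : ℝ) ^ 2)‖ := by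
    simpa only [norm_of_nonneg (exp_pos _).le] using summable_halfTheta (exp_pos (w + v))
  rw [halfTheta, twistedThetaSeries, tsum_mul_tsum_of_summable_norm hnorm
    (summable_norm_twistedThetaTerm hf κ hQ (w - v))]
  refine tsum_congr fun p => ?_
  rw [kernelTerm]
  ring

theorem integral_kernelTerm (f : ℕ → ℝ) (hκ : κ = 0 ∨ κ = 1) (hQ : 0 < Q) (w : ℝ) (p : ℕ+ × ℕ+) :
    ∫ v, kernelTerm f κ Q w p v =
      f p.2 * averagedExp κ Q (2 * π / Q * exp w * ((p.1 * p.2 : ℕ) : ℝ)) := by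
  simp_rw [kernelTerm]
  rw [integral_const_mul, integral_exp_mul_twistedThetaTerm hκ hQ]

theorem integral_norm_kernelTerm (f : ℕ → ℝ) (hκ : κ = 0 ∨ κ = 1) (hQ : 0 < Q) (w : ℝ)
    (p : ℕ+ × ℕ+) : ∫ v, ‖kernelTerm f κ Q w p v‖ =
      |f p.2| * averagedExp κ Q (2 * π / Q * exp w * ((p.1 * p.2 : ℕ) : ℝ)) := by
  have hnorm (v : ℝ) : ‖kernelTerm f κ Q w p v‖ = kernelTerm (fun n => |f n|) κ Q w p v := by
    rw [kernelTerm, kernelTerm, norm_mul, norm_eq_abs (f _), norm_of_nonneg (by positivity)]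
  simp_rw [hnorm]
  exact integral_kernelTerm _ hκ hQ w p

theorem productKernel_twistedThetaSeries (hf : ∀ n, |f n| ≤ 1) (hκ : κ = 0 ∨ κ = 1) (hQ : 0 < Q)
    (w : ℝ) : productKernel (twistedThetaSeries f κ Q) w =
      ∑' p : ℕ+ × ℕ+, f p.2 * averagedExp κ Q (2 * π / Q * exp w * ((p.1 * p.2 : ℕ) : ℝ)) := by
  have hsum : Summable fun p => ∫ v, ‖kernelTerm f κ Q w p v‖ := by
    simp_rw [integral_norm_kernelTerm f hκ hQ]
    exact .of_nonneg_of_le (fun p => mul_nonneg (abs_nonneg _) (averagedExp_nonneg _ _ _))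
      (fun p => mul_le_of_le_one_left (averagedExp_nonneg _ _ _) (hf _))
      (summable_averagedExp κ Q (y := 2 * π / Q * exp w) (by positivity))
  have hint (p : ℕ+ × ℕ+) : Integrable (kernelTerm f κ Q w p) :=
    (integrable_exp_mul_twistedThetaTerm hκ hQ p.1 p.2 w).const_mul _
  simp_rw [productKernel, halfTheta_mul_twistedThetaSeries hf κ hQ,
    ← integral_kernelTerm f hκ hQ w]
  exact (hasSum_integral_of_summable_integral_norm hint hsum).tsum_eq.symm

end ProductKernel

theorem squareSumAverage_averagingMeasure (ρ : ℕ → ℝ) (κ : ℕ) (Q : ℝ) {c : ℝ} (hc : 0 < c)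
    (w : ℝ) : squareSumAverage (averagingMeasure κ Q) ρ c w =
      ∑' (a : ℕ+) (j : ℕ+), ENNReal.ofReal (ρ a) *
        ENNReal.ofReal (averagedExp κ Q (c * exp w * ((j ^ 2 * a : ℕ) : ℝ))) := by
  unfold squareSumAverage squareSum
  rw [lintegral_tsum fun a => (Measurable.tsum fun j => by fun_prop).aemeasurable]
  refine tsum_congr fun a => ?_
  rw [lintegral_tsum fun j => (by fun_prop)]
  refine tsum_congr fun j => ?_
  have : 0 < ((j ^ 2 * a : ℕ) : ℝ) := Nat.cast_pos.2 (Nat.mul_pos (pow_pos j.pos 2) a.pos)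
  rw [lintegral_const_mul _ (by fun_prop), averagedExp, ofReal_integral_eq_lintegral_ofReal
    (integrable_averagingMeasure κ Q (by positivity)) (.of_forall fun _ => (exp_pos _).le)]
  congr 1
  refine lintegral_congr fun u => ?_
  congr 2
  ring

theorem squareSumAverage_averagingMeasure_pos {ρ : ℕ → ℝ} (hρ : 0 < ρ 1) (κ : ℕ) {c : ℝ}
    (hQ : 0 < Q) (hc : 0 < c) (w : ℝ) : 0 < squareSumAverage (averagingMeasure κ Q) ρ c w := by
  rw [squareSumAverage_averagingMeasure ρ κ Q hc]
  refine lt_of_lt_of_le ?_ ((ENNReal.le_tsum (1 : ℕ+)).trans (ENNReal.le_tsum (1 : ℕ+)))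
  refine ENNReal.mul_pos ?_ ?_
  · simpa using hρ
  · simpa using averagedExp_pos κ hQ (by positivity)

/-- The product kernel of the theta series of a sign character `f`, regrouped as a nonnegative
combination, with weights `μ² * f`, of sums over squares; see `ofReal_productKernel`. -/
noncomputable def squareSumKernel (f : ArithmeticFunction ℝ) (κ : ℕ) (Q w : ℝ) : ENNReal :=
  squareSumAverage (averagingMeasure κ Q) (squarefreeIndicator * f : ArithmeticFunction ℝ)
    (2 * π / Q) w

theorem measurable_squareSumKernel (f : ArithmeticFunction ℝ) (κ : ℕ) (Q : ℝ) :
    Measurable (squareSumKernel f κ Q) :=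
  measurable_squareSumAverage _ _ _

theorem squareSumKernel_comparison (f : ArithmeticFunction ℝ) (κ : ℕ) {B : ℝ} (hQ : 0 < Q)
    (hB0 : 0 ≤ B) (hB : B ≤ 0.26)
    (hBlog : ∀ x, 2 / Q ≤ x → x ≤ 0.22 → B ≤ 5 * x / log (2 / x) ^ 2) :
    2 * squareSumKernel f κ Q (log 2) + ENNReal.ofReal (2 * B) *
      ∫⁻ w in Ioi (0 : ℝ), squareSumKernel f κ Q w * ENNReal.ofReal (exp w) ≤
        squareSumKernel f κ Q (-log 2) :=
  squareSumAverage_comparison _ _ hQ hB0 hB hBlog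

theorem squareSumKernel_comparison_self (f : ArithmeticFunction ℝ) (κ : ℕ) {B : ℝ} (hQ : 0 < Q)
    (hB0 : 0 ≤ B) (hB : B ≤ 2 * π / Q) :
    ENNReal.ofReal B *
      ∫⁻ w in Ioi (0 : ℝ), squareSumKernel f κ Q w * ENNReal.ofReal (exp w) ≤
        squareSumKernel f κ Q 0 :=
  squareSumAverage_comparison_self _ _ (by positivity) hB0 hB

section IsSignCharacter

variable {f : ArithmeticFunction ℝ} (hf : IsSignCharacter f) (hκ : κ = 0 ∨ κ = 1) (hQ : 0 < Q)
include hf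

theorem squareSumKernel_pos (κ : ℕ) (hQ : 0 < Q) (w : ℝ) : 0 < squareSumKernel f κ Q w := by
  refine squareSumAverage_averagingMeasure_pos ?_ κ hQ (by positivity) w
  rw [ArithmeticFunction.mul_apply_one, hf.map_one, squarefreeIndicator_apply]
  simp

include hκ hQ

theorem productKernel_nonneg (w : ℝ) : 0 ≤ productKernel (twistedThetaSeries f κ Q) w := by
  rw [productKernel_twistedThetaSeries hf.abs_le_one hκ hQ]
  exact hf.tsum_mul_nonneg (φ := fun N => averagedExp κ Q (2 * π / Q * exp w * (N : ℝ)))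
    (fun _ => averagedExp_nonneg _ _ _) (summable_averagedExp κ Q (by positivity))

theorem ofReal_productKernel (w : ℝ) :
    ENNReal.ofReal (productKernel (twistedThetaSeries f κ Q) w) = squareSumKernel f κ Q w := by
  rw [squareSumKernel, productKernel_twistedThetaSeries hf.abs_le_one hκ hQ,
    squareSumAverage_averagingMeasure _ κ Q (by positivity)]
  exact hf.ofReal_tsum_mul (φ := fun N => averagedExp κ Q (2 * π / Q * exp w * (N : ℝ)))
    (fun _ => averagedExp_nonneg _ _ _) (summable_averagedExp κ Q (by positivity))

theorem measurable_productKernel : Measurable (productKernel (twistedThetaSeries f κ Q)) := by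
  convert (measurable_squareSumKernel f κ Q).ennreal_toReal using 2 with w
  rw [← ofReal_productKernel hf hκ hQ, ENNReal.toReal_ofReal (productKernel_nonneg hf hκ hQ w)]

theorem lintegral_productKernel :
    ∫⁻ w in Ioi (0 : ℝ), ENNReal.ofReal (productKernel (twistedThetaSeries f κ Q) w * exp w) =
      ∫⁻ w in Ioi (0 : ℝ), squareSumKernel f κ Q w * ENNReal.ofReal (exp w) := by
  refine lintegral_congr fun w => ?_
  rw [ENNReal.ofReal_mul (productKernel_nonneg hf hκ hQ w), ofReal_productKernel hf hκ hQ]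

theorem integrableOn_productKernel {B w₀ : ℝ} (hB : 0 < B)
    (h : ENNReal.ofReal B *
      ∫⁻ w in Ioi (0 : ℝ), squareSumKernel f κ Q w * ENNReal.ofReal (exp w) ≤
        squareSumKernel f κ Q w₀) :
    IntegrableOn (fun w => productKernel (twistedThetaSeries f κ Q) w * exp w) (Ioi 0) := by
  refine ⟨((measurable_productKernel hf hκ hQ).mul (by fun_prop)).aestronglyMeasurable, ?_⟩
  rw [hasFiniteIntegral_iff_ofReal (.of_forall fun w =>
    mul_nonneg (productKernel_nonneg hf hκ hQ w) (exp_pos _).le),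
    lintegral_productKernel hf hκ hQ, ← not_le, top_le_iff]
  intro htop
  rw [htop, ENNReal.mul_top (by simpa using hB), ← ofReal_productKernel hf hκ hQ w₀] at h
  exact ENNReal.ofReal_ne_top (top_le_iff.1 h)

theorem ofReal_integral_productKernel
    (h : IntegrableOn (fun w => productKernel (twistedThetaSeries f κ Q) w * exp w) (Ioi 0)) :
    ENNReal.ofReal (∫ w in Ioi 0, productKernel (twistedThetaSeries f κ Q) w * exp w) =
      ∫⁻ w in Ioi (0 : ℝ), squareSumKernel f κ Q w * ENNReal.ofReal (exp w) := by
  rw [← lintegral_productKernel hf hκ hQ, ofReal_integral_eq_lintegral_ofReal h]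
  exact .of_forall fun w => mul_nonneg (productKernel_nonneg hf hκ hQ w) (exp_pos _).le

theorem integral_productKernel_pos
    (h : IntegrableOn (fun w => productKernel (twistedThetaSeries f κ Q) w * exp w) (Ioi 0)) :
    0 < ∫ w in Ioi 0, productKernel (twistedThetaSeries f κ Q) w * exp w := by
  rw [← ENNReal.ofReal_pos, ofReal_integral_productKernel hf hκ hQ h,
    setLIntegral_pos_iff (by exact (measurable_squareSumKernel f κ Q).mul (by fun_prop)),
    Function.support_eq_univ fun w => mul_ne_zero (squareSumKernel_pos hf κ hQ w).ne'
      (ENNReal.ofReal_pos.2 (exp_pos w)).ne']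
  simp

theorem TwistedTheta.le_mul_one_sub_of_sign_one {β B : ℝ}
    (h : TwistedTheta (twistedThetaSeries f κ Q) 1) (h0 : 0 < β) (h1 : β < 1)
    (hzero : ∫ p, twistedThetaSeries f κ Q p * exp (β / 2 * p) = 0)
    (hB0 : 0 < B) (hB : B ≤ 0.26)
    (hBlog : ∀ x, 2 / Q ≤ x → x ≤ 0.22 → B ≤ 5 * x / log (2 / x) ^ 2) : B ≤ β * (1 - β) := by
  have hK0 := productKernel_nonneg hf hκ hQ
  have hcomp := squareSumKernel_comparison f κ hQ hB0.le hB hBlog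
  have hK := integrableOn_productKernel hf hκ hQ (mul_pos two_pos hB0) (le_add_self.trans hcomp)
  have hpos := integral_productKernel_pos hf hκ hQ hK
  rw [← ofReal_integral_productKernel hf hκ hQ hK, ← ofReal_productKernel hf hκ hQ,
    ← ofReal_productKernel hf hκ hQ, ← ENNReal.ofReal_mul (by positivity),
    ← ENNReal.ofReal_ofNat, ← ENNReal.ofReal_mul (by positivity),
    ← ENNReal.ofReal_add (mul_nonneg two_pos.le (hK0 _)) (by positivity),
    ENNReal.ofReal_le_ofReal_iff (hK0 _)] at hcomp
  exact le_of_mul_le_mul_right (by linarith [h.productKernel_sub_le h0 h1 hzero hK hK0]) hpos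

theorem TwistedTheta.le_mul_one_sub_of_sign_neg_one {β B : ℝ}
    (h : TwistedTheta (twistedThetaSeries f κ Q) (-1)) (h0 : 1 / 2 < β) (h1 : β < 1)
    (hzero : ∫ p, twistedThetaSeries f κ Q p * exp (β / 2 * p) = 0)
    (hB0 : 0 < B) (hB : B ≤ 2 * π / Q) : B ≤ β * (1 - β) := by
  have hK0 := productKernel_nonneg hf hκ hQ
  have hcomp := squareSumKernel_comparison_self f κ hQ hB0.le hB
  have hK := integrableOn_productKernel hf hκ hQ hB0 hcomp
  have hpos := integral_productKernel_pos hf hκ hQ hK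
  rw [← ofReal_integral_productKernel hf hκ hQ hK, ← ofReal_productKernel hf hκ hQ,
    ← ENNReal.ofReal_mul hB0.le, ENNReal.ofReal_le_ofReal_iff (hK0 _)] at hcomp
  exact le_of_mul_le_mul_right (hcomp.trans (h.productKernel_zero_le h0 h1 hzero hK hK0)) hpos

end IsSignCharacter

theorem mul_log_sq_le {x y : ℝ} (hx : 1 ≤ x) (hxy : x ≤ y) : x * log x ^ 2 ≤ y * log y ^ 2 := by
  have := log_nonneg hx
  gcongr
  linarith

theorem sqrt_mul_log_sq (x : ℝ) (hx : 0 ≤ x) : √x * log x ^ 2 = 4 * (√x * log √x ^ 2) := by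
  rw [log_sqrt hx]
  ring

theorem le_log_of_thirty_eight_le {q : ℝ} (hq : 38 ≤ q) : 29 / 8 ≤ log q := by
  rw [le_log_iff_exp_le (by linarith)]
  refine le_trans ?_ hq
  exact_mod_cast exp_div_le (y := 38) (by norm_num) (m := 29) (n := 8) (by norm_num) (by norm_num)

section Bound

variable {f : ArithmeticFunction ℝ} {q β : ℝ}

theorem TwistedTheta.le_of_sign_one (hf : IsSignCharacter f) (hκ : κ = 0 ∨ κ = 1) (hq : 1 < q)
    (h : TwistedTheta (twistedThetaSeries f κ √q) 1) (h0 : 0 < β) (h1 : β < 1)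
    (hzero : ∫ p, twistedThetaSeries f κ √q p * exp (β / 2 * p) = 0) :
    β ≤ 1 - 40 / (√q * log q ^ 2) := by
  have hQ : 0 < √q := sqrt_pos.2 (by linarith)
  have hlog : 0 < log q := log_pos hq
  set δ := 40 / (√q * log q ^ 2)
  have hδ0 : 0 < δ := by positivity
  have hB := TwistedTheta.le_mul_one_sub_of_sign_one hf hκ hQ h h0 h1 hzero (B := min 0.26 δ)
    (lt_min (by norm_num) hδ0) (min_le_left _ _) fun x hx hx' => by
      have hx0 : 0 < x := lt_of_lt_of_le (by positivity) hx
      have hy1 : 1 < 2 / x := by rw [lt_div_iff₀ hx0]; linarith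
      have hyQ : 2 / x ≤ √q := by rwa [div_le_comm₀ hx0 hQ]
      have hy0 := log_pos hy1
      calc min 0.26 δ ≤ 40 / (4 * (√q * log √q ^ 2)) := by
            rw [← sqrt_mul_log_sq q (by linarith)]
            exact min_le_right _ _
        _ ≤ 40 / (4 * (2 / x * log (2 / x) ^ 2)) := by
            gcongr 40 / (4 * ?_)
            exact mul_log_sq_le hy1.le hyQ
        _ = 5 * x / log (2 / x) ^ 2 := by field_simp; norm_num
  rcases min_le_iff.1 hB with hle | hle
  · nlinarith [sq_nonneg (β - 1 / 2)]
  · nlinarith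

theorem TwistedTheta.le_of_sign_neg_one (hf : IsSignCharacter f) (hκ : κ = 0 ∨ κ = 1) (hq : 38 ≤ q)
    (h : TwistedTheta (twistedThetaSeries f κ √q) (-1)) (h1 : β < 1)
    (hzero : ∫ p, twistedThetaSeries f κ √q p * exp (β / 2 * p) = 0) :
    β ≤ 1 - 40 / (√q * log q ^ 2) := by
  have hlog := le_log_of_thirty_eight_le hq
  have hlog_sq : 841 / 64 ≤ log q ^ 2 := by nlinarith
  have hsqrt : 6.16 ≤ √q := le_sqrt_of_sq_le (by linarith)
  have hQ : 0 < √q := by linarith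
  set δ := 40 / (√q * log q ^ 2) with hδ
  have hδ0 : 0 < δ := by positivity
  have hδ_half : δ < 1 / 2 := by
    rw [hδ, div_lt_iff₀ (by positivity)]
    nlinarith
  have hδ_pi : δ ≤ 2 * π / √q := by
    rw [hδ, ← div_div, div_right_comm]
    gcongr
    rw [div_le_iff₀ (by positivity)]
    nlinarith [pi_gt_three]
  by_contra! hβ
  have := TwistedTheta.le_mul_one_sub_of_sign_neg_one hf hκ hQ h (by linarith) h1 hzero hδ0 hδ_pi
  nlinarith

theorem TwistedTheta.le_of_integral_eq_zero (hf : IsSignCharacter f) (hκ : κ = 0 ∨ κ = 1)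
    (hq : 1 < q) {W : ℝ} (h : TwistedTheta (twistedThetaSeries f κ √q) W) (hW : q < 38 → W = 1)
    (h0 : 0 < β) (h1 : β < 1) (hzero : ∫ p, twistedThetaSeries f κ √q p * exp (β / 2 * p) = 0) :
    β ≤ 1 - 40 / (√q * log q ^ 2) := by
  rcases h.sign with rfl | rfl
  · exact TwistedTheta.le_of_sign_one hf hκ hq h h0 h1 hzero
  · have hq38 : 38 ≤ q := by
      by_contra! hlt
      norm_num at hW
      linarith
    exact TwistedTheta.le_of_sign_neg_one hf hκ hq38 h h1 hzero

end Bound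

end KernelOfCharacter

/-! ### Theta series of primitive characters -/

section ThetaOfPrimitiveCharacter

open Real Complex

/-- Mathlib's even or odd Hurwitz theta kernel, according to the parity `κ`. -/
noncomputable def hurwitzKernel (κ : ℕ) (a x : ℝ) : ℝ :=
  if κ = 0 then HurwitzZeta.evenKernel a x else HurwitzZeta.oddKernel a x

section HurwitzKernel

variable {κ : ℕ} (hκ : κ = 0 ∨ κ = 1) (a : ℝ) {x : ℝ} (hx : 0 < x)
include hκ hx

theorem hasSum_hurwitzKernel :
    HasSum (fun n : ℤ => ((n : ℂ) + a) ^ κ * rexp (-π * (n + a) ^ 2 * x))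
      (hurwitzKernel κ a x) := by
  rcases hκ with rfl | rfl
  · simpa [hurwitzKernel] using hasSum_ofReal.2 (HurwitzZeta.hasSum_int_evenKernel a hx)
  · simpa [hurwitzKernel] using hasSum_ofReal.2 (HurwitzZeta.hasSum_int_oddKernel a hx)

theorem hasSum_hurwitzKernel_dual :
    HasSum (fun n : ℤ => ((x ^ (κ + 1 / 2 : ℝ) : ℝ) : ℂ)⁻¹ *
      ((-I * n) ^ κ * cexp (2 * π * I * a * n) * rexp (-π * n ^ 2 / x)))
      (hurwitzKernel κ a x) := by
  have hx' : 0 < 1 / x := by positivity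
  rcases hκ with rfl | rfl
  · have h := (HurwitzZeta.hasSum_int_cosKernel a hx').mul_left (((x ^ (1 / 2 : ℝ) : ℝ) : ℂ)⁻¹)
    simpa [hurwitzKernel, HurwitzZeta.evenKernel_functional_equation, div_eq_mul_inv] using h
  · have h := (HurwitzZeta.hasSum_int_sinKernel a hx').mul_left (((x ^ (3 / 2 : ℝ) : ℝ) : ℂ)⁻¹)
    have e : ((1 : ℕ) : ℝ) + 1 / 2 = 3 / 2 := by norm_num
    rw [e]
    simpa [hurwitzKernel, HurwitzZeta.oddKernel_functional_equation, div_eq_mul_inv] using h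

omit a in
theorem summable_norm_pow_mul_gaussian :
    Summable fun n : ℤ => ‖(n : ℂ) ^ κ * rexp (-π * n ^ 2 * x)‖ := by
  simpa using (hasSum_hurwitzKernel hκ 0 hx).summable.norm

end HurwitzKernel

section CharacterTheta

variable {q : ℕ} [NeZero q] (χ : DirichletCharacter ℂ q) {κ : ℕ} {y : ℝ}

/-- The theta series `∑ χ(n) n^κ exp (-π n² y / q)` of a Dirichlet character modulo `q`, over all
integers `n`. -/
noncomputable def characterTheta (κ : ℕ) (y : ℝ) : ℂ :=
  ∑' n : ℤ, χ n * ((n : ℂ) ^ κ * rexp (-π * n ^ 2 * (y / q)))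

theorem summable_characterTheta (hκ : κ = 0 ∨ κ = 1) (hy : 0 < y) :
    Summable fun n : ℤ => χ n * ((n : ℂ) ^ κ * rexp (-π * n ^ 2 * (y / q))) := by
  have hq : (0 : ℝ) < q := Nat.cast_pos.2 (NeZero.pos q)
  refine .of_norm_bounded (summable_norm_pow_mul_gaussian hκ (div_pos hy hq)) fun n => ?_
  rw [norm_mul]
  exact mul_le_of_le_one_left (norm_nonneg _) (χ.norm_le_one _)

theorem characterTheta_term_mul_add (hy : 0 < y) (k : ℤ) (b : ℕ) :
    χ (k * q + b : ℤ) * (((k * q + b : ℤ) : ℂ) ^ κ *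
        rexp (-π * (k * q + b : ℤ) ^ 2 * (y / q))) =
      χ b * (q : ℂ) ^ κ *
        (((k : ℂ) + (b / q : ℝ)) ^ κ * rexp (-π * (k + (b / q : ℝ)) ^ 2 * (q * y))) := by
  have hq : (q : ℝ) ≠ 0 := Nat.cast_ne_zero.2 (NeZero.ne q)
  have hqc : (q : ℂ) ≠ 0 := Nat.cast_ne_zero.2 (NeZero.ne q)
  have hres : ((k * q + b : ℤ) : ZMod q) = b := by simp
  have hcast : ((k * q + b : ℤ) : ℂ) = q * ((k : ℂ) + (b / q : ℝ)) := by
    push_cast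
    field_simp
  have hgauss : -π * ((k * q + b : ℤ) : ℝ) ^ 2 * (y / q) =
      -π * (k + (b / q : ℝ)) ^ 2 * (q * y) := by
    push_cast
    field_simp
  rw [hres, hcast, hgauss, mul_pow]
  ring

theorem characterTheta_eq_sum_hurwitzKernel (hκ : κ = 0 ∨ κ = 1) (hy : 0 < y) :
    characterTheta χ κ y =
      ∑ b : Fin q, χ (b : ℕ) * (q : ℂ) ^ κ * hurwitzKernel κ ((b : ℕ) / q) (q * y) := by
  have hx : 0 < q * y := mul_pos (Nat.cast_pos.2 (NeZero.pos q)) hy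
  let e := (Equiv.prodComm (Fin q) ℤ).trans (Int.divModEquiv q).symm
  rw [characterTheta, ← e.tsum_eq]
  refine (e.summable_iff.2 (summable_characterTheta χ hκ hy)).tsum_prod.trans ?_
  rw [tsum_fintype]
  refine Finset.sum_congr rfl fun b _ => ?_
  rw [← (hasSum_hurwitzKernel hκ _ hx).tsum_eq, ← tsum_mul_left]
  exact tsum_congr fun k => characterTheta_term_mul_add χ hy k b

variable (q) in
theorem bijective_fin_natCast : Function.Bijective fun b : Fin q => ((b : ℕ) : ZMod q) := by
  rw [Fintype.bijective_iff_injective_and_card]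
  refine ⟨fun a b h => Fin.ext ?_, by simp [ZMod.card]⟩
  rwa [ZMod.natCast_eq_natCast_iff', Nat.mod_eq_of_lt a.2, Nat.mod_eq_of_lt b.2] at h

variable {χ}

theorem sum_mul_cexp_eq_inv_mul_gaussSum (hχ : χ.IsPrimitive) (n : ℤ) :
    ∑ b : Fin q, χ (b : ℕ) * cexp (2 * π * I * ((b : ℕ) / q : ℝ) * n) =
      χ⁻¹ n * gaussSum χ ZMod.stdAddChar := by
  rw [← gaussSum_mulShift_of_isPrimitive _ hχ, gaussSum]
  refine Fintype.sum_bijective _ (bijective_fin_natCast q) _ _ fun b => ?_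
  have h := ZMod.stdAddChar_coe (N := q) (n * (b : ℕ))
  push_cast at h
  rw [AddChar.mulShift_apply, h]
  congr 2
  push_cast
  ring

theorem characterTheta_functional_equation (hχ : χ.IsPrimitive) (hκ : κ = 0 ∨ κ = 1)
    (hy : 0 < y) :
    characterTheta χ κ y = ((-I) ^ κ * gaussSum χ ZMod.stdAddChar / √q) *
      ((y ^ (κ + 1 / 2 : ℝ) : ℝ) : ℂ)⁻¹ * characterTheta χ⁻¹ κ (1 / y) := by
  have hq : (0 : ℝ) < q := Nat.cast_pos.2 (NeZero.pos q)
  have hqc : (q : ℂ) ≠ 0 := Nat.cast_ne_zero.2 (NeZero.ne q)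
  have hsqrt : ((√q : ℝ) : ℂ) ≠ 0 := ofReal_ne_zero.2 (sqrt_pos.2 hq).ne'
  have hsum := hasSum_sum fun (b : Fin q) (_ : b ∈ Finset.univ) =>
    (hasSum_hurwitzKernel_dual hκ ((b : ℕ) / q) (mul_pos hq hy)).mul_left (χ (b : ℕ) * (q : ℂ) ^ κ)
  have hpow : (((q * y) ^ (κ + 1 / 2 : ℝ) : ℝ) : ℂ) =
      (q : ℂ) ^ κ * √q * (y ^ (κ + 1 / 2 : ℝ) : ℝ) := by
    rw [mul_rpow hq.le hy.le, rpow_add hq, rpow_natCast, ← sqrt_eq_rpow]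
    push_cast
    ring
  rw [characterTheta_eq_sum_hurwitzKernel χ hκ hy, ← hsum.tsum_eq, characterTheta, ← tsum_mul_left]
  refine tsum_congr fun n => ?_
  have hgauss : -π * (n : ℝ) ^ 2 / (q * y) = -π * n ^ 2 * (1 / y / q) := by field_simp
  calc _ = (∑ b : Fin q, χ (b : ℕ) * cexp (2 * π * I * ((b : ℕ) / q : ℝ) * n)) *
        ((q : ℂ) ^ κ * ((((q * y) ^ (κ + 1 / 2 : ℝ) : ℝ) : ℂ)⁻¹ *
          ((-I * n) ^ κ * rexp (-π * n ^ 2 / (q * y))))) := by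
        rw [Finset.sum_mul]
        exact Finset.sum_congr rfl fun b _ => by ring
    _ = _ := by
        rw [sum_mul_cexp_eq_inv_mul_gaussSum hχ, hpow, hgauss, mul_pow]
        field_simp

end CharacterTheta

end ThetaOfPrimitiveCharacter

/-! ### Mellin transforms -/

section MellinTransform

open Real Complex MeasureTheory Set

section ExpSubstitution

variable {E : Type*} [NormedAddCommGroup E] [NormedSpace ℝ E] (G : ℝ → E)

theorem integrable_exp_smul_comp_exp_iff :
    Integrable (fun p => rexp p • G (rexp p)) ↔ IntegrableOn G (Ioi 0) := by
  have h := integrableOn_image_iff_integrableOn_abs_deriv_smul MeasurableSet.univ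
    (fun x _ => (Real.hasDerivAt_exp x).hasDerivWithinAt) Real.exp_injective.injOn G
  simpa only [image_univ, Real.range_exp, Real.abs_exp, integrableOn_univ] using h.symm

theorem integral_exp_smul_comp_exp :
    ∫ p, rexp p • G (rexp p) = ∫ t in Ioi 0, G t := by
  have h := integral_image_eq_integral_abs_deriv_smul MeasurableSet.univ
    (fun x _ => (Real.hasDerivAt_exp x).hasDerivWithinAt) Real.exp_injective.injOn G
  simpa only [image_univ, Real.range_exp, Real.abs_exp, setIntegral_univ] using h.symm

end ExpSubstitution

section GammaIntegral

variable {a : ℝ} (ha : 0 < a)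

theorem exp_smul_rpow_mul_exp_neg (a σ p : ℝ) :
    rexp p • (rexp p ^ (σ - 1) * rexp (-(a * rexp p))) =
      rexp (σ * p) * rexp (-a * rexp p) := by
  rw [smul_eq_mul, ← mul_assoc, ← Real.exp_mul, ← Real.exp_add]
  ring_nf

theorem exp_smul_cpow_mul_exp_neg (a : ℝ) (z : ℂ) (p : ℝ) :
    rexp p • (((rexp p : ℝ) : ℂ) ^ (z - 1) * cexp (-(a * (rexp p : ℝ)))) =
      cexp (z * p) * rexp (-a * rexp p) := by
  have hp : ((rexp p : ℝ) : ℂ) ≠ 0 := ofReal_ne_zero.2 (Real.exp_pos p).ne'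
  rw [real_smul, ← mul_assoc, cpow_sub _ _ hp, cpow_one, mul_div_cancel₀ _ hp,
    cpow_def_of_ne_zero hp, ← ofReal_log (Real.exp_pos p).le, Real.log_exp, mul_comm z]
  push_cast
  ring_nf

include ha

theorem integral_exp_mul_exp_neg_exp {σ : ℝ} (hσ : 0 < σ) :
    ∫ p : ℝ, rexp (σ * p) * rexp (-a * rexp p) = (1 / a) ^ σ * Real.Gamma σ := by
  simp_rw [← Real.integral_rpow_mul_exp_neg_mul_Ioi hσ ha, ← integral_exp_smul_comp_exp,
    exp_smul_rpow_mul_exp_neg]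

theorem integral_cexp_mul_exp_neg_exp {z : ℂ} (hz : 0 < z.re) :
    ∫ p : ℝ, cexp (z * p) * rexp (-a * rexp p) = (1 / (a : ℂ)) ^ z * Complex.Gamma z := by
  simp_rw [← Complex.integral_cpow_mul_exp_neg_mul_Ioi hz (r := a) ha,
    ← exp_smul_cpow_mul_exp_neg]
  exact integral_exp_smul_comp_exp fun t : ℝ => (t : ℂ) ^ (z - 1) * cexp (-(a * t))

theorem integrable_cexp_mul_exp_neg_exp {z : ℂ} (hz : 0 < z.re) :
    Integrable fun p : ℝ => cexp (z * p) * rexp (-a * rexp p) := by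
  have hreal : Integrable fun p : ℝ => rexp (z.re * p) * rexp (-a * rexp p) := by
    simp_rw [← exp_smul_rpow_mul_exp_neg]
    refine (integrable_exp_smul_comp_exp_iff fun t => t ^ (z.re - 1) * rexp (-(a * t))).2 ?_
    simpa using integrableOn_rpow_mul_exp_neg_mul_rpow (p := 1) (s := z.re - 1) (by linarith)
      one_pos ha
  refine hreal.mono' (by fun_prop) (.of_forall fun p => le_of_eq ?_)
  rw [norm_mul, Complex.norm_exp, norm_real, Real.norm_of_nonneg (Real.exp_pos _).le,
    re_mul_ofReal]

end GammaIntegral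

theorem integrable_tsum_of_summable_integral_norm {α ι E : Type*} [MeasurableSpace α]
    {μ : Measure α} [Countable ι] [NormedAddCommGroup E] [CompleteSpace E] {F : ι → α → E}
    (hF : ∀ i, Integrable (F i) μ) (hs : Summable fun i => ∫ a, ‖F i a‖ ∂μ) :
    Integrable (fun a => ∑' i, F i a) μ := by
  refine ⟨AEStronglyMeasurable.tsum fun i => (hF i).1, ?_⟩
  refine lt_of_le_of_lt (lintegral_mono fun a => enorm_tsum_le_tsum_enorm) ?_
  rw [lintegral_tsum fun i => (hF i).1.enorm]
  simp_rw [← ofReal_integral_norm_eq_lintegral_enorm (hF _)]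
  exact hs.tsum_ofReal_ne_top.lt_top

section Mellin

/-- The `n`th term of `twistedThetaSeries f κ Q p * exp (s p / 2)`, whose integral over `p` is
the `n`th term of the completed Dirichlet series of `f` at `s`. -/
noncomputable def mellinTerm (f : ℕ → ℝ) (κ : ℕ) (Q : ℝ) (s : ℂ) (n : ℕ+) (p : ℝ) : ℂ :=
  f n * (n : ℂ) ^ κ * (cexp ((s + κ) / 2 * p) * rexp (-(π * (n : ℝ) ^ 2 / Q ^ 2) * rexp p))

variable {f : ℕ → ℝ} {κ : ℕ} {Q : ℝ} {s : ℂ}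

theorem ofReal_twistedThetaTerm_mul_cexp (n : ℕ+) (p : ℝ) :
    ((f n * (n * rexp (p / 2)) ^ κ * rexp (-π * rexp p / Q ^ 2 * (n : ℝ) ^ 2) : ℝ) : ℂ) *
      cexp (s / 2 * p) = mellinTerm f κ Q s n p := by
  have hexp : cexp ((s + κ) / 2 * p) = cexp (s / 2 * p) * cexp (p / 2) ^ κ := by
    rw [← Complex.exp_nat_mul, ← Complex.exp_add]
    ring_nf
  rw [mellinTerm, hexp,
    show -π * rexp p / Q ^ 2 * (n : ℝ) ^ 2 = -(π * (n : ℝ) ^ 2 / Q ^ 2) * rexp p by ring]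
  push_cast
  ring

theorem ofReal_twistedThetaSeries_mul_cexp (p : ℝ) :
    (twistedThetaSeries f κ Q p : ℂ) * cexp (s / 2 * p) = ∑' n : ℕ+, mellinTerm f κ Q s n p := by
  simp_rw [← ofReal_twistedThetaTerm_mul_cexp]
  rw [tsum_mul_right, ← ofReal_tsum, twistedThetaSeries]

theorem norm_mellinTerm (n : ℕ+) (p : ℝ) :
    ‖mellinTerm f κ Q s n p‖ = |f n| * (n : ℝ) ^ κ *
      (rexp (((s + κ) / 2).re * p) * rexp (-(π * (n : ℝ) ^ 2 / Q ^ 2) * rexp p)) := by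
  rw [mellinTerm, norm_mul, norm_mul, norm_mul, norm_pow, norm_real, Complex.norm_natCast,
    Complex.norm_exp, norm_real, Real.norm_of_nonneg (Real.exp_pos _).le, re_mul_ofReal,
    Real.norm_eq_abs]

theorem natCast_pow_mul_one_div_cpow (κ : ℕ) (hQ : 0 < Q) (s : ℂ) (n : ℕ+) :
    (n : ℂ) ^ κ * (1 / ((π * (n : ℝ) ^ 2 / Q ^ 2 : ℝ) : ℂ)) ^ ((s + κ) / 2) =
      ((Q ^ 2 / π : ℝ) : ℂ) ^ ((s + κ) / 2) * (n : ℂ) ^ (-s) := by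
  have hn : (0 : ℝ) < n := Nat.cast_pos.2 n.pos
  have hn' : ((n : ℝ) : ℂ) ≠ 0 := ofReal_ne_zero.2 hn.ne'
  have hinv : 1 / (π * (n : ℝ) ^ 2 / Q ^ 2) = Q ^ 2 / π * ((n : ℝ)⁻¹) ^ 2 := by field_simp
  rw [← ofReal_one, ← ofReal_div, hinv, ofReal_mul,
    mul_cpow_ofReal_nonneg (by positivity) (by positivity), mul_left_comm]
  congr 1
  rw [cpow_def_of_ne_zero (by simp), ← ofReal_log (by positivity), Real.log_pow, Real.log_inv,
    show (n : ℂ) = ((n : ℝ) : ℂ) by simp, cpow_def_of_ne_zero hn', ← ofReal_log hn.le,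
    ← cpow_natCast, cpow_def_of_ne_zero hn', ← ofReal_log hn.le, ← Complex.exp_add]
  congr 1
  push_cast
  ring

variable (hQ : 0 < Q)
include hQ

theorem pi_mul_sq_div_sq_pos (n : ℕ+) : 0 < π * (n : ℝ) ^ 2 / Q ^ 2 := by
  have : (0 : ℝ) < n := Nat.cast_pos.2 n.pos
  positivity

theorem integrable_mellinTerm (hs : 0 < s.re) (n : ℕ+) : Integrable (mellinTerm f κ Q s n) :=
  (integrable_cexp_mul_exp_neg_exp (pi_mul_sq_div_sq_pos hQ n)
    (by rw [div_ofNat_re, add_re, natCast_re]; positivity)).const_mul _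

theorem integral_mellinTerm (hs : 0 < s.re) (n : ℕ+) :
    ∫ p, mellinTerm f κ Q s n p =
      ((Q ^ 2 / π : ℝ) : ℂ) ^ ((s + κ) / 2) * Complex.Gamma ((s + κ) / 2) *
        (f n * (n : ℂ) ^ (-s)) := by
  simp_rw [mellinTerm]
  rw [integral_const_mul, integral_cexp_mul_exp_neg_exp (pi_mul_sq_div_sq_pos hQ n)
    (by rw [div_ofNat_re, add_re, natCast_re]; positivity)]
  linear_combination
    (f n : ℂ) * Complex.Gamma ((s + κ) / 2) * natCast_pow_mul_one_div_cpow κ hQ s n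

theorem integral_norm_mellinTerm (hs : 0 < s.re) (n : ℕ+) :
    ∫ p, ‖mellinTerm f κ Q s n p‖ =
      |f n| * ((Q ^ 2 / π) ^ ((s + κ) / 2).re * Real.Gamma ((s + κ) / 2).re *
        (n : ℝ) ^ (-s.re)) := by
  have hre : ((s + κ) / 2).re = (s.re + κ) / 2 := by rw [div_ofNat_re, add_re, natCast_re]
  simp_rw [norm_mellinTerm, hre]
  rw [integral_const_mul, integral_exp_mul_exp_neg_exp (pi_mul_sq_div_sq_pos hQ n)
    (by positivity)]
  have hpow : (n : ℝ) ^ κ * (1 / (π * (n : ℝ) ^ 2 / Q ^ 2)) ^ ((s.re + κ) / 2) =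
      (Q ^ 2 / π) ^ ((s.re + κ) / 2) * (n : ℝ) ^ (-s.re) := by
    have h := natCast_pow_mul_one_div_cpow κ hQ (s.re : ℂ) n
    have hexp : ((s.re : ℂ) + κ) / 2 = (((s.re + κ) / 2 : ℝ) : ℂ) := by push_cast; rfl
    rw [hexp, ← ofReal_one, ← ofReal_div, ← ofReal_cpow (by positivity),
      ← ofReal_cpow (by positivity), ← ofReal_neg, ← ofReal_natCast,
      ← ofReal_cpow (Nat.cast_nonneg _)] at h
    exact_mod_cast h
  linear_combination |f n| * Real.Gamma ((s.re + κ) / 2) * hpow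

variable (hf : ∀ n, |f n| ≤ 1)
include hf

theorem summable_integral_norm_mellinTerm (hs : 1 < s.re) :
    Summable fun n : ℕ+ => ∫ p, ‖mellinTerm f κ Q s n p‖ := by
  have hs0 : 0 < s.re := one_pos.trans hs
  have hG : 0 < Real.Gamma ((s + κ) / 2).re :=
    Real.Gamma_pos_of_pos (by rw [div_ofNat_re, add_re, natCast_re]; positivity)
  have hzeta : Summable fun n : ℕ+ => (n : ℝ) ^ (-s.re) :=
    (Real.summable_nat_rpow.2 (by linarith)).comp_injective PNat.coe_injective
  refine .of_nonneg_of_le (fun n => integral_nonneg fun _ => norm_nonneg _) (fun n => ?_)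
    (hzeta.mul_left ((Q ^ 2 / π) ^ ((s + κ) / 2).re * Real.Gamma ((s + κ) / 2).re))
  rw [integral_norm_mellinTerm hQ hs0]
  exact mul_le_of_le_one_left (by positivity) (hf n)

theorem integrable_twistedThetaSeries_mul_cexp (hs : 1 < s.re) :
    Integrable fun p : ℝ => (twistedThetaSeries f κ Q p : ℂ) * cexp (s / 2 * p) := by
  simp_rw [ofReal_twistedThetaSeries_mul_cexp]
  exact integrable_tsum_of_summable_integral_norm
    (integrable_mellinTerm hQ (one_pos.trans hs)) (summable_integral_norm_mellinTerm hQ hf hs)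

theorem integral_twistedThetaSeries_mul_cexp (hs : 1 < s.re) :
    ∫ p : ℝ, (twistedThetaSeries f κ Q p : ℂ) * cexp (s / 2 * p) =
      ((Q ^ 2 / π : ℝ) : ℂ) ^ ((s + κ) / 2) * Complex.Gamma ((s + κ) / 2) *
        ∑' n : ℕ+, f n * (n : ℂ) ^ (-s) := by
  have hs0 : 0 < s.re := one_pos.trans hs
  simp_rw [ofReal_twistedThetaSeries_mul_cexp]
  rw [← integral_tsum_of_summable_integral_norm (integrable_mellinTerm hQ hs0)
    (summable_integral_norm_mellinTerm hQ hf hs), ← tsum_mul_left]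
  exact tsum_congr fun n => integral_mellinTerm hQ hs0 n

theorem integrable_twistedThetaSeries_mul_exp {σ : ℝ} (hσ : 1 / 2 < σ) :
    Integrable fun p => twistedThetaSeries f κ Q p * rexp (σ * p) := by
  have h := integrable_twistedThetaSeries_mul_cexp (κ := κ) hQ hf
    (s := ((2 * σ : ℝ) : ℂ)) (by rw [ofReal_re]; linarith)
  refine h.re.congr (.of_forall fun p => ?_)
  have hexp : ((2 * σ : ℝ) : ℂ) / 2 * p = ((σ * p : ℝ) : ℂ) := by push_cast; ring
  simp only [hexp, ← ofReal_exp, ← ofReal_mul]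
  rfl

end Mellin

end MellinTransform

/-! ### The L-function as a Mellin transform -/

section LFunction

open Real Complex MeasureTheory Set

section LaplaceTransform

variable {g : ℝ → ℝ}

theorem exp_mul_le_exp_mul_add_exp_mul {a b c : ℝ} (hac : a ≤ c) (hcb : c ≤ b) (p : ℝ) :
    rexp (c * p) ≤ rexp (a * p) + rexp (b * p) := by
  rcases le_total 0 p with hp | hp
  · linarith [Real.exp_le_exp.2 (mul_le_mul_of_nonneg_right hcb hp), Real.exp_pos (a * p)]
  · linarith [Real.exp_le_exp.2 (mul_le_mul_of_nonpos_right hac hp), Real.exp_pos (b * p)]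

theorem integrable_mul_exp_of_le_of_le {a b c : ℝ}
    (ha : Integrable fun p => g p * rexp (a * p)) (hb : Integrable fun p => g p * rexp (b * p))
    (hac : a ≤ c) (hcb : c ≤ b) : Integrable fun p => g p * rexp (c * p) := by
  have hmeas : AEStronglyMeasurable fun p => g p * rexp (c * p) := by
    refine (ha.1.mul (g := fun p => rexp ((c - a) * p)) (by fun_prop)).congr
      (.of_forall fun p => ?_)
    simp only [Pi.mul_apply]
    rw [mul_assoc, ← Real.exp_add, ← add_mul, add_sub_cancel]
  refine (ha.abs.add hb.abs).mono' hmeas (.of_forall fun p => ?_)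
  simp only [Pi.add_apply, Real.norm_eq_abs, abs_mul, Real.abs_exp]
  rw [← mul_add]
  exact mul_le_mul_of_nonneg_left (exp_mul_le_exp_mul_add_exp_mul hac hcb p) (abs_nonneg _)

theorem abs_mul_exp_mul_le {a c : ℝ} (h : |c - a| ≤ 1) (p : ℝ) :
    |p| * rexp (c * p) ≤ rexp ((a - 2) * p) + rexp ((a + 2) * p) := by
  obtain ⟨hl, hr⟩ := abs_le.1 h
  have hp : |p| ≤ rexp |p| := by linarith [Real.add_one_le_exp |p|]
  calc |p| * rexp (c * p) ≤ rexp |p| * rexp (c * p) := by gcongr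
    _ = rexp (|p| + c * p) := (Real.exp_add _ _).symm
    _ ≤ _ := by
      rcases abs_choice p with hp | hp <;> rw [hp]
      · rw [show p + c * p = (c + 1) * p by ring]
        exact exp_mul_le_exp_mul_add_exp_mul (by linarith) (by linarith) p
      · rw [show -p + c * p = (c - 1) * p by ring]
        exact exp_mul_le_exp_mul_add_exp_mul (by linarith) (by linarith) p

theorem differentiable_integral_mul_cexp (hg : ∀ σ : ℝ, Integrable fun p => g p * rexp (σ * p)) :
    Differentiable ℂ fun s : ℂ => ∫ p : ℝ, (g p : ℂ) * cexp (s * p) := by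
  intro s₀
  have hgm : AEStronglyMeasurable fun p => (g p : ℂ) :=
    continuous_ofReal.comp_aestronglyMeasurable (by simpa using (hg 0).1)
  have hnorm : ∀ (s : ℂ) (p : ℝ), ‖cexp (s * p)‖ = rexp (s.re * p) := fun s p => by
    rw [Complex.norm_exp, re_mul_ofReal]
  refine (hasDerivAt_integral_of_dominated_loc_of_deriv_le (Metric.ball_mem_nhds s₀ one_pos)
    (F' := fun s p => (g p : ℂ) * (cexp (s * p) * p))
    (bound := fun p => |g p * rexp ((s₀.re - 2) * p)| + |g p * rexp ((s₀.re + 2) * p)|)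
    (.of_forall fun s => hgm.mul (by fun_prop)) ?_ (hgm.mul (by fun_prop)) ?_
    ((hg _).abs.add (hg _).abs) ?_).2.differentiableAt
  · refine (hg s₀.re).mono (hgm.mul (by fun_prop)) (.of_forall fun p => le_of_eq ?_)
    rw [Pi.mul_apply, norm_mul, norm_mul, hnorm, norm_real,
      Real.norm_of_nonneg (Real.exp_pos _).le]
  · refine .of_forall fun p s hs => ?_
    have hre : |s.re - s₀.re| ≤ 1 := by
      rw [← sub_re]
      exact (abs_re_le_norm _).trans (mem_ball_iff_norm.1 hs).le
    rw [norm_mul, norm_mul, hnorm, norm_real, norm_real, Real.norm_eq_abs, Real.norm_eq_abs,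
      abs_mul, abs_mul, Real.abs_exp, Real.abs_exp, ← mul_add, mul_comm (rexp _)]
    exact mul_le_mul_of_nonneg_left (abs_mul_exp_mul_le hre p) (abs_nonneg _)
  · exact .of_forall fun p s _ => (hasDerivAt_mul_const (p : ℂ)).cexp.const_mul _

theorem TwistedTheta.of_integrable {W : ℝ} (hW : W = 1 ∨ W = -1)
    (hsymm : ∀ p, g (-p) = W * rexp (p / 2) * g p)
    (hint : ∀ σ : ℝ, 1 / 2 < σ → Integrable fun p => g p * rexp (σ * p)) :
    TwistedTheta g W := by
  refine ⟨hW, fun σ => ?_, hsymm⟩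
  have hneg : Integrable fun p => g p * rexp ((-|σ| - 1) * p) := by
    refine ((hint (1 / 2 - (-|σ| - 1)) (by linarith [abs_nonneg σ])).const_mul W).comp_neg.congr
      (.of_forall fun p => ?_)
    have hp := hsymm (-p)
    rw [neg_neg] at hp
    simp only
    rw [hp, show (1 / 2 - (-|σ| - 1)) * -p = -p / 2 + (-|σ| - 1) * p by ring, Real.exp_add]
    ring
  exact integrable_mul_exp_of_le_of_le hneg (hint (|σ| + 1) (by linarith [abs_nonneg σ]))
    (by linarith [neg_abs_le σ]) (by linarith [le_abs_self σ])

end LaplaceTransform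

section RealCoeff

variable {q : ℕ} (χ : DirichletCharacter ℂ q)

/-- The real parts of the values of a Dirichlet character, as an arithmetic function. -/
noncomputable def realCoeff : ArithmeticFunction ℝ :=
  ⟨fun n => if n = 0 then 0 else (χ n).re, if_pos rfl⟩

variable {χ}

theorem realCoeff_apply {n : ℕ} (hn : n ≠ 0) : realCoeff χ n = (χ n).re := if_neg hn

theorem ofReal_realCoeff (hquad : χ.IsQuadratic) {n : ℕ} (hn : n ≠ 0) :
    (realCoeff χ n : ℂ) = χ n := by
  rw [realCoeff_apply hn]
  rcases hquad n with h | h | h <;> simp [h]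

theorem isSignCharacter_realCoeff (hquad : χ.IsQuadratic) : IsSignCharacter (realCoeff χ) where
  map_one := by simp [realCoeff_apply]
  map_mul m n := by
    rcases eq_or_ne m 0 with rfl | hm
    · simp
    rcases eq_or_ne n 0 with rfl | hn
    · simp
    rw [← ofReal_inj, ofReal_mul, ofReal_realCoeff hquad hm, ofReal_realCoeff hquad hn,
      ofReal_realCoeff hquad (mul_ne_zero hm hn), Nat.cast_mul, map_mul]
  eq_zero_or n := by
    rcases eq_or_ne n 0 with rfl | hn
    · simp
    rw [realCoeff_apply hn]
    rcases hquad n with h | h | h <;> simp [h]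

variable [NeZero q] {κ : ℕ}

theorem characterTheta_eq_two_mul_tsum (hq : 1 < q) (hκ : κ = 0 ∨ κ = 1)
    (hpar : χ (-1) = (-1) ^ κ) {y : ℝ} (hy : 0 < y) :
    characterTheta χ κ y =
      2 * ∑' n : ℕ+, χ (n : ℕ) * ((n : ℂ) ^ κ * rexp (-π * (n : ℝ) ^ 2 * (y / q))) := by
  have : Fact (1 < q) := ⟨hq⟩
  have heven : Function.Even fun n : ℤ =>
      χ n * ((n : ℂ) ^ κ * rexp (-π * (n : ℝ) ^ 2 * (y / q))) := by
    intro n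
    have hneg : χ ((-n : ℤ) : ZMod q) = (-1) ^ κ * χ n := by
      rw [← hpar, ← map_mul, neg_one_mul, Int.cast_neg]
    have hsq : ((-1 : ℂ) ^ κ) * (-1) ^ κ = 1 := by rw [← mul_pow, neg_one_mul, neg_neg, one_pow]
    simp only [hneg]
    rw [Int.cast_neg, Int.cast_neg, neg_sq, neg_pow (n : ℂ)]
    linear_combination (χ n * ((n : ℂ) ^ κ * rexp (-π * n ^ 2 * (y / q)))) * hsq
  rw [characterTheta, tsum_int_eq_zero_add_two_mul_tsum_pnat heven
    (summable_characterTheta χ hκ hy)]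
  simp [MulChar.map_zero]

theorem ofReal_twistedThetaSeries_realCoeff (hquad : χ.IsQuadratic) (hq : 1 < q)
    (hκ : κ = 0 ∨ κ = 1) (hpar : χ (-1) = (-1) ^ κ) (p : ℝ) :
    (twistedThetaSeries (realCoeff χ) κ √q p : ℂ) =
      cexp (p / 2) ^ κ * characterTheta χ κ (rexp p) / 2 := by
  rw [characterTheta_eq_two_mul_tsum hq hκ hpar (Real.exp_pos p), twistedThetaSeries, ofReal_tsum,
    mul_left_comm, mul_div_cancel_left₀ _ two_ne_zero, ← tsum_mul_left]
  refine tsum_congr fun n => ?_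
  rw [Real.sq_sqrt (Nat.cast_nonneg q),
    show -π * rexp p / q * (n : ℝ) ^ 2 = -π * (n : ℝ) ^ 2 * (rexp p / q) by ring]
  push_cast
  rw [ofReal_realCoeff hquad n.ne_zero]
  ring

theorem ofReal_twistedThetaSeries_realCoeff_neg (hquad : χ.IsQuadratic) (hprim : χ.IsPrimitive)
    (hq : 1 < q) (hκ : κ = 0 ∨ κ = 1) (hpar : χ (-1) = (-1) ^ κ) (p : ℝ) :
    (twistedThetaSeries (realCoeff χ) κ √q (-p) : ℂ) =
      ((-I) ^ κ * gaussSum χ ZMod.stdAddChar / √q) * rexp (p / 2) *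
        twistedThetaSeries (realCoeff χ) κ √q p := by
  have hFE := characterTheta_functional_equation hprim hκ (Real.exp_pos (-p))
  rw [hquad.inv, one_div (rexp _), ← Real.exp_neg, neg_neg, ← Real.exp_mul, ← ofReal_inv,
    ← Real.exp_neg] at hFE
  have hexp : cexp ((-p : ℝ) / 2) ^ κ * (rexp (-(-p * (κ + 1 / 2))) : ℝ) =
      rexp (p / 2) * cexp (p / 2) ^ κ := by
    push_cast
    rw [← Complex.exp_nat_mul, ← Complex.exp_nat_mul, ← Complex.exp_add, ← Complex.exp_add]
    congr 1
    ring
  rw [ofReal_twistedThetaSeries_realCoeff hquad hq hκ hpar, hFE,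
    ofReal_twistedThetaSeries_realCoeff hquad hq hκ hpar]
  linear_combination
    ((-I) ^ κ * gaussSum χ ZMod.stdAddChar / √q) * characterTheta χ κ (rexp p) / 2 * hexp

theorem exists_twistedThetaSeries_ne_zero {f : ArithmeticFunction ℝ} (hf : IsSignCharacter f)
    (hκ : κ = 0 ∨ κ = 1) {Q : ℝ} (hQ : 0 < Q) : ∃ p, twistedThetaSeries f κ Q p ≠ 0 := by
  by_contra! h
  have hpos := squareSumKernel_pos hf κ hQ 0
  rw [← ofReal_productKernel hf hκ hQ, ENNReal.ofReal_pos] at hpos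
  simp [productKernel, h] at hpos

theorem eq_one_or_eq_neg_one_of_forall_neg_eq {g : ℝ → ℝ} {W : ℂ} (hne : ∃ p, g p ≠ 0)
    (h : ∀ p, (g (-p) : ℂ) = W * rexp (p / 2) * g p) : W = 1 ∨ W = -1 := by
  obtain ⟨p, hp⟩ := hne
  have hcancel : (rexp (p / 2) : ℂ) * rexp (-p / 2) = 1 := by
    rw [← ofReal_mul, ← Real.exp_add, neg_div, add_neg_cancel, Real.exp_zero, ofReal_one]
  have htwice := h (-p)
  rw [neg_neg, h p] at htwice
  rw [← sq_eq_one_iff]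
  refine mul_right_cancel₀ (ofReal_ne_zero.2 hp) ?_
  linear_combination -htwice - W ^ 2 * g p * hcancel

theorem exists_twistedTheta (hquad : χ.IsQuadratic) (hprim : χ.IsPrimitive) (hq : 1 < q)
    (hκ : κ = 0 ∨ κ = 1) (hpar : χ (-1) = (-1) ^ κ) :
    ∃ W, TwistedTheta (twistedThetaSeries (realCoeff χ) κ √q) W := by
  have hQ : 0 < √(q : ℝ) := Real.sqrt_pos.2 (Nat.cast_pos.2 (NeZero.pos q))
  have hf := isSignCharacter_realCoeff hquad
  have hFE := ofReal_twistedThetaSeries_realCoeff_neg hquad hprim hq hκ hpar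
  obtain ⟨W, hW, hWχ⟩ : ∃ W : ℝ, (W = 1 ∨ W = -1) ∧
      (-I) ^ κ * gaussSum χ ZMod.stdAddChar / √q = W := by
    rcases eq_one_or_eq_neg_one_of_forall_neg_eq (exists_twistedThetaSeries_ne_zero hf hκ hQ) hFE
      with h | h
    · exact ⟨1, .inl rfl, by rw [h, ofReal_one]⟩
    · exact ⟨-1, .inr rfl, by rw [h, ofReal_neg, ofReal_one]⟩
  refine ⟨W, .of_integrable hW (fun p => ?_)
    fun σ => integrable_twistedThetaSeries_mul_exp hQ hf.abs_le_one⟩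
  have h := hFE p
  rw [hWχ] at h
  exact_mod_cast h

variable {W : ℝ}

theorem LFunction_eq_tsum_realCoeff (hquad : χ.IsQuadratic) {s : ℂ} (hs : 1 < s.re) :
    χ.LFunction s = ∑' n : ℕ+, realCoeff χ n * (n : ℂ) ^ (-s) := by
  have hsupp : Function.support (LSeries.term (fun n => χ n) s) ⊆ Set.range PNat.val := by
    intro n hn
    have hn0 : n ≠ 0 := by
      rintro rfl
      exact hn (LSeries.term_zero _ _)
    exact ⟨⟨n, Nat.pos_of_ne_zero hn0⟩, rfl⟩
  rw [DirichletCharacter.LFunction_eq_LSeries χ hs, LSeries,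
    ← PNat.coe_injective.tsum_eq hsupp]
  refine tsum_congr fun n => ?_
  rw [LSeries.term_of_ne_zero n.ne_zero, ofReal_realCoeff hquad n.ne_zero, cpow_neg,
    div_eq_mul_inv]

theorem ofReal_cpow_ne_zero {x : ℝ} (hx : x ≠ 0) (z : ℂ) : (x : ℂ) ^ z ≠ 0 := fun h =>
  hx (ofReal_eq_zero.1 ((cpow_eq_zero_iff _ _).1 h).1)

theorem LFunction_eq_integral (hquad : χ.IsQuadratic) (hχ : χ ≠ 1)
    (h : TwistedTheta (twistedThetaSeries (realCoeff χ) κ √q) W) (s : ℂ) :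
    (∫ p : ℝ, (twistedThetaSeries (realCoeff χ) κ √q p : ℂ) * cexp (s / 2 * p)) *
      (((q / π : ℝ) : ℂ) ^ (-((s + κ) / 2)) * (Complex.Gamma ((s + κ) / 2))⁻¹) =
        χ.LFunction s := by
  have hq0 : (0 : ℝ) < q := Nat.cast_pos.2 (NeZero.pos q)
  have hqπ : (q / π : ℝ) ≠ 0 := by positivity
  have hshift : Differentiable ℂ fun s : ℂ => (s + κ) / 2 := by fun_prop
  have hdiff : Differentiable ℂ fun s : ℂ =>
      (∫ p : ℝ, (twistedThetaSeries (realCoeff χ) κ √q p : ℂ) * cexp (s / 2 * p)) *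
      (((q / π : ℝ) : ℂ) ^ (-((s + κ) / 2)) * (Complex.Gamma ((s + κ) / 2))⁻¹) :=
    ((differentiable_integral_mul_cexp h.integrable_mul_exp).comp
      (differentiable_id.div_const 2)).mul
      ((hshift.neg.const_cpow (.inl (ofReal_ne_zero.2 hqπ))).mul
        (Complex.differentiable_one_div_Gamma.comp hshift))
  have hnhds : {z : ℂ | 1 < z.re} ∈ nhds 2 :=
    (isOpen_lt continuous_const Complex.continuous_re).mem_nhds
      (show (1 : ℝ) < (2 : ℂ).re by norm_num)
  refine congrFun (AnalyticOnNhd.eq_of_eventuallyEq (z₀ := 2) (fun z _ => hdiff.analyticAt z)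
    (fun z _ => (DirichletCharacter.differentiable_LFunction hχ).analyticAt z) ?_) s
  filter_upwards [hnhds] with z hz
  have : 0 < z.re := one_pos.trans hz
  have hG := Complex.Gamma_ne_zero_of_re_pos (s := (z + κ) / 2)
    (by rw [div_ofNat_re, add_re, natCast_re]; positivity)
  have hc := ofReal_cpow_ne_zero hqπ ((z + κ) / 2)
  rw [integral_twistedThetaSeries_mul_cexp (Real.sqrt_pos.2 hq0)
    (isSignCharacter_realCoeff hquad).abs_le_one hz, LFunction_eq_tsum_realCoeff hquad hz,
    Real.sq_sqrt hq0.le, cpow_neg]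
  field_simp

end RealCoeff

end LFunction

/-! ### Root numbers of small conductors -/

section SignCondition

/-- All pairs of a product modulo `q` over a sublist of the first components and the product of the
corresponding second components. Applied to generators of the units modulo `q` up to squares, paired
with their signs, it tabulates a sign character on representatives of all square classes. -/
def signedProducts (q : ℕ) : List (ℕ × ℤ) → List (ℕ × ℤ)
  | [] => [(1, 1)]
  | (g, e) :: l => signedProducts q l ++ (signedProducts q l).map fun m => (g * m.1 % q, e * m.2)

/-- The sign of `a` modulo `q` read off from a table of signs of square classes: the sign attached
to the first `m` in the table such that `a` is a square times `m`. It is `0` if there is no such `m`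
or if `a` is not a unit. -/
def signOf (q : ℕ) (table : List (ℕ × ℤ)) (a : ℕ) : ℤ :=
  if a.gcd q = 1 then
    match table.find? (fun m => (List.range q).any fun x => x * x * m.1 % q == a) with
    | some m => m.2
    | none => 0
  else 0

/-- Generators of the units modulo `q` up to squares, chosen greedily. -/
def unitGenerators (q : ℕ) : List ℕ :=
  (List.range q).foldl (fun gs a =>
    if a.gcd q = 1 ∧ signOf q (signedProducts q (gs.map fun g => (g, 1))) a = 0
      then a :: gs else gs) []

/-- All lists of signs of a given length. -/
def signLists : ℕ → List (List ℤ)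
  | 0 => [[]]
  | n + 1 => (signLists n).map (1 :: ·) ++ (signLists n).map (-1 :: ·)

/-- The sum of the values of `P` weighted by `c` over the residues modulo `q`. Lists rather than
finsets keep the kernel computation below fast. -/
def weightedSum (q : ℕ) (c : ℕ → ℤ) (P : ℤ → ℤ) : ℤ := ((List.range q).map fun a => c a * P a).sum

/-- Either `c` is trivial on the units that are `1` modulo a proper divisor of `q` (so `c` is not
primitive), or the sum of `c a * B (a / q)` over the residues is positive, where `B` is the second
Bernoulli polynomial if `c` is even and the third if `c` is odd. The weights are
`6 * q ^ 2 * B₂ (a / q)` and `2 * q ^ 3 * B₃ (a / q)`. -/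
def SignCondition (q : ℕ) (c : ℕ → ℤ) : Prop :=
  (∃ d ∈ List.range q, d ∣ q ∧ ∀ a ∈ List.range q, a.gcd q = 1 → a % d = 1 % d → c a = 1) ∨
  (c (q - 1) = 1 ∧ 0 < weightedSum q c fun a => 6 * a ^ 2 - 6 * a * q + q ^ 2) ∨
  (c (q - 1) = -1 ∧ 0 < weightedSum q c fun a => 2 * a ^ 3 - 3 * a ^ 2 * q + a * q ^ 2)

instance (q : ℕ) (c : ℕ → ℤ) : Decidable (SignCondition q c) := by
  unfold SignCondition
  infer_instance

theorem signCondition_signOf : ∀ q ∈ List.range' 3 35, (∀ g ∈ unitGenerators q, g.gcd q = 1) ∧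
    ∀ ε ∈ signLists (unitGenerators q).length,
      (∀ a ∈ List.range q, a.gcd q = 1 →
        signOf q (signedProducts q ((unitGenerators q).zip ε)) a ≠ 0) ∧
      SignCondition q (signOf q (signedProducts q ((unitGenerators q).zip ε))) := by
  decide +kernel

theorem mem_signLists {l : List ℤ} (hl : ∀ e ∈ l, e = 1 ∨ e = -1) : l ∈ signLists l.length := by
  induction l with
  | nil => simp [signLists]
  | cons e l ih =>
    have := ih fun x hx => hl x (List.mem_cons_of_mem _ hx)
    rcases hl e List.mem_cons_self with rfl | rfl <;> simp [signLists, this]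

theorem SignCondition.congr {q : ℕ} {c c' : ℕ → ℤ} (hq : 0 < q) (h : ∀ a < q, c a = c' a)
    (hc : SignCondition q c) : SignCondition q c' := by
  have hsum : ∀ P, weightedSum q c P = weightedSum q c' P := fun P =>
    congrArg List.sum (List.map_congr_left fun a ha => by rw [h a (List.mem_range.1 ha)])
  rw [SignCondition, hsum, hsum, h (q - 1) (by omega)] at hc
  refine hc.imp_left fun ⟨d, hd, hdq, hone⟩ => ⟨d, hd, hdq, fun a ha hag had => ?_⟩
  rw [← h a (List.mem_range.1 ha), hone a ha hag had]

variable {q : ℕ} (χ : DirichletCharacter ℤ q)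

theorem apply_natCast_eq_one_or_neg_one {a : ℕ} (ha : a.gcd q = 1) : χ a = 1 ∨ χ a = -1 :=
  Int.isUnit_iff.1 (((ZMod.isUnit_iff_coprime a q).2 ha).map χ)

theorem apply_eq_of_mem_signedProducts {l : List ℕ} :
    ∀ m ∈ signedProducts q (l.zip (l.map fun g : ℕ => χ g)), χ m.1 = m.2 := by
  induction l with
  | nil => simp [signedProducts]
  | cons g l ih =>
    intro m hm
    simp only [List.map_cons, List.zip_cons_cons, signedProducts, List.mem_append,
      List.mem_map] at hm
    rcases hm with hm | ⟨n, hn, rfl⟩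
    · exact ih m hm
    · rw [ZMod.natCast_mod, Nat.cast_mul, map_mul, ih n hn]

theorem signOf_eq_apply {l : List ℕ} {a : ℕ}
    (ha : a.gcd q = 1 → signOf q (signedProducts q (l.zip (l.map fun g : ℕ => χ g))) a ≠ 0) :
    signOf q (signedProducts q (l.zip (l.map fun g : ℕ => χ g))) a = χ a := by
  by_cases h : a.gcd q = 1
  · have hne := ha h
    rw [signOf, if_pos h] at hne ⊢
    split at hne
    case h_2 => exact absurd rfl hne
    case h_1 m hm =>
      have hany := List.find?_some hm
      obtain ⟨x, -, hx⟩ := List.any_eq_true.1 hany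
      have hχ : χ a = χ x ^ 2 * χ m.1 := by
        rw [← beq_iff_eq.1 hx, ZMod.natCast_mod, Nat.cast_mul, Nat.cast_mul, map_mul, map_mul, sq]
      have hx0 : χ x ^ 2 ≠ 0 := fun h0 => by
        rw [h0, zero_mul] at hχ
        rcases apply_natCast_eq_one_or_neg_one χ h with h1 | h1 <;> omega
      have hx1 : χ x ^ 2 = 1 := by
        have hu : IsUnit (x : ZMod q) := by
          by_contra hu
          exact hx0 (by rw [χ.map_nonunit hu, zero_pow two_ne_zero])
        exact Int.isUnit_sq (hu.map χ)
      rw [hχ, hx1, one_mul, apply_eq_of_mem_signedProducts χ m (List.mem_of_find?_eq_some hm)]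
  · rw [signOf, if_neg h, χ.map_nonunit (mt (ZMod.isUnit_iff_coprime a q).1 h)]

/- The values of `χ` on the generators form one of the lists of signs that were enumerated, and they
determine `χ`. -/
theorem signCondition_apply (hq : 3 ≤ q) (hq' : q < 38) : SignCondition q fun a => χ a := by
  obtain ⟨hcoprime, hcond⟩ := signCondition_signOf q (by rw [List.mem_range'_1]; omega)
  have hmem := mem_signLists (l := (unitGenerators q).map fun g : ℕ => χ g) fun e he => by
    obtain ⟨g, hg, rfl⟩ := List.mem_map.1 he
    exact apply_natCast_eq_one_or_neg_one χ (hcoprime g hg)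
  rw [List.length_map] at hmem
  obtain ⟨hne, hsign⟩ := hcond _ hmem
  exact hsign.congr (by omega) fun a ha => signOf_eq_apply χ (hne a (List.mem_range.2 ha))

end SignCondition

section SpecialValues

open Real Complex Set

variable {q : ℕ}

theorem exists_ringHomComp_intCast_eq {χ : DirichletCharacter ℂ q} (hquad : χ.IsQuadratic) :
    ∃ ψ : DirichletCharacter ℤ q, ψ.ringHomComp (Int.castRingHom ℂ) = χ := by
  have hex : ∀ a, ∃ z : ℤ, (z : ℂ) = χ a := fun a => by
    rcases hquad a with h | h | h
    · exact ⟨0, by rw [h, Int.cast_zero]⟩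
    · exact ⟨1, by rw [h, Int.cast_one]⟩
    · exact ⟨-1, by rw [h, Int.cast_neg, Int.cast_one]⟩
  choose c hc using hex
  have hinj : Function.Injective ((↑) : ℤ → ℂ) := Int.cast_injective
  refine ⟨{ toFun := c
            map_one' := hinj ?_
            map_mul' := fun a b => hinj ?_
            map_nonunit' := fun a ha => hinj ?_ }, MulChar.ext' hc⟩
  · rw [hc, map_one, Int.cast_one]
  · rw [Int.cast_mul, hc, hc, hc, map_mul]
  · rw [hc, χ.map_nonunit ha, Int.cast_zero]

variable [NeZero q] {χ : DirichletCharacter ℂ q}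

theorem exists_apply_ne_one_of_isPrimitive (hprim : χ.IsPrimitive) {d : ℕ} (hd : d < q)
    (hdq : d ∣ q) : ∃ a < q, a.gcd q = 1 ∧ a % d = 1 % d ∧ χ a ≠ 1 := by
  by_contra! h
  have hfactors : χ.FactorsThrough d := by
    rw [DirichletCharacter.factorsThrough_iff_ker_unitsMap hdq]
    intro u hu
    rw [MonoidHom.mem_ker] at hu ⊢
    have hmod : (u : ZMod q).val % d = 1 % d := by
      change _ ≡ _ [MOD d]
      rw [← ZMod.natCast_eq_natCast_iff, ZMod.natCast_val, ← ZMod.unitsMap_val hdq, hu,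
        Units.val_one, Nat.cast_one]
    have hone := h _ (ZMod.val_lt _) (ZMod.val_coe_unit_coprime u) hmod
    rw [ZMod.natCast_zmod_val] at hone
    exact Units.ext hone
  have : χ.conductor ≤ d := Nat.sInf_le hfactors
  rw [hprim] at this
  omega

theorem LFunction_neg_natCast_eq_sum_bernoulli {k : ℕ} (hk : k ≠ 0) :
    χ.LFunction (-k) = -((q : ℂ) ^ k / (k + 1)) * ∑ a ∈ Finset.range q,
      χ a * ((Polynomial.bernoulli (k + 1)).map (algebraMap ℚ ℂ)).eval ((a / q : ℝ) : ℂ) := by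
  rw [DirichletCharacter.LFunction, ZMod.LFunction, neg_neg, cpow_natCast,
    ← Fin.sum_univ_eq_sum_range
      (fun a => χ a * ((Polynomial.bernoulli (k + 1)).map (algebraMap ℚ ℂ)).eval ((a / q : ℝ) : ℂ)),
    ← Fintype.sum_bijective _ (bijective_fin_natCast q) (fun a : Fin q => χ (a : ℕ) *
      HurwitzZeta.hurwitzZeta (ZMod.toAddCircle ((a : ℕ) : ZMod q)) (-k)) _ fun _ => rfl,
    Finset.mul_sum, Finset.mul_sum]
  refine Finset.sum_congr rfl fun a _ => ?_
  have hmem : ((a : ℕ) / q : ℝ) ∈ Icc 0 1 :=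
    ⟨by positivity, div_le_one_of_le₀ (by exact_mod_cast a.2.le) (Nat.cast_nonneg q)⟩
  rw [ZMod.toAddCircle_natCast, HurwitzZeta.hurwitzZeta_neg_nat hk hmem]
  ring

theorem complexGamma_neg_half : Complex.Gamma (-1 / 2) = ((-2 * √π : ℝ) : ℂ) := by
  have h := Complex.Gamma_add_one (-1 / 2) (by norm_num)
  rw [show (-1 / 2 + 1 : ℂ) = ((1 / 2 : ℝ) : ℂ) by push_cast; norm_num, Complex.Gamma_ofReal,
    Real.Gamma_one_half_eq] at h
  push_cast
  linear_combination 2 * h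

theorem eval_map_bernoulli (n : ℕ) (x : ℂ) :
    ((Polynomial.bernoulli n).map (algebraMap ℚ ℂ)).eval x =
      ∑ i ∈ Finset.range (n + 1), ((bernoulli (n - i) * n.choose i : ℚ) : ℂ) * x ^ i := by
  simp [Polynomial.bernoulli_def, Polynomial.map_sum, Polynomial.eval_finsetSum]

theorem eval_map_bernoulli_two (x : ℂ) :
    ((Polynomial.bernoulli 2).map (algebraMap ℚ ℂ)).eval x = x ^ 2 - x + 1 / 6 := by
  rw [eval_map_bernoulli, Finset.sum_range_succ, Finset.sum_range_succ, Finset.sum_range_one,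
    Nat.sub_zero, Nat.sub_self, show 2 - 1 = 1 from rfl, bernoulli_zero, bernoulli_one,
    bernoulli_two, Nat.choose_zero_right, Nat.choose_one_right, Nat.choose_self]
  push_cast
  ring

theorem eval_map_bernoulli_three (x : ℂ) :
    ((Polynomial.bernoulli 3).map (algebraMap ℚ ℂ)).eval x = x ^ 3 - 3 / 2 * x ^ 2 + 1 / 2 * x := by
  have h3 : bernoulli 3 = 0 := bernoulli_eq_zero_of_odd (by decide) (by norm_num)
  rw [eval_map_bernoulli, Finset.sum_range_succ, Finset.sum_range_succ, Finset.sum_range_succ,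
    Finset.sum_range_one, Nat.sub_zero, Nat.sub_self, show 3 - 1 = 2 from rfl,
    show 3 - 2 = 1 from rfl, h3, bernoulli_zero, bernoulli_one, bernoulli_two,
    Nat.choose_one_right, Nat.choose_self, show Nat.choose 3 2 = 3 from rfl]
  push_cast
  ring

theorem sum_mul_bernoulli_two (c : ℕ → ℤ) :
    ∑ a ∈ Finset.range q,
      (c a : ℂ) * ((Polynomial.bernoulli 2).map (algebraMap ℚ ℂ)).eval ((a / q : ℝ) : ℂ) =
      ((weightedSum q c (fun a => 6 * a ^ 2 - 6 * a * q + q ^ 2) / (6 * q ^ 2) : ℝ) : ℂ) := by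
  have : (q : ℂ) ≠ 0 := Nat.cast_ne_zero.2 (NeZero.ne q)
  rw [show weightedSum q c _ = ∑ a ∈ Finset.range q, c a * _ from rfl]
  push_cast
  rw [Finset.sum_div]
  refine Finset.sum_congr rfl fun a _ => ?_
  rw [eval_map_bernoulli_two]
  field_simp

theorem sum_mul_bernoulli_three (c : ℕ → ℤ) :
    ∑ a ∈ Finset.range q,
      (c a : ℂ) * ((Polynomial.bernoulli 3).map (algebraMap ℚ ℂ)).eval ((a / q : ℝ) : ℂ) =
      ((weightedSum q c (fun a => 2 * a ^ 3 - 3 * a ^ 2 * q + a * q ^ 2) / (2 * q ^ 3) :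
        ℝ) : ℂ) := by
  have : (q : ℂ) ≠ 0 := Nat.cast_ne_zero.2 (NeZero.ne q)
  rw [show weightedSum q c _ = ∑ a ∈ Finset.range q, c a * _ from rfl]
  push_cast
  rw [Finset.sum_div]
  refine Finset.sum_congr rfl fun a _ => ?_
  rw [eval_map_bernoulli_three]
  field_simp

theorem exists_pos_sum_bernoulli_eq (hquad : χ.IsQuadratic) (hprim : χ.IsPrimitive) (hq : 3 ≤ q)
    (hq' : q < 38) {κ : ℕ} (hκ : κ = 0 ∨ κ = 1) (hpar : χ (-1) = (-1) ^ κ) :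
    ∃ S : ℝ, 0 < S ∧ ∑ a ∈ Finset.range q,
      χ a * ((Polynomial.bernoulli (κ + 2)).map (algebraMap ℚ ℂ)).eval ((a / q : ℝ) : ℂ) = S := by
  obtain ⟨ψ, rfl⟩ := exists_ringHomComp_intCast_eq hquad
  have hq0 : (0 : ℝ) < q := Nat.cast_pos.2 (NeZero.pos q)
  have hψ : ∀ a : ZMod q, ψ.ringHomComp (Int.castRingHom ℂ) a = (ψ a : ℂ) := fun _ => rfl
  have hlast : ψ ((q - 1 : ℕ) : ZMod q) = (-1) ^ κ := by
    rw [hψ] at hpar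
    rw [Nat.cast_sub (by omega), ZMod.natCast_self, Nat.cast_one, zero_sub]
    exact_mod_cast hpar
  simp only [hψ]
  rcases signCondition_apply ψ hq hq' with ⟨d, hd, hdq, h⟩ | ⟨hsign, h⟩ | ⟨hsign, h⟩
  · obtain ⟨a, ha, hgcd, hmod, hne⟩ :=
      exists_apply_ne_one_of_isPrimitive hprim (List.mem_range.1 hd) hdq
    refine absurd ?_ hne
    rw [hψ, Int.cast_eq_one]
    exact h a (List.mem_range.2 ha) hgcd hmod
  · obtain rfl : κ = 0 := hκ.resolve_right fun h1 => by simp [h1, hsign] at hlast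
    exact ⟨_, div_pos (Int.cast_pos.2 h) (by positivity), sum_mul_bernoulli_two _⟩
  · obtain rfl : κ = 1 := hκ.resolve_left fun h0 => by simp [h0, hsign] at hlast
    exact ⟨_, div_pos (Int.cast_pos.2 h) (by positivity), sum_mul_bernoulli_three _⟩

theorem exists_pos_tsum_pnat_mul_cpow_eq {f : ℕ → ℝ} (hf1 : f 1 = 1) (hf : ∀ n, |f n| ≤ 1) {k : ℕ}
    (hk : 2 ≤ k) : ∃ r : ℝ, 0 < r ∧ ∑' n : ℕ+, (f n : ℂ) * (n : ℂ) ^ (-(k : ℂ)) = r := by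
  refine ⟨∑' n : ℕ+, f n * ((n : ℝ) ^ k)⁻¹, ?_, ?_⟩
  · have hle : ∀ n : ℕ+, ((n : ℝ) ^ k)⁻¹ ≤ 1 / (n : ℝ) ^ 2 := fun n => by
      have : (1 : ℝ) ≤ n := by exact_mod_cast n.pos
      rw [one_div]
      gcongr
    have habs : ∀ n : ℕ+, |f n * ((n : ℝ) ^ k)⁻¹| ≤ 1 / (n : ℝ) ^ 2 := fun n => by
      rw [abs_mul, abs_of_nonneg (a := ((n : ℝ) ^ k)⁻¹) (by positivity)]
      exact (mul_le_of_le_one_left (by positivity) (hf n)).trans (hle n)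
    have hsum := (Summable.of_norm_bounded hasSum_pnat_inv_sq.summable habs).hasSum.add
      hasSum_pnat_inv_sq
    have hone := hsum.summable.le_tsum (1 : ℕ+) fun n _ => by linarith [neg_le_of_abs_le (habs n)]
    rw [hsum.tsum_eq, PNat.one_coe, hf1, Nat.cast_one, one_pow, one_pow] at hone
    nlinarith [pi_lt_d2, pi_pos]
  · rw [ofReal_tsum]
    refine tsum_congr fun n => ?_
    rw [cpow_neg, cpow_natCast]
    push_cast
    rfl

end SpecialValues

/-! ### Primitive characters -/

section PrimitiveCharacter

open Real Complex MeasureTheory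

variable {q : ℕ} [NeZero q] {χ : DirichletCharacter ℂ q} {κ : ℕ} {W : ℝ}

theorem TwistedTheta.integral_mul_exp_neg {g : ℝ → ℝ} (h : TwistedTheta g W) (σ : ℝ) :
    ∫ p, g p * rexp (-σ * p) = W * ∫ p, g p * rexp ((σ + 1 / 2) * p) := by
  rw [← integral_const_mul, ← integral_neg_eq_self]
  refine integral_congr_ae (.of_forall fun p => ?_)
  simp only
  rw [h.symm, show (σ + 1 / 2) * p = p / 2 + -σ * -p by ring, Real.exp_add]
  ring

theorem ofReal_integral_mul_exp (g : ℝ → ℝ) (σ : ℝ) :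
    ((∫ p, g p * rexp (σ / 2 * p) : ℝ) : ℂ) = ∫ p : ℝ, (g p : ℂ) * cexp (σ / 2 * p) := by
  rw [← integral_complex_ofReal]
  push_cast
  rfl

theorem integral_twistedThetaSeries_mul_exp_pos (hquad : χ.IsQuadratic) :
    0 < ∫ p, twistedThetaSeries (realCoeff χ) κ √q p * rexp (((κ + 2 : ℕ) : ℝ) / 2 * p) := by
  have hq0 : (0 : ℝ) < q := Nat.cast_pos.2 (NeZero.pos q)
  have hf := isSignCharacter_realCoeff hquad
  obtain ⟨r, hr, hrs⟩ := exists_pos_tsum_pnat_mul_cpow_eq hf.map_one hf.abs_le_one (k := κ + 2)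
    (by omega)
  have hre : 1 < (((κ + 2 : ℕ) : ℂ)).re := by
    rw [natCast_re]
    exact_mod_cast (by omega : 1 < κ + 2)
  have hmellin := integral_twistedThetaSeries_mul_cexp (κ := κ) (Real.sqrt_pos.2 hq0)
    hf.abs_le_one hre
  have hint := ofReal_integral_mul_exp (twistedThetaSeries (realCoeff χ) κ √q) ((κ + 2 : ℕ) : ℝ)
  rw [ofReal_natCast, hmellin, hrs,
    show (((κ + 2 : ℕ) : ℂ) + κ) / 2 = ((κ + 1 : ℕ) : ℂ) by push_cast; ring, cpow_natCast,
    Nat.cast_succ κ, Complex.Gamma_nat_eq_factorial, Real.sq_sqrt hq0.le] at hint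
  have hval : ∫ p, twistedThetaSeries (realCoeff χ) κ √q p * rexp (((κ + 2 : ℕ) : ℝ) / 2 * p) =
      (q / π) ^ (κ + 1) * κ.factorial * r := by
    exact_mod_cast hint
  rw [hval]
  positivity

theorem TwistedTheta.integral_mul_exp_neg_pos (hquad : χ.IsQuadratic) (hprim : χ.IsPrimitive)
    (hχ : χ ≠ 1) (hq : 3 ≤ q) (hq' : q < 38) (hκ : κ = 0 ∨ κ = 1) (hpar : χ (-1) = (-1) ^ κ)
    (h : TwistedTheta (twistedThetaSeries (realCoeff χ) κ √q) W) :
    0 < ∫ p, twistedThetaSeries (realCoeff χ) κ √q p * rexp (-((κ + 1 : ℕ) : ℝ) / 2 * p) := by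
  have : (0 : ℝ) < q := Nat.cast_pos.2 (NeZero.pos q)
  obtain ⟨S, hS, hSs⟩ := exists_pos_sum_bernoulli_eq hquad hprim hq hq' hκ hpar
  have hL := LFunction_eq_integral hquad hχ h (-((κ + 1 : ℕ) : ℂ))
  have hint := ofReal_integral_mul_exp (twistedThetaSeries (realCoeff χ) κ √q) (-((κ + 1 : ℕ) : ℝ))
  rw [ofReal_neg, ofReal_natCast] at hint
  rw [LFunction_neg_natCast_eq_sum_bernoulli (by omega), hSs, ← hint,
    show (-((κ + 1 : ℕ) : ℂ) + κ) / 2 = -1 / 2 by push_cast; ring, complexGamma_neg_half,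
    show (-(-1 / 2) : ℂ) = ((1 / 2 : ℝ) : ℂ) by push_cast; ring,
    ← ofReal_cpow (by positivity)] at hL
  generalize ∫ p, _ * rexp (-((κ + 1 : ℕ) : ℝ) / 2 * p) = M at hL ⊢
  have hval : M * ((q / π) ^ (1 / 2 : ℝ) * (2 * √π)⁻¹) =
      (q : ℝ) ^ (κ + 1) / ((κ + 1 : ℕ) + 1) * S := by
    generalize ((q / π : ℝ) ^ (1 / 2 : ℝ)) = P at hL ⊢
    rw [← ofReal_inj]
    push_cast at hL ⊢
    rw [neg_mul, inv_neg] at hL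
    linear_combination -hL
  refine pos_of_mul_pos_left (b := (q / π) ^ (1 / 2 : ℝ) * (2 * √π)⁻¹) ?_ (by positivity)
  rw [hval]
  positivity

theorem TwistedTheta.sign_eq_one (hquad : χ.IsQuadratic) (hprim : χ.IsPrimitive) (hχ : χ ≠ 1)
    (hq : 3 ≤ q) (hq' : q < 38) (hκ : κ = 0 ∨ κ = 1) (hpar : χ (-1) = (-1) ^ κ)
    (h : TwistedTheta (twistedThetaSeries (realCoeff χ) κ √q) W) : W = 1 := by
  have hneg := h.integral_mul_exp_neg_pos hquad hprim hχ hq hq' hκ hpar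
  rw [neg_div, h.integral_mul_exp_neg,
    show ((κ + 1 : ℕ) : ℝ) / 2 + 1 / 2 = ((κ + 2 : ℕ) : ℝ) / 2 by push_cast; ring] at hneg
  have hW := pos_of_mul_pos_left hneg (integral_twistedThetaSeries_mul_exp_pos hquad).le
  exact h.sign.resolve_right (by linarith)

theorem le_of_isPrimitive_of_LFunction_eq_zero (hquad : χ.IsQuadratic) (hprim : χ.IsPrimitive)
    (hχ : χ ≠ 1) (hq : 3 ≤ q) {β : ℝ} (hβ0 : 0 < β) (hβ1 : β < 1)
    (hzero : χ.LFunction (β : ℂ) = 0) : β ≤ 1 - 40 / (√q * Real.log q ^ 2) := by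
  have : (0 : ℝ) < q := Nat.cast_pos.2 (NeZero.pos q)
  obtain ⟨κ, hκ, hpar⟩ : ∃ κ : ℕ, (κ = 0 ∨ κ = 1) ∧ χ (-1) = (-1) ^ κ := by
    rcases χ.even_or_odd with h | h
    · exact ⟨0, .inl rfl, by rw [pow_zero, h]⟩
    · exact ⟨1, .inr rfl, by rw [pow_one, h]⟩
  obtain ⟨W, hW⟩ := exists_twistedTheta hquad hprim (by omega) hκ hpar
  refine hW.le_of_integral_eq_zero (isSignCharacter_realCoeff hquad) hκ
    (by exact_mod_cast (by omega : 1 < q))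
    (fun hlt => hW.sign_eq_one hquad hprim hχ hq (by exact_mod_cast hlt) hκ hpar) hβ0 hβ1 ?_
  have hL := LFunction_eq_integral hquad hχ hW β
  have hGamma : Complex.Gamma ((β + κ) / 2) ≠ 0 :=
    Complex.Gamma_ne_zero_of_re_pos (by
      rw [div_ofNat_re, add_re, ofReal_re, natCast_re]
      positivity)
  rw [hzero, ← ofReal_integral_mul_exp, mul_eq_zero, or_iff_left
    (mul_ne_zero (ofReal_cpow_ne_zero (by positivity) _) (inv_ne_zero hGamma))] at hL
  exact_mod_cast hL

end PrimitiveCharacter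

section Reduction

open Complex DirichletCharacter

variable {q : ℕ} {χ : DirichletCharacter ℂ q}

theorem three_le_of_ne_one [NeZero q] (hχ : χ ≠ 1) : 3 ≤ q := by
  by_contra! h
  refine hχ (MulChar.ext fun a => ?_)
  have hsub : Subsingleton (ZMod q)ˣ := by
    have := NeZero.pos q
    interval_cases q <;> exact ⟨by decide⟩
  rw [Subsingleton.elim a 1, Units.val_one, map_one, map_one]

theorem isQuadratic_primitiveCharacter [NeZero q] (hquad : χ.IsQuadratic) :
    χ.primitiveCharacter.IsQuadratic := by
  rw [MulChar.isQuadratic_iff_sq_eq_one] at hquad ⊢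
  apply changeLevel_injective χ.conductor_dvd_level
  rw [map_pow, changeLevel_primitiveCharacter, hquad, map_one]

theorem primitiveCharacter_ne_one (hχ : χ ≠ 1) : χ.primitiveCharacter ≠ 1 := by
  intro h
  rw [← changeLevel_primitiveCharacter χ, h, map_one] at hχ
  exact hχ rfl

theorem LFunction_primitiveCharacter_eq_zero [NeZero q] [NeZero χ.conductor] (hχ : χ ≠ 1) {s : ℂ}
    (hs : 0 < s.re) (hzero : χ.LFunction s = 0) : χ.primitiveCharacter.LFunction s = 0 := by
  rw [← changeLevel_primitiveCharacter χ, LFunction_changeLevel χ.conductor_dvd_level _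
    (.inl (primitiveCharacter_ne_one hχ)), mul_eq_zero] at hzero
  refine hzero.resolve_right (Finset.prod_ne_zero_iff.2 fun p hp heuler => ?_)
  have hprime := Nat.prime_of_mem_primeFactors hp
  have hpow : (p : ℝ) ^ (-s).re < 1 :=
    Real.rpow_lt_one_of_one_lt_of_neg (by exact_mod_cast hprime.one_lt)
      (by rwa [neg_re, neg_lt_zero])
  have hlt : ‖χ.primitiveCharacter p * (p : ℂ) ^ (-s)‖ < 1 := by
    rw [norm_mul, norm_natCast_cpow_of_pos hprime.pos]
    exact (mul_le_of_le_one_left (by positivity) (norm_le_one _ _)).trans_lt hpow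
  rw [← sub_eq_zero.1 heuler, norm_one] at hlt
  exact lt_irrefl _ hlt

end Reduction

/-- **Proposition 1.11.** If `χ` is a nontrivial quadratic Dirichlet character modulo `q ≥ 3`
and `β > 0` is a real zero of `L(s,χ)`, then `β ≤ 1 − 40/(√q·(log q)²)`. -/
theorem exceptional_zero_bound (q : ℕ) [NeZero q] (hq : 3 ≤ q)
    (χ : DirichletCharacter ℂ q) (hχ : χ ≠ 1) (hquad : χ.IsQuadratic)
    (β : ℝ) (hβ : 0 < β) (hzero : χ.LFunction (β : ℂ) = 0) :
    β ≤ 1 - 40 / (Real.sqrt q * Real.log q ^ 2) := by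
  have : NeZero χ.conductor := ⟨χ.conductor_ne_zero⟩
  have hχ' := primitiveCharacter_ne_one hχ
  have h3 := three_le_of_ne_one hχ'
  have hβ1 : β < 1 := by
    by_contra! h
    exact χ.LFunction_ne_zero_of_one_le_re (.inl hχ) (by rwa [Complex.ofReal_re]) hzero
  have hdq : (χ.conductor : ℝ) ≤ q :=
    Nat.cast_le.2 (Nat.le_of_dvd (NeZero.pos q) χ.conductor_dvd_level)
  have hlog : 0 < Real.log χ.conductor := Real.log_pos (by exact_mod_cast (by omega))
  calc
    β ≤ 1 - 40 / (Real.sqrt χ.conductor * Real.log χ.conductor ^ 2) :=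
      le_of_isPrimitive_of_LFunction_eq_zero (isQuadratic_primitiveCharacter hquad)
        χ.primitiveCharacter_isPrimitive hχ' h3 hβ hβ1
        (LFunction_primitiveCharacter_eq_zero hχ (by rwa [Complex.ofReal_re]) hzero)
    _ ≤ 1 - 40 / (Real.sqrt q * Real.log q ^ 2) := by gcongr
end
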